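/- arXiv:2304.09726 — 2 statements merged into one kernel-verified Lean document; each statement's English description precedes it below -/
import Mathlib

section
/- Let β > 0 and α ∈ (0,1). Let G : ℝ → ℝ be 2π-periodic, four times continuously differentiable with α-Hölder continuous fourth derivative. Then, under CβE_n, the random variable ∑_{μ=1}^n G(θ_μ) − (n/(2π)) ∫₀^{2π} G(θ) dθ converges in distribution, as n → ∞, to a centered Gaussian random variable with variance σ² = (1/β) ∑_{k≥1} k (a_k² + b_k²), where a_k and b_k are the Fourier coefficients of G. (This is the central limit theorem corollary of the paper in the case of the unit circle, where the limiting mean vanishes.) -/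
/-!
The proof rests on the loop (Schwinger-Dyson) equations of the ensemble, written for the power sums
`p_k(θ) = ∑_μ e^{ikθ_μ}`. Integrating the divergence of the vector field `e^{ikθ_i} Φ` against the
weight gives, for every periodic `C¹` function `Φ` and `k ≥ 0`,

`E[∑_i e^{ikθ_i} ∂_i Φ + i (k p_k + (β/2)(∑_{l<k} p_l p_{k-l} - k p_k)) Φ] = 0`   (`loop_eq`).

For small `β` the weight is not `C¹` at coincident points, so the identity is first proved for the
smooth weights `∏ (|e^{iθ_μ} - e^{iθ_ν}|² + ε)^{β/2}` (`loop_reg`), and `ε → 0` by dominated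
convergence (`loop_unnormalized`).

*Uniform second moments.* Let `L` be the generator for which the ensemble is reversible. By the loop
equation, `-L` acts on the span of products `p_{λ₁} ⋯ p_{λ_m}` with `∑ λ_i = k` as `β n k / 2` plus an
operator `R` whose norm in the `ℓ¹` norm of coefficients is at most `(1 + β) k²` (`Sp.gen`). Since `R`
is symmetric in `L²`, the sequence `‖R^m p_k‖²` is log-convex; it grows at most like
`((1 + β) k²)^{2m}`, hence its first ratio obeys the same bound (`logconvex_ratio`). Together with
`E[Γ(p_k, conj p_k)] = k² n` this gives `(β n k / 2 - (1 + β) k²) E|p_k|² ≤ k² n` (`coercive`), and so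
`E|p_k|² ≤ (C k)²` with `C` depending only on `β` (`second_moment`).

*Characteristic function.* Let `S = ∑_μ G(θ_μ)` with `G = ∑ c_k e^{ikx}` of mean zero, and
`φ_n(t) = E[e^{itS}]`. In the loop equation with `Φ = e^{itS}` the terms of order `n` are
`(β/2) n p_k` and the frequency `-k` of `G'`; the moment bounds control the rest, so
`E[p_k e^{itS}] = (2 i |k| t c_{-k} / β) φ_n(t) + O(1/n)` (`mom_bound`). Multiplying by `i c_k` and
summing over `k` gives `φ_n' + σ² t φ_n → 0` with `σ² = (2/β) ∑ |k| |c_k|²` (`ode_tendsto`), hence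
`φ_n(t) → e^{-σ² t² / 2}` (`phi_tendsto`), and Lévy's continuity theorem applies (`clt_center`).

For `G` of class `C⁴` the Fourier coefficients decay like `k⁻⁴` (`cf_decay`), more than enough for
the summations above, and `|c_k|² = (a_k² + b_k²)/4` identifies the variance (`vari_eq`).
-/

open MeasureTheory Finset Filter Topology

/-- The cube `[0, 2π]^n`. -/
noncomputable def cbeCube (n : ℕ) : Set (Fin n → ℝ) :=
  Set.univ.pi fun _ => Set.Icc 0 (2 * Real.pi)

/-- The (unnormalized) density `∏_{μ<ν} |e^{iθ_μ} - e^{iθ_ν}|^β` of the circular β-ensemble. -/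
noncomputable def cbeWeight (β : ℝ) (n : ℕ) (θ : Fin n → ℝ) : ℝ :=
  ∏ p ∈ Finset.univ.filter (fun p : Fin n × Fin n => p.1 < p.2),
    ‖Complex.exp (Complex.I * (θ p.1 : ℂ)) - Complex.exp (Complex.I * (θ p.2 : ℂ))‖ ^ β

/-- Expectation `E_n^β[f]` with respect to the circular β-ensemble. -/
noncomputable def cbeExp (β : ℝ) (n : ℕ) (f : (Fin n → ℝ) → ℝ) : ℝ :=
  (∫ θ in cbeCube n, f θ * cbeWeight β n θ) / ∫ θ in cbeCube n, cbeWeight β n θ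

/-! ### Characters, power sums and test functions -/

namespace CBE

/-- The character `x ↦ e^{ikx}` of the circle, as a function on `ℝ`. -/
noncomputable def chr (k : ℤ) (x : ℝ) : ℂ := Complex.exp (((k : ℝ) * x : ℝ) * Complex.I)

lemma chr_add (j k : ℤ) (x : ℝ) : chr (j + k) x = chr j x * chr k x := by
  simp only [chr, ← Complex.exp_add]; push_cast; ring_nf

@[simp] lemma chr_zero (x : ℝ) : chr 0 x = 1 := by simp [chr]

@[simp] lemma norm_chr (k : ℤ) (x : ℝ) : ‖chr k x‖ = 1 := Complex.norm_exp_ofReal_mul_I _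

lemma conj_chr (k : ℤ) (x : ℝ) : (starRingEnd ℂ) (chr k x) = chr (-k) x := by
  simp only [chr, ← Complex.exp_conj, map_mul, Complex.conj_ofReal, Complex.conj_I]
  push_cast; ring_nf

lemma chr_natCast (k : ℕ) (x : ℝ) : chr (k : ℤ) x = chr 1 x ^ k := by
  simp only [chr, ← Complex.exp_nat_mul]; push_cast; ring_nf

lemma chr_periodic (k : ℤ) (x : ℝ) : chr k (x + 2 * Real.pi) = chr k x := by
  have : (((k : ℝ) * (x + 2 * Real.pi) : ℝ) : ℂ) * Complex.I
      = (((k : ℝ) * x : ℝ) : ℂ) * Complex.I + k * (2 * Real.pi * Complex.I) := by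
    push_cast; ring
  rw [chr, this, Complex.exp_add, Complex.exp_int_mul_two_pi_mul_I, mul_one, chr]

lemma hasDerivAt_chr (k : ℤ) (x : ℝ) :
    HasDerivAt (chr k) (k * Complex.I * chr k x) x := by
  have h1 : HasDerivAt (fun x : ℝ => (((k : ℝ) * x : ℝ) : ℂ) * Complex.I) (k * Complex.I) x := by
    have := (((hasDerivAt_id x).const_mul (k : ℝ)).ofReal_comp).mul_const Complex.I
    simpa using this
  have := h1.cexp
  rw [mul_comm] at this
  exact this

lemma contDiff_chr (k : ℤ) : ContDiff ℝ 1 (chr k) := by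
  unfold chr
  have : ContDiff ℝ 1 (fun x : ℝ => ((k : ℝ) * x : ℝ)) := by fun_prop
  exact ((Complex.ofRealCLM.contDiff.comp this).mul contDiff_const).cexp

lemma continuous_chr (k : ℤ) : Continuous (chr k) := (contDiff_chr k).continuous

/-- The power sum `p_k(θ) = ∑_μ e^{ikθ_μ}`. -/
noncomputable def pw {n : ℕ} (k : ℤ) (θ : Fin n → ℝ) : ℂ := ∑ μ, chr k (θ μ)

lemma norm_pw_le {n : ℕ} (k : ℤ) (θ : Fin n → ℝ) : ‖pw k θ‖ ≤ n := by
  refine (norm_sum_le _ _).trans ?_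
  simp

lemma conj_pw {n : ℕ} (k : ℤ) (θ : Fin n → ℝ) : (starRingEnd ℂ) (pw k θ) = pw (-k) θ := by
  simp [pw, conj_chr]

@[simp] lemma pw_zero {n : ℕ} (θ : Fin n → ℝ) : pw 0 θ = n := by simp [pw]

/-- Test functions: `C¹` functions on `ℝⁿ` that are `2π`-periodic in every coordinate. -/
structure Test {n : ℕ} (Φ : (Fin n → ℝ) → ℂ) : Prop where
  smooth : ContDiff ℝ 1 Φ
  per : ∀ θ i, Φ (θ + Pi.single i (2 * Real.pi)) = Φ θ

/-- The partial derivative `∂_i Φ`. -/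
noncomputable def pd {n : ℕ} (i : Fin n) (Φ : (Fin n → ℝ) → ℂ) (θ : Fin n → ℝ) : ℂ :=
  fderiv ℝ Φ θ (Pi.single i 1)

section test
variable {n : ℕ} {Φ Ψ : (Fin n → ℝ) → ℂ}

lemma Test.diff (h : Test Φ) (θ : Fin n → ℝ) : DifferentiableAt ℝ Φ θ :=
  (h.smooth.differentiable one_ne_zero) θ

lemma Test.cont (h : Test Φ) : Continuous Φ := h.smooth.continuous

lemma Test.cont_pd (h : Test Φ) (i : Fin n) : Continuous (pd i Φ) :=
  (h.smooth.continuous_fderiv one_ne_zero).clm_apply continuous_const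

lemma Test.const (c : ℂ) : Test (fun _ : Fin n → ℝ => c) := ⟨contDiff_const, fun _ _ => rfl⟩

lemma Test.mul (h : Test Φ) (h' : Test Ψ) : Test (fun θ => Φ θ * Ψ θ) :=
  ⟨h.smooth.mul h'.smooth, fun θ i => by rw [h.per, h'.per]⟩

lemma Test.add (h : Test Φ) (h' : Test Ψ) : Test (fun θ => Φ θ + Ψ θ) :=
  ⟨h.smooth.add h'.smooth, fun θ i => by rw [h.per, h'.per]⟩

lemma Test.conj (h : Test Φ) : Test (fun θ => (starRingEnd ℂ) (Φ θ)) :=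
  ⟨Complex.conjCLE.contDiff.comp h.smooth, fun θ i => by rw [h.per]⟩

lemma Test.sum {ι : Type*} (s : Finset ι) {F : ι → (Fin n → ℝ) → ℂ} (h : ∀ i ∈ s, Test (F i)) :
    Test (fun θ => ∑ i ∈ s, F i θ) :=
  ⟨ContDiff.sum fun i hi => (h i hi).smooth,
    fun θ j => Finset.sum_congr rfl fun i hi => (h i hi).per θ j⟩

/-- A periodic `C¹` function of a single coordinate is a test function. -/
lemma Test.coord {g : ℝ → ℂ} (hg : ContDiff ℝ 1 g) (hper : ∀ x, g (x + 2 * Real.pi) = g x)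
    (μ : Fin n) : Test (fun θ : Fin n → ℝ => g (θ μ)) := by
  refine ⟨hg.comp (contDiff_apply ℝ ℝ μ), fun θ i => ?_⟩
  by_cases h : μ = i
  · subst h; simp [hper]
  · simp [Pi.single_eq_of_ne h]

lemma Test.pw (k : ℤ) : Test (pw (n := n) k) :=
  Test.sum _ fun μ _ => Test.coord (contDiff_chr k) (chr_periodic k) μ

lemma pd_mul (h : Test Φ) (h' : Test Ψ) (i : Fin n) (θ : Fin n → ℝ) :
    pd i (fun θ => Φ θ * Ψ θ) θ = Φ θ * pd i Ψ θ + pd i Φ θ * Ψ θ := by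
  have := fderiv_mul (h.diff θ) (h'.diff θ)
  simp only [pd]
  have e : (fun θ => Φ θ * Ψ θ) = Φ * Ψ := rfl
  rw [e, this]
  simp [mul_comm]

lemma pd_add (h : Test Φ) (h' : Test Ψ) (i : Fin n) (θ : Fin n → ℝ) :
    pd i (fun θ => Φ θ + Ψ θ) θ = pd i Φ θ + pd i Ψ θ := by
  simp only [pd]
  have e : (fun θ => Φ θ + Ψ θ) = Φ + Ψ := rfl
  rw [e, fderiv_add (h.diff θ) (h'.diff θ)]
  simp

lemma pd_const (c : ℂ) (i : Fin n) (θ : Fin n → ℝ) : pd i (fun _ => c) θ = 0 := by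
  simp [pd]

lemma pd_conj (h : Test Φ) (i : Fin n) (θ : Fin n → ℝ) :
    pd i (fun θ => (starRingEnd ℂ) (Φ θ)) θ = (starRingEnd ℂ) (pd i Φ θ) := by
  have := (Complex.conjCLE.toContinuousLinearMap.hasFDerivAt.comp θ (h.diff θ).hasFDerivAt).fderiv
  simp only [pd]
  have e : (fun θ => (starRingEnd ℂ) (Φ θ))
    = (Complex.conjCLE.toContinuousLinearMap : ℂ → ℂ) ∘ Φ := rfl
  rw [e, this]
  simp

lemma pd_coord {g : ℝ → ℂ} {g' : ℂ} (μ i : Fin n) (θ : Fin n → ℝ)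
    (hg : HasDerivAt g g' (θ μ)) :
    pd i (fun θ : Fin n → ℝ => g (θ μ)) θ = if μ = i then g' else 0 := by
  have h1 : HasFDerivAt (fun θ : Fin n → ℝ => θ μ)
    (ContinuousLinearMap.proj (R := ℝ) (φ := fun _ : Fin n => ℝ) μ) θ :=
    (ContinuousLinearMap.proj (R := ℝ) (φ := fun _ : Fin n => ℝ) μ).hasFDerivAt
  have := (hg.hasFDerivAt.comp θ h1).fderiv
  have e : (fun θ : Fin n → ℝ => g (θ μ)) = g ∘ (fun θ : Fin n → ℝ => θ μ) := rfl
  rw [pd, e, this]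
  by_cases h : μ = i
  · subst h; simp
  · simp [Pi.single_eq_of_ne h, h]

lemma pd_sum {ι : Type*} (s : Finset ι) {F : ι → (Fin n → ℝ) → ℂ} (h : ∀ i ∈ s, Test (F i))
    (j : Fin n) (θ : Fin n → ℝ) :
    pd j (fun θ => ∑ i ∈ s, F i θ) θ = ∑ i ∈ s, pd j (F i) θ := by
  simp only [pd]
  rw [fderiv_fun_sum fun i hi => (h i hi).diff θ]
  simp

lemma pd_linstat {g g' : ℝ → ℂ} (hg1 : ContDiff ℝ 1 g)
    (hper : ∀ x, g (x + 2 * Real.pi) = g x) (hg : ∀ x, HasDerivAt g (g' x) x)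
    (i : Fin n) (θ : Fin n → ℝ) :
    pd i (fun θ : Fin n → ℝ => ∑ μ, g (θ μ)) θ = g' (θ i) := by
  rw [pd_sum _ (fun μ _ => Test.coord hg1 hper μ)]
  simp_rw [pd_coord _ i θ (hg _)]
  simp

lemma pd_pw (k : ℤ) (i : Fin n) (θ : Fin n → ℝ) :
    pd i (CBE.pw k) θ = k * Complex.I * chr k (θ i) :=
  pd_linstat (contDiff_chr k) (chr_periodic k) (hasDerivAt_chr k) i θ

end test

lemma cube_eq (n : ℕ) : cbeCube n = Set.Icc (fun _ => 0) (fun _ => 2 * Real.pi) := by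
  rw [cbeCube, Set.pi_univ_Icc]

lemma isCompact_cube (n : ℕ) : IsCompact (cbeCube n) := by
  rw [cube_eq]; exact isCompact_Icc

/-- The divergence of a periodic vector field integrates to zero over the cube. -/
lemma integral_div_eq_zero {n : ℕ} (F : Fin n → (Fin n → ℝ) → ℂ) (hF : ∀ i, Test (F i)) :
    ∫ θ in cbeCube n, ∑ i, pd i (F i) θ = 0 := by
  cases n with
  | zero => simp
  | succ n =>
    rw [cube_eq]
    have hle : (fun _ : Fin (n + 1) => (0 : ℝ)) ≤ fun _ => 2 * Real.pi :=
      fun _ => by positivity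
    have := integral_divergence_of_hasFDerivAt_off_countable' _ _ hle F
      (fun i θ => fderiv ℝ (F i) θ) ∅ Set.countable_empty
      (fun i => (hF i).cont.continuousOn) (fun x _ i => ((hF i).diff x).hasFDerivAt)
      ((continuous_finset_sum _ fun i _ => (hF i).cont_pd i).continuousOn.integrableOn_compact
        isCompact_Icc)
    refine this.trans (Finset.sum_eq_zero fun i _ => ?_)
    rw [sub_eq_zero]
    congr 1
    funext x
    have : (i.insertNth (2 * Real.pi) x : Fin (n + 1) → ℝ)
        = i.insertNth 0 x + Pi.single i (2 * Real.pi) := by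
      funext j
      refine Fin.succAboveCases i ?_ (fun j => ?_) j
      · simp
      · simp [Fin.succAbove_ne]
    rw [this, (hF i).per]

end CBE

/-! ### The regularized weight -/

namespace CBE

/-- `sq u = |e^{ix} - e^{iy}|²` for `u = x - y`. -/
noncomputable def sq (u : ℝ) : ℝ := 2 - 2 * Real.cos u

lemma sq_nonneg' (u : ℝ) : 0 ≤ sq u := by
  have := Real.cos_le_one u; unfold sq; linarith

lemma sq_le_four (u : ℝ) : sq u ≤ 4 := by
  have := Real.neg_one_le_cos u; unfold sq; linarith

lemma chr_one_eq (x : ℝ) : chr 1 x = Real.cos x + Real.sin x * Complex.I := by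
  simp [chr, Complex.exp_mul_I]

lemma norm_chr_one_sub (x y : ℝ) : ‖chr 1 x - chr 1 y‖ ^ 2 = sq (x - y) := by
  rw [← Complex.normSq_eq_norm_sq, chr_one_eq, chr_one_eq, Complex.normSq_apply]
  simp only [Complex.sub_re, Complex.add_re, Complex.ofReal_re, Complex.mul_re, Complex.I_re,
    Complex.ofReal_im, Complex.I_im, Complex.sub_im, Complex.add_im, Complex.mul_im]
  rw [sq, Real.cos_sub]
  have h1 := Real.sin_sq_add_cos_sq x
  have h2 := Real.sin_sq_add_cos_sq y
  linear_combination h1 + h2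

lemma norm_chr_sub_le (k : ℕ) (x y : ℝ) :
    ‖chr (k : ℤ) x - chr (k : ℤ) y‖ ≤ k * ‖chr 1 x - chr 1 y‖ := by
  rw [chr_natCast, chr_natCast, ← geom_sum₂_mul, norm_mul]
  gcongr
  refine (norm_sum_le _ _).trans ?_
  simp

lemma abs_two_sin_le (x y : ℝ) : |2 * Real.sin (x - y)| ≤ 2 * ‖chr 1 x - chr 1 y‖ := by
  refine abs_le_of_sq_le_sq ?_ (by positivity)
  rw [mul_pow, mul_pow, norm_chr_one_sub, sq]
  have h1 := Real.sin_sq_add_cos_sq (x - y)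
  nlinarith [_root_.sq_nonneg (1 - Real.cos (x - y))]

/-- The polynomial `(z^k - w^k)(z + w)/(z - w)` at `z = e^{ix}`, `w = e^{iy}`. -/
noncomputable def Q (k : ℕ) (x y : ℝ) : ℂ :=
  ∑ l ∈ range k, (chr 1 x + chr 1 y) * (chr 1 x ^ l * chr 1 y ^ (k - 1 - l))

lemma Q_symm (k : ℕ) (x y : ℝ) : Q k x y = Q k y x := by
  unfold Q
  rw [← Finset.sum_range_reflect]
  refine Finset.sum_congr rfl fun l hl => ?_
  rw [Finset.mem_range] at hl
  have : k - 1 - (k - 1 - l) = l := by omega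
  rw [this]; ring

lemma Q_diag (k : ℕ) (x : ℝ) : Q k x x = 2 * k * chr (k : ℤ) x := by
  unfold Q
  have : ∀ l ∈ range k, (chr 1 x + chr 1 x) * (chr 1 x ^ l * chr 1 x ^ (k - 1 - l))
      = 2 * chr (k : ℤ) x := by
    intro l hl
    rw [Finset.mem_range] at hl
    rw [← pow_add, chr_natCast, ← two_mul, mul_assoc, ← pow_succ']
    congr 2; omega
  rw [Finset.sum_congr rfl this]; simp; ring

lemma chr_one_split (x y : ℝ) :
    chr 1 x = (Real.cos (x - y) + Real.sin (x - y) * Complex.I) * chr 1 y := by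
  rw [← chr_one_eq]
  simp only [chr, ← Complex.exp_add]
  push_cast; ring_nf

lemma two_sin_eq (x y : ℝ) : ((2 * Real.sin (x - y) : ℝ) : ℂ) * (chr 1 x * chr 1 y)
    = - Complex.I * (chr 1 x ^ 2 - chr 1 y ^ 2) := by
  rw [chr_one_split x y]
  have h1 : ((Real.sin (x - y) : ℝ) : ℂ) ^ 2 + ((Real.cos (x - y) : ℝ) : ℂ) ^ 2 = 1 := by
    exact_mod_cast Real.sin_sq_add_cos_sq (x - y)
  have h3 : Complex.I ^ 2 = -1 := Complex.I_sq
  push_cast at h1 ⊢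
  linear_combination chr 1 y ^ 2 * (Complex.I * h1 + (Complex.I * Complex.sin (x - y) ^ 2 + 2 * Complex.sin (x - y) * Complex.cos (x - y)) * h3)

lemma sq_eq (x y : ℝ) : ((sq (x - y) : ℝ) : ℂ) * (chr 1 x * chr 1 y)
    = - (chr 1 x - chr 1 y) ^ 2 := by
  rw [chr_one_split x y, sq]
  have h1 : ((Real.sin (x - y) : ℝ) : ℂ) ^ 2 + ((Real.cos (x - y) : ℝ) : ℂ) ^ 2 = 1 := by
    exact_mod_cast Real.sin_sq_add_cos_sq (x - y)
  have h3 : Complex.I ^ 2 = -1 := Complex.I_sq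
  push_cast at h1 ⊢
  linear_combination chr 1 y ^ 2 * (-h1 + (Complex.sin (x - y) ^ 2) * h3)

/-- Off the diagonal this is `(z^k - w^k) cot((x - y)/2) = i (z^k - w^k)(z + w)/(z - w)`, cleared of
denominators. -/
lemma kernel_identity (k : ℕ) (x y : ℝ) :
    (chr (k : ℤ) x - chr (k : ℤ) y) * ((2 * Real.sin (x - y) : ℝ) : ℂ)
      = (sq (x - y) : ℝ) * (Complex.I * Q k x y) := by
  have hne : chr 1 x * chr 1 y ≠ 0 := by
    rw [← norm_ne_zero_iff]; simp
  apply mul_right_cancel₀ hne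
  have hQ : Q k x y * (chr 1 x - chr 1 y)
      = (chr 1 x + chr 1 y) * (chr (k : ℤ) x - chr (k : ℤ) y) := by
    rw [Q, ← Finset.mul_sum, mul_assoc, geom_sum₂_mul, chr_natCast, chr_natCast]
  linear_combination (chr (k : ℤ) x - chr (k : ℤ) y) * two_sin_eq x y
    - (Complex.I * Q k x y) * sq_eq x y + Complex.I * (chr 1 x - chr 1 y) * hQ

/-- Pairs `μ < ν`. -/
abbrev pairs (n : ℕ) : Finset (Fin n × Fin n) := Finset.univ.filter (fun p => p.1 < p.2)

/-- One factor of the regularized weight. -/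
noncomputable def fac (β ε : ℝ) (u : ℝ) : ℝ := (sq u + ε) ^ (β / 2)

/-- The regularized weight `∏_{μ<ν} (|e^{iθ_μ} - e^{iθ_ν}|² + ε)^{β/2}`; it is smooth for `ε > 0`
and reduces to `cbeWeight` for `ε = 0`. -/
noncomputable def Wreg (β ε : ℝ) (n : ℕ) (θ : Fin n → ℝ) : ℝ :=
  ∏ p ∈ pairs n, fac β ε (θ p.1 - θ p.2)

lemma Wreg_zero (β : ℝ) (n : ℕ) (θ : Fin n → ℝ) : Wreg β 0 n θ = cbeWeight β n θ := by
  unfold Wreg cbeWeight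
  refine Finset.prod_congr rfl fun p _ => ?_
  have e : ∀ x : ℝ, Complex.exp (Complex.I * x) = chr 1 x := by
    intro x; simp [chr, mul_comm]
  rw [e, e, fac, add_zero, ← norm_chr_one_sub, ← Real.rpow_natCast, ← Real.rpow_mul (norm_nonneg _)]
  congr 1; push_cast; ring

lemma fac_nonneg (β : ℝ) {ε : ℝ} (hε : 0 ≤ ε) (u : ℝ) : 0 ≤ fac β ε u :=
  Real.rpow_nonneg (add_nonneg (sq_nonneg' u) hε) _

lemma fac_le {β ε : ℝ} (hβ : 0 < β) (hε : 0 ≤ ε) (hε1 : ε ≤ 1) (u : ℝ) :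
    fac β ε u ≤ 5 ^ (β / 2) := by
  refine Real.rpow_le_rpow (add_nonneg (sq_nonneg' u) hε) ?_ (by positivity)
  have := sq_le_four u; linarith

lemma Wreg_nonneg (β : ℝ) {ε : ℝ} (hε : 0 ≤ ε) (n : ℕ) (θ : Fin n → ℝ) : 0 ≤ Wreg β ε n θ :=
  Finset.prod_nonneg fun _ _ => fac_nonneg β hε _

lemma Wreg_le {β ε : ℝ} (hβ : 0 < β) (hε : 0 ≤ ε) (hε1 : ε ≤ 1) (n : ℕ) (θ : Fin n → ℝ) :
    Wreg β ε n θ ≤ (5 ^ (β / 2)) ^ (pairs n).card := by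
  rw [← Finset.prod_const]
  exact Finset.prod_le_prod (fun _ _ => fac_nonneg β hε _) fun _ _ => fac_le hβ hε hε1 _

lemma continuous_weight {β : ℝ} (hβ : 0 < β) (n : ℕ) : Continuous (cbeWeight β n) := by
  unfold cbeWeight
  refine continuous_finsetProd _ fun p _ => Continuous.rpow_const (by fun_prop) ?_
  intro _; right; exact hβ.le

lemma weight_nonneg (β : ℝ) (n : ℕ) (θ : Fin n → ℝ) : 0 ≤ cbeWeight β n θ := by
  rw [← Wreg_zero]; exact Wreg_nonneg β le_rfl n θ

/-- Logarithmic derivative of `u ↦ |1 - e^{iu}|² + ε`; for `ε = 0` it is `cot (u / 2)`. -/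
noncomputable def kap (ε u : ℝ) : ℝ := 2 * Real.sin u / (sq u + ε)

lemma hasDerivAt_fac (β : ℝ) {ε : ℝ} (hε : 0 < ε) (u : ℝ) :
    HasDerivAt (fac β ε) (fac β ε u * (β / 2 * kap ε u)) u := by
  have hpos : 0 < sq u + ε := add_pos_of_nonneg_of_pos (sq_nonneg' u) hε
  have h1 : HasDerivAt (fun u => sq u + ε) (2 * Real.sin u) u := by
    have := (((Real.hasDerivAt_cos u).const_mul 2).const_sub 2).add_const ε
    simpa [sq] using this
  have := h1.rpow_const (p := β / 2) (Or.inl hpos.ne')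
  refine this.congr_deriv ?_
  rw [fac, kap, Real.rpow_sub hpos, Real.rpow_one]
  field_simp

lemma contDiff_fac (β : ℝ) {ε : ℝ} (hε : 0 < ε) : ContDiff ℝ 1 (fac β ε) := by
  unfold fac sq
  refine ContDiff.rpow_const_of_ne (by fun_prop) fun u => ?_
  exact (add_pos_of_nonneg_of_pos (sq_nonneg' u) hε).ne'

lemma test_fac (β : ℝ) {ε : ℝ} (hε : 0 < ε) {n : ℕ} (p : Fin n × Fin n) :
    Test (fun θ : Fin n → ℝ => ((fac β ε (θ p.1 - θ p.2) : ℝ) : ℂ)) := by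
  refine ⟨?_, fun θ i => ?_⟩
  · refine Complex.ofRealCLM.contDiff.comp ((contDiff_fac β hε).comp ?_)
    fun_prop
  · congr 1
    unfold fac sq
    congr 4
    simp only [Pi.add_apply, Pi.single_apply]
    split_ifs
    · congr 1; ring
    · rw [← Real.cos_add_two_pi (θ p.1 - θ p.2)]; congr 1; ring
    · rw [← Real.cos_sub_two_pi (θ p.1 - θ p.2)]; congr 1; ring
    · simp

lemma pd_fac (β : ℝ) {ε : ℝ} (hε : 0 < ε) {n : ℕ} (p : Fin n × Fin n) (i : Fin n)
    (θ : Fin n → ℝ) :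
    pd i (fun θ : Fin n → ℝ => ((fac β ε (θ p.1 - θ p.2) : ℝ) : ℂ)) θ
      = (fac β ε (θ p.1 - θ p.2) : ℝ) * (((β / 2 * kap ε (θ p.1 - θ p.2) : ℝ) : ℂ) *
        ((if p.1 = i then 1 else 0) - (if p.2 = i then 1 else 0))) := by
  have h1 : HasFDerivAt (fun θ : Fin n → ℝ => θ p.1 - θ p.2)
    (ContinuousLinearMap.proj (R := ℝ) (φ := fun _ : Fin n => ℝ) p.1
      - ContinuousLinearMap.proj (R := ℝ) (φ := fun _ : Fin n => ℝ) p.2) θ :=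
    (ContinuousLinearMap.proj (R := ℝ) (φ := fun _ : Fin n => ℝ) p.1
      - ContinuousLinearMap.proj (R := ℝ) (φ := fun _ : Fin n => ℝ) p.2).hasFDerivAt
  have h2 := (hasDerivAt_fac β hε (θ p.1 - θ p.2)).ofReal_comp
  have := (h2.hasFDerivAt.comp θ h1).fderiv
  have e : (fun θ : Fin n → ℝ => ((fac β ε (θ p.1 - θ p.2) : ℝ) : ℂ))
    = (fun u : ℝ => ((fac β ε u : ℝ) : ℂ)) ∘ (fun θ : Fin n → ℝ => θ p.1 - θ p.2) := rfl
  rw [pd, e, this]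
  simp only [ContinuousLinearMap.comp_apply, ContinuousLinearMap.toSpanSingleton_apply,
    _root_.sub_apply, ContinuousLinearMap.proj_apply, Pi.single_apply]
  push_cast
  simp only [Complex.real_smul]
  split_ifs <;> push_cast <;> ring

lemma Wreg_aux (β : ℝ) {ε : ℝ} (hε : 0 < ε) {n : ℕ} (s : Finset (Fin n × Fin n)) :
    Test (fun θ : Fin n → ℝ => ∏ p ∈ s, ((fac β ε (θ p.1 - θ p.2) : ℝ) : ℂ)) ∧
    ∀ i θ, pd i (fun θ : Fin n → ℝ => ∏ p ∈ s, ((fac β ε (θ p.1 - θ p.2) : ℝ) : ℂ)) θ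
      = (∏ p ∈ s, ((fac β ε (θ p.1 - θ p.2) : ℝ) : ℂ)) *
        ∑ p ∈ s, (((β / 2 * kap ε (θ p.1 - θ p.2) : ℝ) : ℂ) *
        ((if p.1 = i then 1 else 0) - (if p.2 = i then 1 else 0))) := by
  classical
  induction s using Finset.induction_on with
  | empty => exact ⟨by simpa using Test.const 1, fun i θ => by simp [pd_const]⟩
  | insert p s hp ih =>
    simp only [Finset.prod_insert hp, Finset.sum_insert hp]
    refine ⟨(test_fac β hε p).mul ih.1, fun i θ => ?_⟩
    rw [pd_mul (test_fac β hε p) ih.1, ih.2, pd_fac β hε]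
    ring

lemma Wreg_ofReal (β ε : ℝ) (n : ℕ) (θ : Fin n → ℝ) :
    ((Wreg β ε n θ : ℝ) : ℂ) = ∏ p ∈ pairs n, ((fac β ε (θ p.1 - θ p.2) : ℝ) : ℂ) := by
  simp [Wreg]

/-- The regularized interaction kernel of the loop equation. -/
noncomputable def ker (ε : ℝ) (k : ℕ) (x y : ℝ) : ℂ :=
  (chr (k : ℤ) x - chr (k : ℤ) y) * ((kap ε (x - y) : ℝ) : ℂ)

/-- Loop equation for the regularized weight. -/
lemma loop_reg (β : ℝ) {ε : ℝ} (hε : 0 < ε) {n : ℕ} (k : ℕ) {Φ : (Fin n → ℝ) → ℂ} (hΦ : Test Φ) :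
    ∫ θ in cbeCube n, ((Wreg β ε n θ : ℝ) : ℂ) * (∑ i, chr (k : ℤ) (θ i) * pd i Φ θ +
      Complex.I * k * pw (k : ℤ) θ * Φ θ
      + Φ θ * ((β / 2 : ℝ) * ∑ p ∈ pairs n, ker ε k (θ p.1) (θ p.2))) = 0 := by
  have hW := Wreg_aux β hε (pairs n)
  have hchr : ∀ i, Test (fun θ : Fin n → ℝ => chr (k : ℤ) (θ i)) := fun i =>
    Test.coord (contDiff_chr k) (chr_periodic k) i
  have := integral_div_eq_zero (fun (i : Fin n) θ => chr (k : ℤ) (θ i) *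
    (Φ θ * ∏ p ∈ pairs n, ((fac β ε (θ p.1 - θ p.2) : ℝ) : ℂ)))
    (fun i => (hchr i).mul (hΦ.mul hW.1))
  rw [← this]
  congr 1
  funext θ
  have hker : ∀ p : Fin n × Fin n, ((β / 2 : ℝ) : ℂ) * ker ε k (θ p.1) (θ p.2)
      = ∑ i, chr (k : ℤ) (θ i) * (((β / 2 * kap ε (θ p.1 - θ p.2) : ℝ) : ℂ) *
        ((if p.1 = i then 1 else 0) - (if p.2 = i then 1 else 0))) := by
    intro p
    simp only [mul_sub, mul_ite, mul_one, mul_zero, Finset.sum_sub_distrib, Finset.sum_ite_eq,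
      Finset.mem_univ, if_true]
    rw [ker]; push_cast; ring
  have h2 : ∀ i, pd i (fun θ => chr (k : ℤ) (θ i) *
    (Φ θ * ∏ p ∈ pairs n, ((fac β ε (θ p.1 - θ p.2) : ℝ) : ℂ))) θ =
      (∏ p ∈ pairs n, ((fac β ε (θ p.1 - θ p.2) : ℝ) : ℂ)) * (chr (k : ℤ) (θ i) * pd i Φ θ
       + Complex.I * k * chr (k : ℤ) (θ i) * Φ θ
       + Φ θ * ∑ p ∈ pairs n, chr (k : ℤ) (θ i) * (((β / 2 * kap ε (θ p.1 - θ p.2) : ℝ) : ℂ) *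
        ((if p.1 = i then 1 else 0) - (if p.2 = i then 1 else 0)))) := by
    intro i
    rw [pd_mul (hchr i) (hΦ.mul hW.1), pd_mul hΦ hW.1, hW.2,
      pd_coord i i θ (hasDerivAt_chr k (θ i)), if_pos rfl, ← Finset.mul_sum]
    push_cast; ring
  rw [Finset.sum_congr rfl fun i _ => h2 i, ← Finset.mul_sum, Finset.sum_add_distrib,
    Finset.sum_add_distrib, ← Finset.mul_sum, Finset.sum_comm, Finset.mul_sum (pairs n),
    Finset.sum_congr rfl fun p _ => hker p, Wreg_ofReal]
  simp only [pw, Finset.mul_sum, Finset.sum_mul]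

end CBE

/-! ### Loop equations -/

namespace CBE

/-- The bound is uniform in `ε`, which gives domination as `ε → 0`. -/
lemma norm_ker_le {ε : ℝ} (hε : 0 ≤ ε) (k : ℕ) (x y : ℝ) : ‖ker ε k x y‖ ≤ 2 * k := by
  rw [ker, norm_mul, kap, Complex.norm_real, Real.norm_eq_abs, abs_div]
  have h0 : 0 ≤ sq (x - y) + ε := add_nonneg (sq_nonneg' _) hε
  rw [abs_of_nonneg h0, ← mul_div_assoc]
  refine div_le_of_le_mul₀ h0 (by positivity) ?_
  calc _ ≤ (k * ‖chr 1 x - chr 1 y‖) * (2 * ‖chr 1 x - chr 1 y‖) := by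
        gcongr
        · exact norm_chr_sub_le k x y
        · exact abs_two_sin_le x y
    _ = 2 * k * sq (x - y) := by rw [← norm_chr_one_sub]; ring
    _ ≤ _ := by gcongr; linarith

/-- The weight kills the coincidence set, off which the regularized kernel tends to `i Q`. -/
lemma tendsto_W_ker {β : ℝ} (hβ : 0 < β) {n : ℕ} (k : ℕ) (θ : Fin n → ℝ) (p : Fin n × Fin n)
    (hp : p ∈ pairs n) {ε : ℕ → ℝ} (hε : Tendsto ε atTop (𝓝 0))
    (hW : Tendsto (fun m => ((Wreg β (ε m) n θ : ℝ) : ℂ)) atTop (𝓝 (cbeWeight β n θ : ℝ))) :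
    Tendsto (fun m => ((Wreg β (ε m) n θ : ℝ) : ℂ) * ker (ε m) k (θ p.1) (θ p.2)) atTop
      (𝓝 ((cbeWeight β n θ : ℝ) * (Complex.I * Q k (θ p.1) (θ p.2)))) := by
  by_cases hs : sq (θ p.1 - θ p.2) = 0
  · have h1 : chr (k : ℤ) (θ p.1) - chr (k : ℤ) (θ p.2) = 0 := by
      rw [← norm_chr_one_sub, sq_eq_zero_iff] at hs
      have := norm_chr_sub_le k (θ p.1) (θ p.2)
      rw [hs, mul_zero] at this
      exact norm_le_zero_iff.1 this
    have h2 : cbeWeight β n θ = 0 := by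
      rw [← Wreg_zero, Wreg]
      refine Finset.prod_eq_zero hp ?_
      rw [fac, hs, add_zero, Real.zero_rpow (by positivity)]
    simp [ker, h1, h2]
  · refine hW.mul ?_
    have h3 : Tendsto (fun m => kap (ε m) (θ p.1 - θ p.2)) atTop
        (𝓝 (2 * Real.sin (θ p.1 - θ p.2) / (sq (θ p.1 - θ p.2) + 0))) :=
      tendsto_const_nhds.div (tendsto_const_nhds.add hε) (by simpa using hs)
    have h4 := (tendsto_const_nhds (x := chr (k : ℤ) (θ p.1) - chr (k : ℤ) (θ p.2))).mul
      ((Complex.continuous_ofReal.tendsto _).comp h3)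
    have hs' : ((sq (θ p.1 - θ p.2) : ℝ) : ℂ) ≠ 0 := by exact_mod_cast hs
    have e : (chr (k : ℤ) (θ p.1) - chr (k : ℤ) (θ p.2)) *
        ((2 * Real.sin (θ p.1 - θ p.2) / (sq (θ p.1 - θ p.2) + 0) : ℝ) : ℂ)
        = Complex.I * Q k (θ p.1) (θ p.2) := by
      rw [add_zero, Complex.ofReal_div, ← mul_div_assoc, kernel_identity, mul_div_cancel_left₀ _ hs']
    rw [e] at h4
    exact h4

lemma tendsto_Wreg {β : ℝ} (hβ : 0 < β) {n : ℕ} (θ : Fin n → ℝ) {ε : ℕ → ℝ}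
    (hε : Tendsto ε atTop (𝓝 0)) :
    Tendsto (fun m => ((Wreg β (ε m) n θ : ℝ) : ℂ)) atTop (𝓝 (cbeWeight β n θ : ℝ)) := by
  refine (Complex.continuous_ofReal.tendsto _).comp ?_
  rw [← Wreg_zero]
  refine tendsto_finsetProd _ fun p _ => ?_
  refine Filter.Tendsto.rpow_const (tendsto_const_nhds.add hε) (Or.inr (by positivity))

lemma sum_pairs {n : ℕ} (f : Fin n → Fin n → ℂ) (hf : ∀ i j, f i j = f j i) :
    2 * ∑ p ∈ pairs n, f p.1 p.2 = ∑ i, ∑ j, f i j - ∑ i, f i i := by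
  have h1 : ∑ i, ∑ j, f i j = ∑ p : Fin n × Fin n, f p.1 p.2 := (Fintype.sum_prod_type' f).symm
  have h2 : ∑ i, f i i = ∑ p ∈ Finset.univ.filter (fun p : Fin n × Fin n => p.1 = p.2),
      f p.1 p.2 := by
    rw [Finset.sum_filter, Fintype.sum_prod_type]
    simp
  have h3 : ∑ p ∈ Finset.univ.filter (fun p : Fin n × Fin n => p.2 < p.1), f p.1 p.2
      = ∑ p ∈ pairs n, f p.1 p.2 := by
    refine Finset.sum_bij' (fun p _ => p.swap) (fun p _ => p.swap) ?_ ?_ ?_ ?_ ?_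
    · simp
    · simp
    · simp
    · simp
    · intro p _; exact hf _ _
  rw [h1, h2, two_mul]
  nth_rewrite 2 [← h3]
  rw [eq_sub_iff_add_eq]
  rw [Finset.sum_filter, Finset.sum_filter, Finset.sum_filter, ← Finset.sum_add_distrib,
    ← Finset.sum_add_distrib]
  refine Finset.sum_congr rfl fun p _ => ?_
  rcases lt_trichotomy p.1 p.2 with h | h | h
  · simp [h, h.not_gt, h.ne]
  · simp [h]
  · simp [h, h.ne', h.not_gt]

/-- Summing the limiting interaction kernel over pairs produces products of power sums; the diagonal
is subtracted. -/
lemma sum_Q {n : ℕ} (k : ℕ) (θ : Fin n → ℝ) :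
    ∑ p ∈ pairs n, Q k (θ p.1) (θ p.2)
      = ∑ l ∈ range k, pw (l : ℤ) θ * pw ((k : ℤ) - l) θ - k * pw (k : ℤ) θ := by
  have h := sum_pairs (fun i j => Q k (θ i) (θ j)) (fun i j => Q_symm k _ _)
  have h1 : ∑ i, ∑ j, Q k (θ i) (θ j)
      = 2 * ∑ l ∈ range k, pw (l : ℤ) θ * pw ((k : ℤ) - l) θ := by
    have e1 : ∀ l ∈ range k, ∑ i, ∑ j, chr 1 (θ i) * (chr 1 (θ i) ^ l * chr 1 (θ j) ^ (k - 1 - l))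
        = pw ((l : ℤ) + 1) θ * pw ((k : ℤ) - 1 - l) θ := by
      intro l hl
      rw [Finset.mem_range] at hl
      have : ((k : ℤ) - 1 - l) = ((k - 1 - l : ℕ) : ℤ) := by omega
      rw [this, pw, pw, Finset.sum_mul_sum]
      refine Finset.sum_congr rfl fun i _ => Finset.sum_congr rfl fun j _ => ?_
      rw [chr_natCast, chr_add, chr_natCast]; ring
    have e2 : ∀ l ∈ range k, ∑ i, ∑ j, chr 1 (θ j) * (chr 1 (θ i) ^ l * chr 1 (θ j) ^ (k - 1 - l))
        = pw (l : ℤ) θ * pw ((k : ℤ) - l) θ := by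
      intro l hl
      rw [Finset.mem_range] at hl
      have : ((k : ℤ) - l) = ((k - 1 - l : ℕ) : ℤ) + 1 := by omega
      rw [this, pw, pw, Finset.sum_mul_sum]
      refine Finset.sum_congr rfl fun i _ => Finset.sum_congr rfl fun j _ => ?_
      rw [chr_natCast, chr_add, chr_natCast]; ring
    have e3 : ∑ l ∈ range k, pw ((l : ℤ) + 1) θ * pw ((k : ℤ) - 1 - l) θ
        = ∑ l ∈ range k, pw (l : ℤ) θ * pw ((k : ℤ) - l) θ := by
      rw [← Finset.sum_range_reflect]
      refine Finset.sum_congr rfl fun l hl => ?_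
      rw [Finset.mem_range] at hl
      have : ((k - 1 - l : ℕ) : ℤ) = k - 1 - l := by omega
      rw [this, mul_comm]; congr 2 <;> ring
    calc _ = ∑ l ∈ range k, (∑ i, ∑ j, chr 1 (θ i) * (chr 1 (θ i) ^ l * chr 1 (θ j) ^ (k - 1 - l))
            + ∑ i, ∑ j, chr 1 (θ j) * (chr 1 (θ i) ^ l * chr 1 (θ j) ^ (k - 1 - l))) := by
          simp only [Q, ← Finset.sum_add_distrib, ← add_mul]
          rw [Finset.sum_comm, Finset.sum_congr rfl fun j _ => Finset.sum_comm, Finset.sum_comm]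
          refine Finset.sum_congr rfl fun l _ => ?_
          rw [Finset.sum_comm]
      _ = _ := by
          rw [Finset.sum_add_distrib, Finset.sum_congr rfl e1, Finset.sum_congr rfl e2, e3]; ring
  rw [h1] at h
  simp only [Q_diag] at h
  have h2 : ∑ i, 2 * (k : ℂ) * chr (k : ℤ) (θ i) = 2 * (k * pw (k : ℤ) θ) := by
    rw [pw, ← Finset.mul_sum]; ring
  rw [h2, ← mul_sub] at h
  exact mul_left_cancel₀ two_ne_zero h

/-- Loop equation (Schwinger-Dyson equation) for the unnormalized circular `β`-ensemble. -/
lemma loop_unnormalized {β : ℝ} (hβ : 0 < β) {n : ℕ} (k : ℕ) {Φ : (Fin n → ℝ) → ℂ} (hΦ : Test Φ) :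
    ∫ θ in cbeCube n, ((cbeWeight β n θ : ℝ) : ℂ) * (∑ i, chr (k : ℤ) (θ i) * pd i Φ θ +
      Complex.I * (k * pw (k : ℤ) θ + (β / 2 : ℝ) *
        (∑ l ∈ range k, pw (l : ℤ) θ * pw ((k : ℤ) - l) θ - k * pw (k : ℤ) θ)) * Φ θ) = 0 := by
  set ε : ℕ → ℝ := fun m => 1 / ((m : ℝ) + 1) with hεdef
  have hε : Tendsto ε atTop (𝓝 0) := tendsto_one_div_add_atTop_nhds_zero_nat
  have hεpos : ∀ m, 0 < ε m := fun m => Nat.one_div_pos_of_nat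
  have hε1 : ∀ m, ε m ≤ 1 := fun m => by
    rw [hεdef]; simp only; rw [div_le_one (by positivity)]; linarith [(Nat.cast_nonneg m : (0:ℝ) ≤ m)]
  set A : (Fin n → ℝ) → ℂ := fun θ => ∑ i, chr (k : ℤ) (θ i) * pd i Φ θ +
      Complex.I * k * pw (k : ℤ) θ * Φ θ with hA
  have hAc : Continuous A := by
    refine Continuous.add (continuous_finsetSum _ fun i _ => ?_) ?_
    · exact ((continuous_chr k).comp (continuous_apply i)).mul (hΦ.cont_pd i)
    · exact (continuous_const.mul (Test.pw k).cont).mul hΦ.cont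
  set B : ℝ := (5 ^ (β / 2)) ^ (pairs n).card
  have key : Tendsto (fun m => ∫ θ in cbeCube n, ((Wreg β (ε m) n θ : ℝ) : ℂ) * (A θ
      + Φ θ * ((β / 2 : ℝ) * ∑ p ∈ pairs n, ker (ε m) k (θ p.1) (θ p.2)))) atTop
      (𝓝 (∫ θ in cbeCube n, ((cbeWeight β n θ : ℝ) : ℂ) * (∑ i, chr (k : ℤ) (θ i) * pd i Φ θ +
      Complex.I * (k * pw (k : ℤ) θ + (β / 2 : ℝ) *
        (∑ l ∈ range k, pw (l : ℤ) θ * pw ((k : ℤ) - l) θ - k * pw (k : ℤ) θ)) * Φ θ))) := by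
    refine tendsto_integral_of_dominated_convergence
      (fun θ => B * (‖A θ‖ + ‖Φ θ‖ * (β / 2 * ∑ p ∈ pairs n, (2 * k : ℝ)))) ?_ ?_ ?_ ?_
    · intro m
      have hker : Continuous (fun θ : Fin n → ℝ => ∑ p ∈ pairs n, ker (ε m) k (θ p.1) (θ p.2)) := by
        refine continuous_finsetSum _ fun p _ => ?_
        unfold ker kap
        refine Continuous.mul (((continuous_chr k).comp (continuous_apply _)).sub
          ((continuous_chr k).comp (continuous_apply _))) (Complex.continuous_ofReal.comp ?_)
        refine Continuous.div (by fun_prop) ?_ fun θ =>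
          (add_pos_of_nonneg_of_pos (sq_nonneg' _) (hεpos m)).ne'
        unfold sq
        fun_prop
      have hWc : Continuous (fun θ => ((Wreg β (ε m) n θ : ℝ) : ℂ)) := by
        simp_rw [Wreg_ofReal]; exact (Wreg_aux β (hεpos m) (pairs n)).1.cont
      exact (hWc.mul (hAc.add (hΦ.cont.mul (continuous_const.mul hker)))).aestronglyMeasurable
    · refine ContinuousOn.integrableOn_compact (isCompact_cube n) (Continuous.continuousOn ?_)
      exact continuous_const.mul (hAc.norm.add (hΦ.cont.norm.mul continuous_const))
    · intro m
      refine Eventually.of_forall fun θ => ?_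
      rw [norm_mul, Complex.norm_real, Real.norm_of_nonneg (Wreg_nonneg β (hεpos m).le n θ)]
      refine mul_le_mul (Wreg_le hβ (hεpos m).le (hε1 m) n θ) ?_ (norm_nonneg _) (by positivity)
      refine (norm_add_le _ _).trans (add_le_add le_rfl ?_)
      rw [norm_mul, norm_mul, Complex.norm_real, Real.norm_of_nonneg (by positivity : 0 ≤ β / 2)]
      gcongr
      refine (norm_sum_le _ _).trans (Finset.sum_le_sum fun p _ => norm_ker_le (hεpos m).le k _ _)
    · refine Eventually.of_forall fun θ => ?_
      have hW := tendsto_Wreg hβ θ hε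
      have h1 := tendsto_finsetSum (pairs n) fun p hp => tendsto_W_ker hβ k θ p hp hε hW
      have h2 := (hW.mul_const (A θ)).add (h1.const_mul (Φ θ * (β / 2 : ℝ)))
      refine (h2.congr fun m => ?_).trans_eq ?_
      · rw [← Finset.mul_sum]; ring
      · rw [← Finset.mul_sum, ← Finset.mul_sum, sum_Q]
        congr 1
        simp only [hA]
        ring
  refine tendsto_nhds_unique key ?_
  refine tendsto_const_nhds.congr fun m => ?_
  rw [← loop_reg β (hεpos m) k hΦ]

end CBE

/-! ### The ensemble as a probability measure -/

namespace CBE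

/-- The normalization constant of the circular `β`-ensemble. -/
noncomputable def Z (β : ℝ) (n : ℕ) : ℝ := ∫ θ in cbeCube n, cbeWeight β n θ

lemma integrable_weight {β : ℝ} (hβ : 0 < β) (n : ℕ) :
    Integrable (cbeWeight β n) (volume.restrict (cbeCube n)) :=
  ContinuousOn.integrableOn_compact (isCompact_cube n) (continuous_weight hβ n).continuousOn

lemma Z_pos {β : ℝ} (hβ : 0 < β) (n : ℕ) : 0 < Z β n := by
  rw [Z, setIntegral_pos_iff_support_of_nonneg_ae
    (Eventually.of_forall fun θ => weight_nonneg β n θ) (integrable_weight hβ n)]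
  set U : Set (Fin n → ℝ) := Function.support (cbeWeight β n) ∩
    Set.univ.pi fun _ => Set.Ioo 0 (2 * Real.pi)
  have hU : IsOpen U := ((continuous_weight hβ n).isOpen_support).inter
    (isOpen_set_pi Set.finite_univ fun _ _ => isOpen_Ioo)
  have hne : U.Nonempty := by
    refine ⟨fun i => 1 / ((i : ℝ) + 1), ?_, ?_⟩
    · rw [Function.mem_support, ← Wreg_zero, Wreg, Finset.prod_ne_zero_iff]
      intro p hp
      have hlt : p.1 < p.2 := (Finset.mem_filter.1 hp).2
      have hlt' : ((p.1 : ℕ) : ℝ) < ((p.2 : ℕ) : ℝ) := by exact_mod_cast hlt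
      set u : ℝ := 1 / (((p.1 : ℕ) : ℝ) + 1) - 1 / (((p.2 : ℕ) : ℝ) + 1) with hu
      have h0 : 0 < u := by
        rw [hu, sub_pos]
        exact one_div_lt_one_div_of_lt (by positivity) (by linarith)
      have h1 : u ≤ 1 := by
        have : 1 / (((p.1 : ℕ) : ℝ) + 1) ≤ 1 := by
          rw [div_le_one (by positivity)]; linarith [(Nat.cast_nonneg (p.1 : ℕ) : (0:ℝ) ≤ _)]
        have : 0 ≤ 1 / (((p.2 : ℕ) : ℝ) + 1) := by positivity
        linarith
      have hpi := Real.pi_gt_three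
      have hs : 0 < sq u := by
        refine lt_of_le_of_ne (sq_nonneg' u) fun h => ?_
        have hc : Real.cos u = 1 := by unfold sq at h; linarith
        rw [Real.cos_eq_one_iff_of_lt_of_lt (by linarith) (by linarith)] at hc
        exact h0.ne' hc
      rw [fac, add_zero]
      exact (Real.rpow_pos_of_pos hs _).ne'
    · intro i _
      refine ⟨by positivity, ?_⟩
      have : 1 / (((i : ℕ) : ℝ) + 1) ≤ 1 := by
        rw [div_le_one (by positivity)]; linarith [(Nat.cast_nonneg (i : ℕ) : (0:ℝ) ≤ _)]
      have hpi := Real.pi_gt_three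
      simp only
      linarith
  refine (hU.measure_pos volume hne).trans_le (measure_mono ?_)
  refine Set.inter_subset_inter_right _ (Set.pi_mono fun _ _ => Set.Ioo_subset_Icc_self)

/-- The circular `β`-ensemble as a measure on `ℝⁿ` supported in the cube `[0, 2π]ⁿ`. -/
noncomputable def P (β : ℝ) (n : ℕ) : Measure (Fin n → ℝ) :=
  (volume.restrict (cbeCube n)).withDensity fun θ => ENNReal.ofReal (cbeWeight β n θ / Z β n)

lemma integral_P {β : ℝ} (hβ : 0 < β) (n : ℕ) {E : Type*} [NormedAddCommGroup E] [NormedSpace ℝ E]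
    (f : (Fin n → ℝ) → E) :
    ∫ θ, f θ ∂(P β n) = (Z β n)⁻¹ • ∫ θ in cbeCube n, cbeWeight β n θ • f θ := by
  rw [P, integral_withDensity_eq_integral_toReal_smul
    (((continuous_weight hβ n).div_const _).measurable.ennreal_ofReal)
    (Eventually.of_forall fun θ => ENNReal.ofReal_lt_top), ← integral_smul]
  refine integral_congr_ae (Eventually.of_forall fun θ => ?_)
  simp only
  rw [ENNReal.toReal_ofReal (div_nonneg (weight_nonneg β n θ) (Z_pos hβ n).le), smul_smul,
    div_eq_inv_mul]

lemma cbeExp_eq {β : ℝ} (hβ : 0 < β) (n : ℕ) (f : (Fin n → ℝ) → ℝ) :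
    cbeExp β n f = ∫ θ, f θ ∂(P β n) := by
  rw [integral_P hβ, cbeExp, ← Z, div_eq_inv_mul, smul_eq_mul]
  congr 2
  funext θ
  rw [smul_eq_mul, mul_comm]

lemma isProb_P {β : ℝ} (hβ : 0 < β) (n : ℕ) : IsProbabilityMeasure (P β n) := by
  constructor
  rw [P, withDensity_apply _ MeasurableSet.univ, setLIntegral_univ,
    ← ofReal_integral_eq_lintegral_ofReal ((integrable_weight hβ n).div_const _)
    (Eventually.of_forall fun θ => div_nonneg (weight_nonneg β n θ) (Z_pos hβ n).le),
    integral_div, ← Z, div_self (Z_pos hβ n).ne', ENNReal.ofReal_one]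

lemma Pint {β : ℝ} (hβ : 0 < β) {n : ℕ} {E : Type*} [NormedAddCommGroup E]
    [SecondCountableTopology E] [MeasurableSpace E] [BorelSpace E]
    {f : (Fin n → ℝ) → E} (hf : Continuous f) : Integrable f (P β n) := by
  have := isProb_P hβ n
  obtain ⟨C, hC⟩ := (isCompact_cube n).exists_bound_of_continuousOn hf.continuousOn
  refine Integrable.of_bound hf.aestronglyMeasurable C ?_
  have h1 : ∀ᵐ θ ∂(volume.restrict (cbeCube n)), θ ∈ cbeCube n :=
    ae_restrict_mem (isCompact_cube n).measurableSet
  have h2 : P β n ≪ volume.restrict (cbeCube n) := withDensity_absolutelyContinuous _ _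
  filter_upwards [h2.ae_le h1] with θ hθ using hC θ hθ

/-- Loop equation for the circular `β`-ensemble. -/
lemma loop_eq {β : ℝ} (hβ : 0 < β) {n : ℕ} (k : ℕ) {Φ : (Fin n → ℝ) → ℂ} (hΦ : Test Φ) :
    ∫ θ, (∑ i, chr (k : ℤ) (θ i) * pd i Φ θ +
      Complex.I * (k * pw (k : ℤ) θ + (β / 2 : ℝ) *
        (∑ l ∈ range k, pw (l : ℤ) θ * pw ((k : ℤ) - l) θ - k * pw (k : ℤ) θ)) * Φ θ) ∂(P β n)
      = 0 := by
  rw [integral_P hβ]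
  simp only [Complex.real_smul]
  rw [loop_unnormalized hβ k hΦ, mul_zero]

/-- Cauchy-Schwarz for continuous functions under the ensemble. -/
lemma cauchy_schwarz {β : ℝ} (hβ : 0 < β) {n : ℕ} {u v : (Fin n → ℝ) → ℂ} (hu : Continuous u)
    (hv : Continuous v) :
    (∫ θ, ‖u θ * v θ‖ ∂(P β n)) ^ 2 ≤ (∫ θ, ‖u θ‖ ^ 2 ∂(P β n)) * ∫ θ, ‖v θ‖ ^ 2 ∂(P β n) := by
  have hq : ∀ t : ℝ, 0 ≤ (∫ θ, ‖u θ‖ ^ 2 ∂(P β n)) * (t * t) + (2 * ∫ θ, ‖u θ * v θ‖ ∂(P β n)) * t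
      + ∫ θ, ‖v θ‖ ^ 2 ∂(P β n) := by
    intro t
    have i1 : Integrable (fun θ => ‖u θ‖ ^ 2 * (t * t)) (P β n) := Pint hβ (by fun_prop)
    have i2 : Integrable (fun θ => (2 * ‖u θ * v θ‖) * t) (P β n) := Pint hβ (by fun_prop)
    have i12 : Integrable (fun θ => ‖u θ‖ ^ 2 * (t * t) + (2 * ‖u θ * v θ‖) * t) (P β n) :=
      Pint hβ (by fun_prop)
    have i3 : Integrable (fun θ => ‖v θ‖ ^ 2) (P β n) := Pint hβ (by fun_prop)
    rw [← integral_const_mul 2, ← integral_mul_const, ← integral_mul_const, ← integral_add i1 i2,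
      ← integral_add i12 i3]
    refine integral_nonneg fun θ => ?_
    rw [norm_mul]
    simp only [Pi.zero_apply]
    nlinarith [_root_.sq_nonneg (‖u θ‖ * t + ‖v θ‖)]
  have := discrim_le_zero hq
  rw [discrim] at this
  nlinarith

end CBE

/-! ### The generator on products of power sums -/

namespace CBE

/-- `Sp k c f`: the function `f` is a linear combination of products `p_{λ₁} ⋯ p_{λ_m}` of power
sums with `λ_i ≥ 1` and `λ₁ + ⋯ + λ_m = k`, with coefficients of total modulus at most `c`. -/
inductive Sp {n : ℕ} : ℕ → ℝ → ((Fin n → ℝ) → ℂ) → Prop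
  | one : Sp 0 1 (fun _ => 1)
  | zero (k : ℕ) : Sp k 0 (fun _ => 0)
  | mulpw {k : ℕ} {c : ℝ} {f : (Fin n → ℝ) → ℂ} (a : ℕ) (ha : 1 ≤ a) (h : Sp k c f) :
      Sp (a + k) c (fun θ => pw (a : ℤ) θ * f θ)
  | add {k : ℕ} {c c' : ℝ} {f g : (Fin n → ℝ) → ℂ} (h : Sp k c f) (h' : Sp k c' g) :
      Sp k (c + c') (fun θ => f θ + g θ)
  | smul {k : ℕ} {c : ℝ} {f : (Fin n → ℝ) → ℂ} (r : ℂ) (h : Sp k c f) :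
      Sp k (‖r‖ * c) (fun θ => r * f θ)
  | mono {k : ℕ} {c c' : ℝ} {f : (Fin n → ℝ) → ℂ} (h : Sp k c f) (hc : c ≤ c') : Sp k c' f

section
variable {n : ℕ} {k : ℕ} {c : ℝ} {f : (Fin n → ℝ) → ℂ}

lemma Sp.test (h : Sp k c f) : Test f := by
  induction h with
  | one => exact Test.const 1
  | zero => exact Test.const 0
  | mulpw a _ _ ih => exact (Test.pw a).mul ih
  | add _ _ ih ih' => exact ih.add ih'
  | smul r _ ih => exact (Test.const r).mul ih
  | mono _ _ ih => exact ih

lemma Sp.nonneg (h : Sp k c f) : 0 ≤ c := by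
  induction h with
  | one => exact zero_le_one
  | zero => exact le_rfl
  | mulpw a _ _ ih => exact ih
  | add _ _ ih ih' => exact add_nonneg ih ih'
  | smul r _ ih => positivity
  | mono _ hc ih => exact ih.trans hc

lemma Sp.bound (hn : 1 ≤ n) (h : Sp k c f) (θ : Fin n → ℝ) : ‖f θ‖ ≤ c * (n : ℝ) ^ k := by
  have hn' : (1 : ℝ) ≤ n := by exact_mod_cast hn
  induction h with
  | one => simp
  | zero => simp
  | @mulpw k c f a ha h ih =>
    rw [norm_mul, pow_add]
    have h1 : ‖pw (a : ℤ) θ‖ ≤ (n : ℝ) ^ a :=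
      (norm_pw_le _ θ).trans (le_self_pow₀ hn' (by omega))
    calc _ ≤ (n : ℝ) ^ a * (c * (n : ℝ) ^ k) := by gcongr
      _ = _ := by ring
  | add _ _ ih ih' => rw [add_mul]; exact (norm_add_le _ _).trans (add_le_add ih ih')
  | smul r _ ih => rw [norm_mul, mul_assoc]; gcongr
  | mono _ hc ih => exact ih.trans (by gcongr)

lemma Sp.pw (a : ℕ) (ha : 1 ≤ a) : Sp (n := n) a 1 (pw (a : ℤ)) := by
  have := Sp.mulpw a ha (Sp.one (n := n))
  simpa using this

lemma Sp.sum {ι : Type*} (s : Finset ι) {F : ι → (Fin n → ℝ) → ℂ} (h : ∀ i ∈ s, Sp k c (F i)) :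
    Sp k (s.card * c) (fun θ => ∑ i ∈ s, F i θ) := by
  classical
  induction s using Finset.induction_on with
  | empty => simpa using Sp.zero k
  | insert i s hi ih =>
    simp only [Finset.sum_insert hi, Finset.card_insert_of_notMem hi]
    have := (h i (by simp)).add (ih fun j hj => h j (by simp [hj]))
    refine this.mono (le_of_eq ?_)
    push_cast; ring

/-- The (bilinear) carré du champ `∑_i ∂_i f ∂_i g`. -/
noncomputable def Gam {n : ℕ} (f g : (Fin n → ℝ) → ℂ) (θ : Fin n → ℝ) : ℂ :=
  ∑ i, pd i f θ * pd i g θ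

lemma Gam_comm (f g : (Fin n → ℝ) → ℂ) (θ : Fin n → ℝ) : Gam f g θ = Gam g f θ := by
  simp [Gam, mul_comm]

lemma Gam_cont {f g : (Fin n → ℝ) → ℂ} (hf : Test f) (hg : Test g) : Continuous (Gam f g) :=
  continuous_finsetSum _ fun i _ => (hf.cont_pd i).mul (hg.cont_pd i)

lemma Gam_mul_right {f g h : (Fin n → ℝ) → ℂ} (hg : Test g) (hh : Test h)
    (θ : Fin n → ℝ) : Gam f (fun θ => g θ * h θ) θ = g θ * Gam f h θ + h θ * Gam f g θ := by
  simp only [Gam, Finset.mul_sum, ← Finset.sum_add_distrib]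
  refine Finset.sum_congr rfl fun i _ => ?_
  rw [pd_mul hg hh]; ring

lemma Gam_add_right {f g h : (Fin n → ℝ) → ℂ} (hg : Test g) (hh : Test h)
    (θ : Fin n → ℝ) : Gam f (fun θ => g θ + h θ) θ = Gam f g θ + Gam f h θ := by
  simp only [Gam, ← Finset.sum_add_distrib]
  refine Finset.sum_congr rfl fun i _ => ?_
  rw [pd_add hg hh]; ring

lemma Gam_const_right {f : (Fin n → ℝ) → ℂ} (r : ℂ) (θ : Fin n → ℝ) :
    Gam f (fun _ => r) θ = 0 := by
  simp [Gam, pd_const]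

lemma Gam_pw_pw (a b : ℤ) (θ : Fin n → ℝ) :
    Gam (CBE.pw a) (CBE.pw b) θ = -(a * b) * CBE.pw (a + b) θ := by
  simp only [Gam, pd_pw, CBE.pw, Finset.mul_sum, chr_add]
  refine Finset.sum_congr rfl fun i _ => ?_
  linear_combination (a * b * chr a (θ i) * chr b (θ i)) * Complex.I_sq

/-- The carré du champ with `p_a` sends degree `k` to degree `a + k`, since
`Γ(p_a, p_b) = -ab p_{a+b}`. -/
lemma Sp.gam (a : ℕ) (ha : 1 ≤ a) (h : Sp k c f) : Sp (a + k) (a * k * c) (Gam (CBE.pw (a : ℤ)) f) := by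
  induction h with
  | one =>
    have : Gam (CBE.pw (a : ℤ)) (fun _ : Fin n → ℝ => (1 : ℂ)) = fun _ => 0 := by
      funext θ; exact Gam_const_right 1 θ
    rw [this]; simpa using Sp.zero _
  | zero k =>
    have : Gam (CBE.pw (a : ℤ)) (fun _ : Fin n → ℝ => (0 : ℂ)) = fun _ => 0 := by
      funext θ; exact Gam_const_right 0 θ
    rw [this]; simpa using Sp.zero _
  | @mulpw k c f b hb h ih =>
    have e : Gam (CBE.pw (a : ℤ)) (fun θ => CBE.pw (b : ℤ) θ * f θ)
        = fun θ => CBE.pw (b : ℤ) θ * Gam (CBE.pw (a : ℤ)) f θ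
          + (-(a * b : ℂ)) * (CBE.pw ((a + b : ℕ) : ℤ) θ * f θ) := by
      funext θ
      rw [Gam_mul_right (Test.pw b) h.test, Gam_pw_pw]
      push_cast; ring
    rw [e]
    have h1 := Sp.mulpw b hb ih
    have h2 := Sp.smul (-(a * b : ℂ)) (Sp.mulpw (a + b) (by omega) h)
    rw [show b + (a + k) = a + (b + k) by ring] at h1
    rw [show a + b + k = a + (b + k) by ring] at h2
    refine (h1.add h2).mono (le_of_eq ?_)
    rw [norm_neg, norm_mul, Complex.norm_natCast, Complex.norm_natCast]
    push_cast; ring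
  | @add k c c' f g h h' ih ih' =>
    have e : Gam (CBE.pw (a : ℤ)) (fun θ => f θ + g θ)
        = fun θ => Gam (CBE.pw (a : ℤ)) f θ + Gam (CBE.pw (a : ℤ)) g θ := by
      funext θ; exact Gam_add_right h.test h'.test θ
    rw [e]
    exact (ih.add ih').mono (le_of_eq (by ring))
  | @smul k c f r h ih =>
    have e : Gam (CBE.pw (a : ℤ)) (fun θ => r * f θ)
        = fun θ => r * Gam (CBE.pw (a : ℤ)) f θ := by
      funext θ; rw [Gam_mul_right (Test.const r) h.test, Gam_const_right]; ring
    rw [e]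
    exact (ih.smul r).mono (le_of_eq (by ring))
  | mono _ hc ih => exact ih.mono (by gcongr)

end

/-- `Gen β f g`: in the weak sense, `g = -L f`, where `L` is the generator for which the circular
`β`-ensemble is reversible. -/
def Gen (β : ℝ) {n : ℕ} (f g : (Fin n → ℝ) → ℂ) : Prop :=
  ∀ Φ : (Fin n → ℝ) → ℂ, Test Φ → ∫ θ, Gam f Φ θ ∂(P β n) = ∫ θ, g θ * Φ θ ∂(P β n)

section gen
variable {β : ℝ} {n : ℕ}

/-- The product rule `L(fg) = f Lg + g Lf + 2 Γ(f, g)` in weak form. -/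
lemma Gen.mul (hβ : 0 < β) {f₁ f₂ g₁ g₂ : (Fin n → ℝ) → ℂ} (hf₁ : Test f₁) (hf₂ : Test f₂)
    (hg₁ : Continuous g₁) (hg₂ : Continuous g₂) (h₁ : Gen β f₁ g₁) (h₂ : Gen β f₂ g₂) :
    Gen β (fun θ => f₁ θ * f₂ θ) (fun θ => g₁ θ * f₂ θ + f₁ θ * g₂ θ + (-2) * Gam f₁ f₂ θ) := by
  intro Φ hΦ
  have c1 := hf₁.cont
  have c2 := hf₂.cont
  have c3 := hΦ.cont
  have c4 := Gam_cont hf₁ hf₂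
  have e1 : ∫ θ, Gam (fun θ => f₁ θ * f₂ θ) Φ θ ∂(P β n)
      = ∫ θ, (Gam f₂ (fun θ => f₁ θ * Φ θ) θ + Gam f₁ (fun θ => f₂ θ * Φ θ) θ)
        + (-2) * Gam f₁ f₂ θ * Φ θ ∂(P β n) := by
    refine integral_congr_ae (Eventually.of_forall fun θ => ?_)
    simp only
    rw [Gam_comm, Gam_mul_right hf₁ hf₂, Gam_mul_right hf₁ hΦ, Gam_mul_right hf₂ hΦ,
      Gam_comm Φ, Gam_comm Φ, Gam_comm f₂ f₁]
    ring
  have i1 : Integrable (Gam f₂ (fun θ => f₁ θ * Φ θ)) (P β n) := Pint hβ (Gam_cont hf₂ (hf₁.mul hΦ))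
  have i2 : Integrable (Gam f₁ (fun θ => f₂ θ * Φ θ)) (P β n) := Pint hβ (Gam_cont hf₁ (hf₂.mul hΦ))
  have i3 : Integrable (fun θ => (-2) * Gam f₁ f₂ θ * Φ θ) (P β n) := Pint hβ (by fun_prop)
  have i4 : Integrable (fun θ => g₂ θ * (f₁ θ * Φ θ)) (P β n) := Pint hβ (by fun_prop)
  have i5 : Integrable (fun θ => g₁ θ * (f₂ θ * Φ θ)) (P β n) := Pint hβ (by fun_prop)
  have i12 : Integrable (fun θ => Gam f₂ (fun θ => f₁ θ * Φ θ) θ + Gam f₁ (fun θ => f₂ θ * Φ θ) θ)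
    (P β n) := i1.add i2
  have i45 : Integrable (fun θ => g₂ θ * (f₁ θ * Φ θ) + g₁ θ * (f₂ θ * Φ θ)) (P β n) := i4.add i5
  rw [e1, integral_add i12 i3, integral_add i1 i2, h₂ _ (hf₁.mul hΦ), h₁ _ (hf₂.mul hΦ),
    ← integral_add i4 i5, ← integral_add i45 i3]
  congr 1
  funext θ
  ring

lemma Gen.add (hβ : 0 < β) {f₁ f₂ g₁ g₂ : (Fin n → ℝ) → ℂ} (hf₁ : Test f₁) (hf₂ : Test f₂)
    (hg₁ : Continuous g₁) (hg₂ : Continuous g₂) (h₁ : Gen β f₁ g₁) (h₂ : Gen β f₂ g₂) :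
    Gen β (fun θ => f₁ θ + f₂ θ) (fun θ => g₁ θ + g₂ θ) := by
  intro Φ hΦ
  have c3 := hΦ.cont
  have i1 : Integrable (Gam f₁ Φ) (P β n) := Pint hβ (Gam_cont hf₁ hΦ)
  have i2 : Integrable (Gam f₂ Φ) (P β n) := Pint hβ (Gam_cont hf₂ hΦ)
  have i4 : Integrable (fun θ => g₁ θ * Φ θ) (P β n) := Pint hβ (by fun_prop)
  have i5 : Integrable (fun θ => g₂ θ * Φ θ) (P β n) := Pint hβ (by fun_prop)
  have e : ∀ θ, Gam (fun θ => f₁ θ + f₂ θ) Φ θ = Gam f₁ Φ θ + Gam f₂ Φ θ := fun θ => by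
    rw [Gam_comm, Gam_add_right hf₁ hf₂, Gam_comm, Gam_comm Φ]
  simp only [e, add_mul]
  rw [integral_add i1 i2, integral_add i4 i5, h₁ Φ hΦ, h₂ Φ hΦ]

lemma Gen.smul {f g : (Fin n → ℝ) → ℂ} (hf : Test f) (r : ℂ) (h : Gen β f g) :
    Gen β (fun θ => r * f θ) (fun θ => r * g θ) := by
  intro Φ hΦ
  have e : ∀ θ, Gam (fun θ => r * f θ) Φ θ = r * Gam f Φ θ := fun θ => by
    rw [Gam_comm, Gam_mul_right (Test.const r) hf, Gam_const_right, Gam_comm]; ring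
  simp only [e, mul_assoc]
  rw [integral_const_mul, integral_const_mul, h Φ hΦ]

lemma Gen.const (r : ℂ) : Gen β (fun _ : Fin n → ℝ => r) (fun _ => 0) := by
  intro Φ hΦ
  have e : ∀ θ, Gam (fun _ => r) Φ θ = 0 := fun θ => by rw [Gam_comm, Gam_const_right]
  simp [e]

/-- The part of `-L p_a` that is not proportional to `n`. -/
noncomputable def epw (β : ℝ) {n : ℕ} (a : ℕ) (θ : Fin n → ℝ) : ℂ :=
  ((1 - β / 2 : ℝ) * a * a : ℂ) * pw (a : ℤ) θ + ((β / 2 : ℝ) * a : ℂ) *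
    ∑ l ∈ Ico 1 a, pw (l : ℤ) θ * pw ((a - l : ℕ) : ℤ) θ

lemma sum_range_pw {a : ℕ} (ha : 1 ≤ a) (θ : Fin n → ℝ) :
    ∑ l ∈ range a, pw (l : ℤ) θ * pw ((a : ℤ) - l) θ
      = n * pw (a : ℤ) θ + ∑ l ∈ Ico 1 a, pw (l : ℤ) θ * pw ((a - l : ℕ) : ℤ) θ := by
  rw [Finset.range_eq_Ico, Finset.sum_eq_sum_Ico_succ_bot (by omega)]
  congr 1
  · simp
  · refine Finset.sum_congr rfl fun l hl => ?_
    rw [Finset.mem_Ico] at hl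
    rw [Nat.cast_sub hl.2.le]

/-- The loop equation, read as the action of the generator on a power sum. -/
lemma Gen.pw (hβ : 0 < β) {a : ℕ} (ha : 1 ≤ a) :
    Gen β (n := n) (pw (a : ℤ)) (fun θ => ((β / 2 : ℝ) * n * a : ℂ) * pw (a : ℤ) θ + epw β a θ) := by
  intro Φ hΦ
  have h := loop_eq hβ a hΦ
  have c3 := hΦ.cont
  have cp : ∀ k : ℤ, Continuous (CBE.pw (n := n) k) := fun k => (Test.pw k).cont
  have i1 : Integrable (fun θ => ∑ i, chr (a : ℤ) (θ i) * pd i Φ θ) (P β n) := by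
    refine Pint hβ (continuous_finsetSum _ fun i _ => ?_)
    exact ((continuous_chr a).comp (continuous_apply i)).mul (hΦ.cont_pd i)
  have i2 : Integrable (fun θ => Complex.I * (a * CBE.pw (a : ℤ) θ + (β / 2 : ℝ) *
        (∑ l ∈ range a, CBE.pw (l : ℤ) θ * CBE.pw ((a : ℤ) - l) θ - a * CBE.pw (a : ℤ) θ)) * Φ θ)
        (P β n) := by
    refine Pint hβ (by fun_prop)
  rw [integral_add i1 i2] at h
  have e1 : ∀ θ, Gam (CBE.pw (a : ℤ)) Φ θ = (a * Complex.I) * ∑ i, chr (a : ℤ) (θ i) * pd i Φ θ := by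
    intro θ
    simp only [Gam, pd_pw, Finset.mul_sum]
    refine Finset.sum_congr rfl fun i _ => ?_
    push_cast; ring
  have e2 : ∀ θ, (((β / 2 : ℝ) * n * a : ℂ) * CBE.pw (a : ℤ) θ + epw β a θ) * Φ θ
      = (-(a * Complex.I)) * (Complex.I * (a * CBE.pw (a : ℤ) θ + (β / 2 : ℝ) *
        (∑ l ∈ range a, CBE.pw (l : ℤ) θ * CBE.pw ((a : ℤ) - l) θ - a * CBE.pw (a : ℤ) θ)) * Φ θ) := by
    intro θ
    rw [sum_range_pw ha, epw]
    generalize ∑ l ∈ Ico 1 a, CBE.pw (l : ℤ) θ * CBE.pw ((a - l : ℕ) : ℤ) θ = S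
    push_cast
    linear_combination (a * (a * CBE.pw (a : ℤ) θ + (β / 2) *
        (n * CBE.pw (a : ℤ) θ + S - a * CBE.pw (a : ℤ) θ)) * Φ θ) * Complex.I_sq
  simp only [e1, e2]
  rw [integral_const_mul, integral_const_mul]
  linear_combination (a * Complex.I) * h

lemma Sp.epw_mul (hβ : 0 < β) {a k : ℕ} (ha : 1 ≤ a) {c : ℝ} {f : (Fin n → ℝ) → ℂ} (h : Sp k c f) :
    Sp (a + k) ((1 + β) * a ^ 2 * c) (fun θ => epw β a θ * f θ) := by
  have e : (fun θ => epw β a θ * f θ) = fun θ => ((1 - β / 2 : ℝ) * a * a : ℂ) * (CBE.pw (a : ℤ) θ * f θ)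
      + ((β / 2 : ℝ) * a : ℂ) * ∑ l ∈ Ico 1 a, CBE.pw (l : ℤ) θ * (CBE.pw ((a - l : ℕ) : ℤ) θ * f θ) := by
    funext θ
    rw [epw, add_mul, mul_assoc _ (CBE.pw (a : ℤ) θ), mul_assoc _ (∑ l ∈ Ico 1 a, _), Finset.sum_mul]
    congr 2
    exact Finset.sum_congr rfl fun l _ => by ring
  rw [e]
  have h1 := (Sp.mulpw a ha h).smul ((1 - β / 2 : ℝ) * a * a : ℂ)
  have h2 : Sp (a + k) ((Ico 1 a).card * c)
      (fun θ => ∑ l ∈ Ico 1 a, CBE.pw (l : ℤ) θ * (CBE.pw ((a - l : ℕ) : ℤ) θ * f θ)) := by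
    refine Sp.sum _ fun l hl => ?_
    rw [Finset.mem_Ico] at hl
    have := Sp.mulpw l hl.1 (Sp.mulpw (a - l) (by omega) h)
    rwa [show l + (a - l + k) = a + k by omega] at this
  refine (h1.add (h2.smul ((β / 2 : ℝ) * a : ℂ))).mono ?_
  have hc := h.nonneg
  have hn1 : ‖((1 - β / 2 : ℝ) * a * a : ℂ)‖ = |1 - β / 2| * a * a := by
    rw [norm_mul, norm_mul, Complex.norm_real, Complex.norm_natCast, Real.norm_eq_abs]
  have hn2 : ‖((β / 2 : ℝ) * a : ℂ)‖ = β / 2 * a := by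
    rw [norm_mul, Complex.norm_real, Complex.norm_natCast, Real.norm_of_nonneg (by positivity)]
  rw [hn1, hn2, Nat.card_Ico]
  have h3 : ((a - 1 : ℕ) : ℝ) ≤ a := by exact_mod_cast Nat.sub_le a 1
  have h4 : |1 - β / 2| ≤ 1 + β / 2 := by rw [abs_le]; constructor <;> linarith
  calc _ ≤ (1 + β / 2) * a * a * c + β / 2 * a * (a * c) := by gcongr
    _ = _ := by ring

/-- On the span of degree-`k` products of power sums, `-L` differs from the scalar `β n k / 2` by
an operator of norm at most `(1 + β) k²` in the coefficient `ℓ¹` norm. -/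
lemma Sp.gen (hβ : 0 < β) {k : ℕ} {c : ℝ} {f : (Fin n → ℝ) → ℂ} (h : Sp k c f) :
    ∃ e, Sp k ((1 + β) * k ^ 2 * c) e ∧
      Gen β f (fun θ => ((β / 2 : ℝ) * n * k : ℂ) * f θ + e θ) := by
  induction h with
  | one =>
    refine ⟨fun _ => 0, by simpa using Sp.zero 0, ?_⟩
    simpa using Gen.const (β := β) (n := n) 1
  | zero k =>
    refine ⟨fun _ => 0, by simpa using Sp.zero k, ?_⟩
    simpa using Gen.const (β := β) (n := n) 0
  | @mulpw k c f a ha h ih =>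
    obtain ⟨e, he, hG⟩ := ih
    refine ⟨fun θ => epw β a θ * f θ + (CBE.pw (a : ℤ) θ * e θ + (-2) * Gam (CBE.pw (a : ℤ)) f θ),
      ?_, ?_⟩
    · have h1 := Sp.epw_mul hβ ha h
      have h2 := Sp.mulpw a ha he
      have h3 := (Sp.gam a ha h).smul (-2)
      refine (h1.add (h2.add h3)).mono ?_
      have hc := h.nonneg
      have : ‖(-2 : ℂ)‖ = 2 := by simp
      rw [this]
      push_cast
      have : 0 ≤ β * (a * k * c) := by positivity
      nlinarith
    · have hc := h.test.cont
      have hc2 := he.test.cont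
      have hcp : Continuous (CBE.pw (n := n) (a : ℤ)) := (Test.pw a).cont
      have hepw : Continuous (epw β (n := n) a) := by
        have cp : ∀ k : ℤ, Continuous (CBE.pw (n := n) k) := fun k => (Test.pw k).cont
        unfold epw; fun_prop
      have := Gen.mul hβ (Test.pw (a : ℤ)) h.test (by fun_prop) (by fun_prop) (Gen.pw hβ ha) hG
      convert this using 2
      push_cast; ring
  | @add k c c' f g h h' ih ih' =>
    obtain ⟨e, he, hG⟩ := ih
    obtain ⟨e', he', hG'⟩ := ih'
    refine ⟨_, (he.add he').mono (le_of_eq (by ring)), ?_⟩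
    have c1 := h.test.cont
    have c2 := h'.test.cont
    have c3 := he.test.cont
    have c4 := he'.test.cont
    have := Gen.add hβ h.test h'.test (by fun_prop) (by fun_prop) hG hG'
    convert this using 2
    ring
  | @smul k c f r h ih =>
    obtain ⟨e, he, hG⟩ := ih
    refine ⟨_, (he.smul r).mono (le_of_eq (by ring)), ?_⟩
    have := Gen.smul h.test r hG
    convert this using 2
    ring
  | mono _ hc ih =>
    obtain ⟨e, he, hG⟩ := ih
    exact ⟨e, he.mono (by gcongr), hG⟩

end gen
end CBE

/-! ### Uniform second moments of power sums -/

namespace CBE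

/-- A log-convex sequence growing at most like `ρ ^ m` has first ratio at most `ρ`. -/
lemma logconvex_ratio {N : ℕ → ℝ} {B ρ : ℝ} (hρ : 0 < ρ) (h0 : ∀ m, 0 ≤ N m)
    (hconv : ∀ m, N (m + 1) ^ 2 ≤ N m * N (m + 2)) (hB : ∀ m, N m ≤ B * ρ ^ m) :
    N 1 ≤ ρ * N 0 := by
  by_contra! hlt
  have h1 : 0 < N 1 := lt_of_le_of_lt (by have := h0 0; positivity) hlt
  have hN0 : 0 < N 0 := by
    refine lt_of_le_of_ne (h0 0) fun h => ?_
    have := hconv 0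
    rw [← h, zero_mul] at this
    nlinarith [this]
  set q : ℝ := N 1 / N 0 with hq
  have hqρ : ρ < q := by rw [hq, lt_div_iff₀ hN0]; exact hlt
  have hq0 : 0 < q := hρ.trans hqρ
  have hstep : ∀ m, 0 < N m ∧ q * N m ≤ N (m + 1) := by
    intro m
    induction m with
    | zero => exact ⟨hN0, by rw [hq, div_mul_cancel₀ _ hN0.ne']⟩
    | succ m ih =>
      obtain ⟨hm, hm'⟩ := ih
      have hpos : 0 < N (m + 1) := lt_of_lt_of_le (by positivity) hm'
      refine ⟨hpos, ?_⟩
      have hc := hconv m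
      have : q * N (m + 1) * N m ≤ N (m + 2) * N m := by nlinarith
      exact le_of_mul_le_mul_right this hm
  have hpow : ∀ m, q ^ m * N 0 ≤ N m := by
    intro m
    induction m with
    | zero => simp
    | succ m ih =>
      calc q ^ (m + 1) * N 0 = q * (q ^ m * N 0) := by ring
        _ ≤ q * N m := by gcongr
        _ ≤ _ := (hstep m).2
  have hqr : 1 < q / ρ := by rwa [one_lt_div hρ]
  obtain ⟨m, hm⟩ := pow_unbounded_of_one_lt (B / N 0) hqr
  have h2 := (hpow m).trans (hB m)
  rw [div_pow, div_lt_div_iff₀ hN0 (by positivity)] at hm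
  linarith

section
variable {β : ℝ} {n : ℕ}

lemma Gam_conj_conj {f g : (Fin n → ℝ) → ℂ} (hf : Test f) (hg : Test g) (θ : Fin n → ℝ) :
    (starRingEnd ℂ) (Gam f (fun θ => (starRingEnd ℂ) (g θ)) θ)
      = Gam g (fun θ => (starRingEnd ℂ) (f θ)) θ := by
  simp only [Gam, map_sum, map_mul, pd_conj hf, pd_conj hg, Complex.conj_conj]
  exact Finset.sum_congr rfl fun i _ => mul_comm _ _

/-- The `L²(P)` pairing. -/
noncomputable def ip (β : ℝ) {n : ℕ} (f g : (Fin n → ℝ) → ℂ) : ℂ :=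
  ∫ θ, f θ * (starRingEnd ℂ) (g θ) ∂(P β n)

lemma ip_conj (f g : (Fin n → ℝ) → ℂ) : (starRingEnd ℂ) (ip β f g) = ip β g f := by
  rw [ip, ← integral_conj, ip]
  congr 1
  funext θ
  simp [mul_comm]

lemma ip_self (f : (Fin n → ℝ) → ℂ) : ip β f f = ((∫ θ, ‖f θ‖ ^ 2 ∂(P β n) : ℝ) : ℂ) := by
  rw [ip, ← integral_complex_ofReal]
  congr 1
  funext θ
  rw [Complex.mul_conj, Complex.normSq_eq_norm_sq]

lemma norm_ip_sq_le (hβ : 0 < β) {f g : (Fin n → ℝ) → ℂ} (hf : Continuous f) (hg : Continuous g) :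
    ‖ip β f g‖ ^ 2 ≤ (∫ θ, ‖f θ‖ ^ 2 ∂(P β n)) * ∫ θ, ‖g θ‖ ^ 2 ∂(P β n) := by
  have h := cauchy_schwarz hβ hf (Complex.continuous_conj.comp hg)
  simp only [Function.comp_apply, RCLike.norm_conj] at h
  refine le_trans ?_ h
  gcongr
  exact norm_integral_le_integral_norm _

lemma Gen.ip (hβ : 0 < β) {f e g : (Fin n → ℝ) → ℂ} {d : ℂ} (hf : Continuous f)
    (he : Continuous e) (hg : Test g)
    (h : Gen β f (fun θ => d * f θ + e θ)) :
    ∫ θ, Gam f (fun θ => (starRingEnd ℂ) (g θ)) θ ∂(P β n) = d * ip β f g + ip β e g := by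
  rw [h _ hg.conj, CBE.ip, CBE.ip, ← integral_const_mul]
  have c1 := hg.conj.cont
  have i1 : Integrable (fun θ => d * (f θ * (starRingEnd ℂ) (g θ))) (P β n) :=
    Pint hβ (by fun_prop)
  have i2 : Integrable (fun θ => e θ * (starRingEnd ℂ) (g θ)) (P β n) := Pint hβ (by fun_prop)
  rw [← integral_add i1 i2]
  congr 1
  funext θ
  ring

/-- Coercivity of `-L` tested on `p_k`: the operator `-L - βnk/2` is symmetric for the `L²(P)`
pairing, so its `L²` norm along the orbit of `p_k` is controlled by its coefficient norm. -/
lemma coercive (hβ : 0 < β) (hn : 1 ≤ n) {k : ℕ} (hk : 1 ≤ k) :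
    (β / 2 * n * k - (1 + β) * k ^ 2) * ∫ θ, ‖pw (n := n) (k : ℤ) θ‖ ^ 2 ∂(P β n)
      ≤ (k : ℝ) ^ 2 * n := by
  have := isProb_P hβ n
  set r : ℝ := (1 + β) * k ^ 2 with hr
  have hr0 : 0 < r := by positivity
  set d : ℝ := β / 2 * n * k with hd
  -- `step` is a choice of the operator `-L - d` on the degree-`k` span, with its coefficient bound.
  have hex : ∀ (c : ℝ) (f : (Fin n → ℝ) → ℂ), ∃ e, Sp k c f → Sp k (r * c) e ∧
      Gen β f (fun θ => (d : ℂ) * f θ + e θ) := by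
    intro c f
    by_cases h : Sp k c f
    · obtain ⟨e, he⟩ := Sp.gen hβ h
      refine ⟨e, fun _ => ?_⟩
      convert he using 4
      rw [hd]; push_cast; ring_nf
    · exact ⟨0, fun h' => absurd h' h⟩
  choose step hstep using hex
  set F : ℕ → (Fin n → ℝ) → ℂ := fun m => Nat.rec (pw (k : ℤ)) (fun m f => step (r ^ m) f) m with hF
  have hF0 : F 0 = pw (k : ℤ) := rfl
  have hFs : ∀ m, F (m + 1) = step (r ^ m) (F m) := fun m => rfl
  have hSp : ∀ m, Sp k (r ^ m) (F m) := by
    intro m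
    induction m with
    | zero => rw [hF0, pow_zero]; exact Sp.pw k hk
    | succ m ih => rw [hFs, pow_succ']; exact (hstep _ _ ih).1
  have hGen : ∀ m, Gen β (F m) (fun θ => (d : ℂ) * F m θ + F (m + 1) θ) := fun m => by
    rw [hFs]; exact (hstep _ _ (hSp m)).2
  have hT : ∀ m, Test (F m) := fun m => (hSp m).test
  have hip : ∀ i j, ∫ θ, Gam (F i) (fun θ => (starRingEnd ℂ) (F j θ)) θ ∂(P β n)
      = d * ip β (F i) (F j) + ip β (F (i + 1)) (F j) := fun i j =>
    Gen.ip hβ (hT i).cont (hT (i + 1)).cont (hT j) (hGen i)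
  have hsymm : ∀ i j, ip β (F (i + 1)) (F j) = ip β (F i) (F (j + 1)) := by
    intro i j
    have h1 := hip i j
    have h2 := congrArg (starRingEnd ℂ) (hip j i)
    rw [← integral_conj] at h2
    simp only [Gam_conj_conj (hT j) (hT i), map_add, map_mul, ip_conj, Complex.conj_ofReal] at h2
    rw [h1] at h2
    exact add_left_cancel h2
  -- Symmetry and Cauchy-Schwarz make `N m = ‖(-L - d)^m p_k‖²` log-convex.
  set N : ℕ → ℝ := fun m => ∫ θ, ‖F m θ‖ ^ 2 ∂(P β n) with hN
  have hN0 : ∀ m, 0 ≤ N m := fun m => integral_nonneg fun θ => by positivity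
  have hconv : ∀ m, N (m + 1) ^ 2 ≤ N m * N (m + 2) := by
    intro m
    have h1 := norm_ip_sq_le hβ (hT m).cont (hT (m + 2)).cont
    rw [← hsymm m (m + 1), ip_self, Complex.norm_real, Real.norm_of_nonneg (hN0 (m + 1))] at h1
    exact h1
  -- The sup norm on the span costs only the factor `n ^ k`, which is independent of `m`.
  have hB : ∀ m, N m ≤ ((n : ℝ) ^ k) ^ 2 * (r ^ 2) ^ m := by
    intro m
    have : ∀ θ, ‖F m θ‖ ^ 2 ≤ ((n : ℝ) ^ k) ^ 2 * (r ^ 2) ^ m := fun θ => by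
      have := (hSp m).bound hn θ
      calc ‖F m θ‖ ^ 2 ≤ (r ^ m * (n : ℝ) ^ k) ^ 2 := by gcongr
        _ = _ := by ring
    calc N m ≤ ∫ _, ((n : ℝ) ^ k) ^ 2 * (r ^ 2) ^ m ∂(P β n) := by
          refine integral_mono (Pint hβ ((hT m).cont.norm.pow 2)) (integrable_const _) this
      _ = _ := by simp
  have hratio := logconvex_ratio (by positivity) hN0 hconv hB
  have h1 := norm_ip_sq_le hβ (hT 1).cont (hT 0).cont
  have h2 : ‖ip β (F 1) (F 0)‖ ≤ r * N 0 := by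
    refine abs_le_of_sq_le_sq' ?_ (mul_nonneg hr0.le (hN0 0)) |>.2
    refine h1.trans ?_
    calc N 1 * N 0 ≤ (r ^ 2 * N 0) * N 0 := mul_le_mul_of_nonneg_right hratio (hN0 0)
      _ = _ := by ring
  have h3 := hip 0 0
  rw [hF0, ← hF0] at h3
  -- `Γ(p_k, conj p_k) = k² n` is constant.
  have h4 : ∫ θ, Gam (F 0) (fun θ => (starRingEnd ℂ) (F 0 θ)) θ ∂(P β n) = ((k : ℝ) ^ 2 * n : ℝ) := by
    have : ∀ θ, Gam (F 0) (fun θ => (starRingEnd ℂ) (F 0 θ)) θ = ((k : ℝ) ^ 2 * n : ℝ) := fun θ => by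
      rw [hF0]
      simp only [conj_pw]
      have e : (fun θ : Fin n → ℝ => pw (-(k : ℤ)) θ) = pw (-(k : ℤ)) := rfl
      rw [e, Gam_pw_pw]
      simp [pow_two]
    simp [this]
  rw [h4, ip_self] at h3
  have h5 := congrArg Complex.re h3
  simp only [Complex.ofReal_re, Complex.add_re, Complex.mul_re, Complex.ofReal_im, mul_zero,
    sub_zero] at h5
  have h6 := (Complex.abs_re_le_norm (ip β (F 1) (F 0))).trans h2
  rw [abs_le] at h6
  have h7 : N 0 = ∫ θ, ‖pw (n := n) (k : ℤ) θ‖ ^ 2 ∂(P β n) := rfl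
  rw [← h7]
  have h8 : (∫ θ, ‖F 0 θ‖ ^ 2 ∂(P β n)) = N 0 := rfl
  rw [h8] at h5
  have h9 : ip β (F (0 + 1)) (F 0) = ip β (F 1) (F 0) := rfl
  rw [h9] at h5
  nlinarith [h6.1]

/-- The constant in the uniform second moment bound. -/
noncomputable def Cβ (β : ℝ) : ℝ := 4 * (1 + β) / β

/-- For `n` large compared with `k` this is coercivity; otherwise `n ≤ C k` and the trivial bound
`|p_k| ≤ n` suffices. -/
lemma second_moment_nat (hβ : 0 < β) (hn : 1 ≤ n) {k : ℕ} (hk : 1 ≤ k) :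
    ∫ θ, ‖pw (n := n) (k : ℤ) θ‖ ^ 2 ∂(P β n) ≤ (Cβ β * k) ^ 2 := by
  have := isProb_P hβ n
  have hn' : (1 : ℝ) ≤ n := by exact_mod_cast hn
  have hk' : (1 : ℝ) ≤ k := by exact_mod_cast hk
  have hC : 0 < Cβ β := by unfold Cβ; positivity
  have hCβ : Cβ β * β = 4 * (1 + β) := by unfold Cβ; field_simp
  set N := ∫ θ, ‖pw (n := n) (k : ℤ) θ‖ ^ 2 ∂(P β n) with hN
  rcases le_or_gt ((1 + β) * k) (β / 4 * n) with h | h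
  · have h1 := coercive hβ hn hk
    rw [← hN] at h1
    have hN0 : 0 ≤ N := integral_nonneg fun θ => by positivity
    have h2 : (β / 4 * n * k) * N ≤ (k : ℝ) ^ 2 * n := by
      refine le_trans (mul_le_mul_of_nonneg_right ?_ hN0) h1
      nlinarith
    have h3 : β / 4 * N ≤ k := by
      have : (n * k : ℝ) * (β / 4 * N) ≤ (n * k : ℝ) * k := by nlinarith
      exact le_of_mul_le_mul_left this (by positivity)
    have h4 : β * N ≤ 4 * k := by linarith
    have h5 : β * N ≤ β * (Cβ β * k) ^ 2 := by
      refine h4.trans ?_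
      have e : β * (Cβ β * k) ^ 2 = (Cβ β * β) * Cβ β * k ^ 2 := by ring
      have hC1 : 1 ≤ (1 + β) * Cβ β := by
        have : 4 ≤ Cβ β := by
          unfold Cβ; rw [le_div_iff₀ hβ]; linarith
        nlinarith
      rw [e, hCβ]
      have : (k : ℝ) ≤ k ^ 2 := by nlinarith
      nlinarith
    exact le_of_mul_le_mul_left h5 hβ
  · have h1 : (n : ℝ) ≤ Cβ β * k := by
      unfold Cβ
      rw [div_mul_eq_mul_div, le_div_iff₀ hβ]
      linarith
    calc N ≤ ∫ _, (n : ℝ) ^ 2 ∂(P β n) := by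
          refine integral_mono (Pint hβ ((Test.pw (k : ℤ)).cont.norm.pow 2)) (integrable_const _)
            fun θ => ?_
          simp only
          gcongr
          exact norm_pw_le _ θ
      _ = (n : ℝ) ^ 2 := by simp
      _ ≤ _ := by gcongr

lemma second_moment (hβ : 0 < β) (hn : 1 ≤ n) {k : ℤ} (hk : k ≠ 0) :
    ∫ θ, ‖pw (n := n) k θ‖ ^ 2 ∂(P β n) ≤ (Cβ β * |(k : ℝ)|) ^ 2 := by
  have hnat : 1 ≤ k.natAbs := Int.natAbs_pos.2 hk
  have h := second_moment_nat (n := n) hβ hn hnat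
  have e : ∀ θ : Fin n → ℝ, ‖pw ((k.natAbs : ℕ) : ℤ) θ‖ = ‖pw k θ‖ := by
    intro θ
    rcases Int.natAbs_eq k with h | h
    · rw [← h]
    · conv_rhs => rw [h, ← conj_pw, RCLike.norm_conj]
  simp only [e] at h
  have : ((k.natAbs : ℕ) : ℝ) = |(k : ℝ)| := by simp [Nat.cast_natAbs]
  rwa [this] at h

lemma Cβ_nonneg (hβ : 0 < β) : 0 ≤ Cβ β := by unfold Cβ; positivity

lemma product_moment (hβ : 0 < β) (hn : 1 ≤ n) {j k : ℤ} (hj : j ≠ 0) (hk : k ≠ 0) :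
    ∫ θ, ‖pw (n := n) j θ * pw k θ‖ ∂(P β n) ≤ Cβ β ^ 2 * (|(j : ℝ)| * |(k : ℝ)|) := by
  have hC := Cβ_nonneg hβ
  refine abs_le_of_sq_le_sq' ?_ (by positivity) |>.2
  refine (cauchy_schwarz hβ (Test.pw j).cont (Test.pw k).cont).trans ?_
  calc _ ≤ (Cβ β * |(j : ℝ)|) ^ 2 * (Cβ β * |(k : ℝ)|) ^ 2 := by
        refine mul_le_mul (second_moment hβ hn hj) (second_moment hβ hn hk)
          (integral_nonneg fun θ => by positivity) (by positivity)
    _ = _ := by ring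

lemma first_moment (hβ : 0 < β) (hn : 1 ≤ n) {k : ℤ} (hk : k ≠ 0) :
    ∫ θ, ‖pw (n := n) k θ‖ ∂(P β n) ≤ Cβ β * |(k : ℝ)| := by
  have := isProb_P hβ n
  have hC := Cβ_nonneg hβ
  refine abs_le_of_sq_le_sq' ?_ (by positivity) |>.2
  have h := cauchy_schwarz (n := n) hβ (Test.pw k).cont (Test.const 1).cont
  simp only [mul_one, norm_one, one_pow, integral_const, probReal_univ, smul_eq_mul] at h
  exact h.trans (second_moment hβ hn hk)

end
end CBE

/-! ### The loop equation tested on exponentials of a linear statistic -/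

namespace CBE

/-- `G` is a centred real function with absolutely convergent Fourier expansion
`G = ∑ c_k e^{ik·}`, where moreover `∑ k² |c_k| < ∞`. -/
structure FS (c : ℤ → ℂ) (G : ℝ → ℝ) : Prop where
  summ : Summable fun k : ℤ => (k : ℝ) ^ 2 * ‖c k‖
  conj : ∀ k, (starRingEnd ℂ) (c k) = c (-k)
  zero : c 0 = 0
  hasSum : ∀ x, HasSum (fun k => c k * chr k x) (G x : ℂ)

/-- The linear statistic `S(θ) = ∑_μ G(θ_μ)`. -/
noncomputable def lin (G : ℝ → ℝ) {n : ℕ} (θ : Fin n → ℝ) : ℝ := ∑ μ, G (θ μ)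

/-- The derivative of `∑ c_k e^{ikx}`, differentiated term by term. -/
noncomputable def dser (c : ℤ → ℂ) (x : ℝ) : ℂ := ∑' k : ℤ, (c k * (k * Complex.I)) * chr k x

/-- The exponential `e^{itS}` of the linear statistic. -/
noncomputable def ex (G : ℝ → ℝ) (t : ℝ) {n : ℕ} (θ : Fin n → ℝ) : ℂ :=
  Complex.exp ((t * lin G θ : ℝ) * Complex.I)

section clt
variable {c : ℤ → ℂ} {G : ℝ → ℝ} {β : ℝ} {n : ℕ}

lemma one_le_abs_int {k : ℤ} (hk : k ≠ 0) : (1 : ℝ) ≤ |(k : ℝ)| := by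
  exact_mod_cast Int.one_le_abs hk

lemma FS.summ1 (h : FS c G) : Summable fun k : ℤ => |(k : ℝ)| * ‖c k‖ := by
  refine Summable.of_nonneg_of_le (fun k => by positivity) (fun k => ?_) h.summ
  by_cases hk : k = 0
  · simp [hk]
  · have := one_le_abs_int hk
    rw [← sq_abs]
    gcongr
    nlinarith

lemma FS.summ0 (h : FS c G) : Summable fun k : ℤ => ‖c k‖ := by
  refine Summable.of_nonneg_of_le (fun k => by positivity) (fun k => ?_) h.summ1
  by_cases hk : k = 0
  · simp [hk, h.zero]
  · exact le_mul_of_one_le_left (norm_nonneg _) (one_le_abs_int hk)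

lemma FS.norm_neg (h : FS c G) (k : ℤ) : ‖c (-k)‖ = ‖c k‖ := by
  rw [← h.conj, RCLike.norm_conj]

lemma FS.summ_d (h : FS c G) : Summable fun k : ℤ => ‖c k * (k * Complex.I)‖ := by
  refine h.summ1.congr fun k => ?_
  simp [mul_comm]

lemma FS.hasDerivAt (h : FS c G) (x : ℝ) : HasDerivAt (fun x => (G x : ℂ)) (dser c x) x := by
  have e : (fun x => (G x : ℂ)) = fun x => ∑' k, c k * chr k x := by
    funext x; exact (h.hasSum x).tsum_eq.symm
  rw [e]
  have h0 : Summable fun k => c k * chr k 0 := (h.hasSum 0).summable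
  refine hasDerivAt_tsum (g := fun k x => c k * chr k x)
    (g' := fun k x => (c k * (k * Complex.I)) * chr k x) h.summ_d (fun k y => ?_)
    (fun k y => ?_) h0 x
  · exact ((hasDerivAt_chr k y).const_mul (c k)).congr_deriv (by ring)
  · simp

lemma FS.continuous_dser (h : FS c G) : Continuous (dser c) := by
  refine continuous_tsum (fun k => continuous_const.mul (continuous_chr k)) h.summ_d fun k x => ?_
  simp

lemma FS.contDiff (h : FS c G) : ContDiff ℝ 1 (fun x => (G x : ℂ)) := by
  rw [contDiff_one_iff_deriv]
  refine ⟨fun x => (h.hasDerivAt x).differentiableAt, ?_⟩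
  have : deriv (fun x => (G x : ℂ)) = dser c := funext fun x => (h.hasDerivAt x).deriv
  rw [this]
  exact h.continuous_dser

lemma FS.per (h : FS c G) (x : ℝ) : (G (x + 2 * Real.pi) : ℂ) = G x := by
  rw [← (h.hasSum _).tsum_eq, ← (h.hasSum x).tsum_eq]
  simp only [chr_periodic]

lemma FS.test_lin (h : FS c G) : Test (fun θ : Fin n → ℝ => (lin G θ : ℂ)) := by
  have := Test.sum (n := n) univ fun μ _ => Test.coord h.contDiff h.per μ
  simpa [lin] using this

lemma FS.pd_lin (h : FS c G) (i : Fin n) (θ : Fin n → ℝ) :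
    pd i (fun θ : Fin n → ℝ => (lin G θ : ℂ)) θ = dser c (θ i) := by
  have := pd_linstat h.contDiff h.per h.hasDerivAt i θ
  simpa [lin] using this

lemma FS.continuous_lin (h : FS c G) : Continuous (fun θ : Fin n → ℝ => lin G θ) := by
  have := Complex.continuous_re.comp (h.test_lin (n := n)).cont
  simpa [Function.comp_def] using this

lemma ex_eq (t : ℝ) : (ex G t : (Fin n → ℝ) → ℂ)
    = fun θ => Complex.exp ((t * Complex.I) * (lin G θ : ℂ)) := by
  funext θ
  rw [ex]
  congr 1
  push_cast
  ring

@[simp] lemma norm_ex (t : ℝ) (θ : Fin n → ℝ) : ‖ex G t θ‖ = 1 := Complex.norm_exp_ofReal_mul_I _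

lemma conj_ex (t : ℝ) (θ : Fin n → ℝ) : (starRingEnd ℂ) (ex G t θ) = ex G (-t) θ := by
  simp only [ex, ← Complex.exp_conj, map_mul, Complex.conj_ofReal, Complex.conj_I]
  push_cast; ring_nf

lemma FS.test_ex (h : FS c G) (t : ℝ) : Test (ex G t : (Fin n → ℝ) → ℂ) := by
  rw [ex_eq]
  have := ((Test.const (n := n) (t * Complex.I)).mul h.test_lin)
  exact ⟨this.smooth.cexp, fun θ i => congrArg Complex.exp (this.per θ i)⟩

lemma FS.pd_ex (h : FS c G) (t : ℝ) (i : Fin n) (θ : Fin n → ℝ) :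
    pd i (ex G t) θ = t * Complex.I * dser c (θ i) * ex G t θ := by
  have hT := ((Test.const (n := n) (t * Complex.I)).mul h.test_lin)
  have h1 := pd_mul (Test.const (n := n) (t * Complex.I)) h.test_lin i θ
  rw [pd_const, zero_mul, add_zero, h.pd_lin] at h1
  have h2 := ((hT.diff θ).hasFDerivAt.cexp).fderiv
  rw [ex_eq, ← h1]
  simp only [pd]
  rw [h2]
  simp [mul_comm]

lemma FS.hasSum_lin (h : FS c G) (θ : Fin n → ℝ) :
    HasSum (fun k => c k * pw k θ) (lin G θ : ℂ) := by
  have := hasSum_sum (s := univ) fun μ (_ : μ ∈ univ) => h.hasSum (θ μ)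
  simpa [pw, Finset.mul_sum, lin] using this

lemma FS.abs_lin_le (h : FS c G) (θ : Fin n → ℝ) : |lin G θ| ≤ (∑' k, ‖c k‖) * n := by
  have h1 := tsum_of_norm_bounded (f := fun k => c k * pw k θ) ((h.summ0.hasSum).mul_right (n : ℝ))
    fun k => by
      rw [norm_mul]; gcongr; exact norm_pw_le k θ
  rwa [(h.hasSum_lin θ).tsum_eq, Complex.norm_real, Real.norm_eq_abs] at h1

lemma FS.sum_chr_dser (h : FS c G) (k : ℤ) (θ : Fin n → ℝ) :
    HasSum (fun m => (c m * (m * Complex.I)) * pw (m + k) θ) (∑ i, chr k (θ i) * dser c (θ i)) := by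
  have h1 : ∀ x, HasSum (fun m => (c m * (m * Complex.I)) * chr (m + k) x) (chr k x * dser c x) := by
    intro x
    have : Summable fun m : ℤ => (c m * (m * Complex.I)) * chr m x :=
      Summable.of_norm (by simpa using h.summ_d)
    have e : (fun m : ℤ => (c m * (m * Complex.I)) * chr (m + k) x)
        = fun m : ℤ => chr k x * ((c m * (m * Complex.I)) * chr m x) := by
      funext m; rw [chr_add]; ring
    rw [e]
    exact this.hasSum.mul_left (chr k x)
  have := hasSum_sum (s := univ) fun μ (_ : μ ∈ univ) => h1 (θ μ)
  simpa [pw, Finset.mul_sum] using this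

/-- The mixed moment `E[p_k e^{itS}]`. -/
noncomputable def mom (β : ℝ) (n : ℕ) (G : ℝ → ℝ) (t : ℝ) (k : ℤ) : ℂ :=
  ∫ θ, pw (n := n) k θ * ex G t θ ∂(P β n)

/-- The characteristic function `E[e^{itS}]`. -/
noncomputable def phi (β : ℝ) (n : ℕ) (G : ℝ → ℝ) (t : ℝ) : ℂ :=
  ∫ θ : Fin n → ℝ, ex G t θ ∂(P β n)

lemma mom_zero (t : ℝ) : mom β n G t 0 = n * phi β n G t := by
  simp only [mom, phi, pw_zero, integral_const_mul]

lemma conj_mom (t : ℝ) (k : ℤ) : (starRingEnd ℂ) (mom β n G t k) = mom β n G (-t) (-k) := by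
  rw [mom, ← integral_conj, mom]
  simp only [map_mul, conj_pw, conj_ex]

lemma conj_phi (t : ℝ) : (starRingEnd ℂ) (phi β n G t) = phi β n G (-t) := by
  rw [phi, ← integral_conj, phi]
  simp only [conj_ex]

lemma norm_phi_le (hβ : 0 < β) (t : ℝ) : ‖phi β n G t‖ ≤ 1 := by
  have := isProb_P hβ n
  have := norm_integral_le_of_norm_le_const (μ := P β n) (f := ex G t) (C := 1)
    (Eventually.of_forall fun θ => by simp)
  simpa [phi] using this

lemma norm_mom_le (hβ : 0 < β) (hn : 1 ≤ n) (t : ℝ) {k : ℤ} (hk : k ≠ 0) :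
    ‖mom β n G t k‖ ≤ Cβ β * |(k : ℝ)| := by
  refine (norm_integral_le_integral_norm _).trans ?_
  simpa using first_moment (n := n) hβ hn hk

/-- Termwise integration of a series of power sums against `e^{itS}`. -/
lemma hasSum_mom (hβ : 0 < β) (h : FS c G) (t : ℝ) {w : ℤ → ℂ} (hw : Summable fun m => ‖w m‖)
    (k : ℤ) {F : (Fin n → ℝ) → ℂ} (hF : ∀ θ, HasSum (fun m => w m * pw (m + k) θ) (F θ)) :
    HasSum (fun m => w m * mom β n G t (m + k)) (∫ θ, F θ * ex G t θ ∂(P β n)) := by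
  have := isProb_P hβ n
  have hc : ∀ m, Continuous fun θ : Fin n → ℝ => w m * pw (m + k) θ * ex G t θ := fun m =>
    (continuous_const.mul (Test.pw _).cont).mul (h.test_ex t).cont
  have h1 := hasSum_integral_of_summable_integral_norm (μ := P β n)
    (F := fun m θ => w m * pw (m + k) θ * ex G t θ) (fun m => Pint hβ (hc m)) (by
      refine Summable.of_nonneg_of_le (fun m => integral_nonneg fun θ => norm_nonneg _)
        (fun m => ?_) (hw.mul_right (n : ℝ))
      calc _ ≤ ∫ _, ‖w m‖ * n ∂(P β n) := by
            refine integral_mono (Pint hβ (hc m).norm) (integrable_const _) fun θ => ?_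
            simp only [norm_mul, norm_ex, mul_one]
            gcongr
            exact norm_pw_le _ θ
        _ = _ := by simp)
  have e1 : (fun m => w m * mom β n G t (m + k))
      = fun m => ∫ θ, w m * pw (m + k) θ * ex G t θ ∂(P β n) := by
    funext m
    rw [mom, ← integral_const_mul]
    simp only [mul_assoc]
  have e2 : (fun θ => F θ * ex G t θ) = fun θ => ∑' m, w m * pw (m + k) θ * ex G t θ := by
    funext θ
    exact ((hF θ).mul_right _).tsum_eq.symm
  rw [e1, e2]
  exact h1

/-- The loop equation tested on `e^{itS}`: up to `O(1/n)`, `E[p_k e^{itS}]` is a multiple of the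
characteristic function. -/
lemma mom_bound (hβ : 0 < β) (h : FS c G) (t : ℝ) {k : ℕ} (hk : 1 ≤ k) :
    ∃ D : ℝ, ∀ n : ℕ, 1 ≤ n →
      n * ‖mom β n G t k - (2 * Complex.I * k * t * c (-k) / β) * phi β n G t‖ ≤ D := by
  have hC := Cβ_nonneg hβ
  have hsum : Summable fun m : ℤ => |(m : ℝ)| * ‖c m‖ * (Cβ β * |((m + k : ℤ) : ℝ)|) := by
    have := ((h.summ.add (h.summ1.mul_left (k : ℝ))).mul_left (Cβ β))
    refine Summable.of_nonneg_of_le (fun m => by positivity) (fun m => ?_) this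
    have h1 : |((m + k : ℤ) : ℝ)| ≤ |(m : ℝ)| + k := by
      push_cast
      exact (abs_add_le _ _).trans (by simp)
    calc _ ≤ |(m : ℝ)| * ‖c m‖ * (Cβ β * (|(m : ℝ)| + k)) := by gcongr
      _ = _ := by rw [← sq_abs]; ring
  refine ⟨2 / β * (|t| * (∑' m : ℤ, |(m : ℝ)| * ‖c m‖ * (Cβ β * |((m + k : ℤ) : ℝ)|))
    + k * |1 - β / 2| * (Cβ β * k)
    + β / 2 * ∑ l ∈ Ico 1 k, Cβ β ^ 2 * ((l : ℝ) * ((k - l : ℕ) : ℝ))), fun n hn => ?_⟩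
  have hΦ := h.test_ex (n := n) t
  have hk0 : (k : ℤ) ≠ 0 := by omega
  have hloop := loop_eq (n := n) hβ k hΦ
  have e1 : ∀ θ : Fin n → ℝ, (∑ i, chr (k : ℤ) (θ i) * pd i (ex G t) θ +
      Complex.I * (k * pw (k : ℤ) θ + (β / 2 : ℝ) *
        (∑ l ∈ range k, pw (l : ℤ) θ * pw ((k : ℤ) - l) θ - k * pw (k : ℤ) θ)) * ex G t θ)
      = t * Complex.I * ((∑ i, chr (k : ℤ) (θ i) * dser c (θ i)) * ex G t θ)
        + Complex.I * (k * (1 - β / 2) + β / 2 * n) * (pw (k : ℤ) θ * ex G t θ)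
        + Complex.I * (β / 2) * ∑ l ∈ Ico 1 k,
          (pw (l : ℤ) θ * pw ((k - l : ℕ) : ℤ) θ * ex G t θ) := by
    intro θ
    rw [sum_range_pw hk, ← Finset.sum_mul]
    simp only [h.pd_ex]
    have : ∑ i, chr (k : ℤ) (θ i) * (t * Complex.I * dser c (θ i) * ex G t θ)
        = t * Complex.I * ((∑ i, chr (k : ℤ) (θ i) * dser c (θ i)) * ex G t θ) := by
      rw [Finset.sum_mul, Finset.mul_sum]
      exact Finset.sum_congr rfl fun i _ => by ring
    rw [this]
    push_cast
    ring
  simp only [e1] at hloop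
  have cd := h.continuous_dser
  have ce := hΦ.cont
  have cp : ∀ j : ℤ, Continuous fun θ : Fin n → ℝ => pw j θ := fun j => (Test.pw j).cont
  have cc := continuous_chr (k : ℤ)
  have i1 : Integrable (fun θ : Fin n → ℝ =>
      t * Complex.I * ((∑ i, chr (k : ℤ) (θ i) * dser c (θ i)) * ex G t θ)) (P β n) :=
    Pint hβ (by fun_prop)
  have i2 : Integrable (fun θ : Fin n → ℝ =>
      Complex.I * (k * (1 - β / 2) + β / 2 * n) * (pw (k : ℤ) θ * ex G t θ)) (P β n) :=
    Pint hβ (by have := cp k; fun_prop)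
  have i3' : ∀ l ∈ Ico 1 k, Integrable (fun θ : Fin n → ℝ =>
      (pw (l : ℤ) θ * pw ((k - l : ℕ) : ℤ) θ * ex G t θ)) (P β n) := fun l _ =>
    Pint hβ (((cp _).mul (cp _)).mul ce)
  have i3 : Integrable (fun θ : Fin n → ℝ => Complex.I * (β / 2) * ∑ l ∈ Ico 1 k,
      (pw (l : ℤ) θ * pw ((k - l : ℕ) : ℤ) θ * ex G t θ)) (P β n) :=
    (integrable_finsetSum _ i3').const_mul _
  have i12 : Integrable (fun θ : Fin n → ℝ =>
      t * Complex.I * ((∑ i, chr (k : ℤ) (θ i) * dser c (θ i)) * ex G t θ)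
      + Complex.I * (k * (1 - β / 2) + β / 2 * n) * (pw (k : ℤ) θ * ex G t θ)) (P β n) :=
    i1.add i2
  rw [integral_add i12 i3, integral_add i1 i2, integral_const_mul, integral_const_mul,
    integral_const_mul, integral_finsetSum _ i3', ← mom] at hloop
  -- The series term: the frequency `m = -k` gives the multiple of `n φ`, the others are bounded.
  have hs := hasSum_mom (n := n) hβ h t h.summ_d k (fun θ => h.sum_chr_dser k θ)
  set A := ∫ θ : Fin n → ℝ, (∑ i, chr (k : ℤ) (θ i) * dser c (θ i)) * ex G t θ ∂(P β n) with hA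
  set B := ∑ l ∈ Ico 1 k,
    ∫ θ : Fin n → ℝ, pw (l : ℤ) θ * pw ((k - l : ℕ) : ℤ) θ * ex G t θ ∂(P β n) with hB
  have hAb : ‖A + k * Complex.I * c (-k) * (n * phi β n G t)‖
      ≤ ∑' m : ℤ, |(m : ℝ)| * ‖c m‖ * (Cβ β * |((m + k : ℤ) : ℝ)|) := by
    have h1 := hs.summable.tsum_eq_add_tsum_ite (-(k : ℤ))
    rw [hs.tsum_eq, neg_add_cancel, mom_zero] at h1
    have h2 : A + k * Complex.I * c (-k) * (n * phi β n G t)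
        = ∑' m : ℤ, if m = -(k : ℤ) then 0
          else c m * (m * Complex.I) * mom β n G t (m + k) := by
      rw [h1]; push_cast; ring
    rw [h2]
    refine tsum_of_norm_bounded hsum.hasSum fun m => ?_
    split_ifs with hm
    · simp only [norm_zero]; positivity
    · have := norm_mom_le (n := n) (G := G) hβ hn t (k := m + k) (by omega)
      rw [norm_mul, norm_mul, norm_mul, Complex.norm_I, mul_one, mul_comm ‖c m‖]
      have e : ‖(m : ℂ)‖ = |(m : ℝ)| := by simp
      rw [e]
      gcongr
  have hBb : ‖B‖ ≤ ∑ l ∈ Ico 1 k, Cβ β ^ 2 * ((l : ℝ) * ((k - l : ℕ) : ℝ)) := by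
    refine norm_sum_le_of_le _ fun l hl => ?_
    rw [Finset.mem_Ico] at hl
    refine (norm_integral_le_integral_norm _).trans ?_
    have := product_moment (n := n) (j := (l : ℤ)) (k := ((k - l : ℕ) : ℤ)) hβ hn
      (by omega) (by omega)
    simpa only [norm_mul, norm_ex, mul_one, Int.cast_natCast, Nat.abs_cast] using this
  have hMb := norm_mom_le (n := n) (G := G) hβ hn t hk0
  have hMb' : ‖mom β n G t k‖ ≤ Cβ β * k := by simpa using hMb
  set M := mom β n G t k with hM
  have hβc : (β : ℂ) ≠ 0 := by exact_mod_cast hβ.ne'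
  have key : (n : ℂ) * (M - (2 * Complex.I * k * t * c (-k) / β) * phi β n G t)
      = -(2 / β) * (t * (A + k * Complex.I * c (-k) * (n * phi β n G t))
        + k * (1 - β / 2) * M + β / 2 * B) := by
    have h3 : t * A + (k * (1 - β / 2) + β / 2 * n) * M + β / 2 * B = 0 := by
      have : Complex.I * (t * A + (k * (1 - β / 2) + β / 2 * n) * M + β / 2 * B) = 0 := by
        rw [← hloop]; ring
      exact (mul_eq_zero.1 this).resolve_left Complex.I_ne_zero
    have h4 : t * A = -((k * (1 - β / 2) + β / 2 * n) * M + β / 2 * B) := by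
      linear_combination h3
    rw [mul_add (t : ℂ), h4]
    field_simp
    ring
  have hkey := congrArg norm key
  rw [norm_mul, Complex.norm_natCast] at hkey
  rw [hkey, norm_mul, norm_neg]
  have n1 : ‖(2 / β : ℂ)‖ = 2 / β := by
    rw [norm_div, Complex.norm_real, Real.norm_of_nonneg hβ.le]; simp
  have n2 : ‖(1 - β / 2 : ℂ)‖ = |1 - β / 2| := by
    rw [← Real.norm_eq_abs, ← Complex.norm_real]; push_cast; rfl
  have n3 : ‖(β / 2 : ℂ)‖ = β / 2 := by
    rw [norm_div, Complex.norm_real, Real.norm_of_nonneg hβ.le]; simp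
  rw [n1]
  refine mul_le_mul_of_nonneg_left ?_ (by positivity)
  refine norm_add₃_le.trans ?_
  rw [norm_mul, norm_mul, norm_mul, norm_mul, n2, n3, Complex.norm_real, Complex.norm_natCast,
    Real.norm_eq_abs]
  gcongr

end clt
end CBE

/-! ### Convergence of the characteristic function -/

namespace CBE

section limit
variable {c : ℤ → ℂ} {G : ℝ → ℝ} {β : ℝ} {n : ℕ}

/-- The defect `E[p_k e^{itS}] - (2i|k|t c_{-k}/β) E[e^{itS}]` in the asymptotic loop equation. -/
noncomputable def defect (c : ℤ → ℂ) (β : ℝ) (n : ℕ) (G : ℝ → ℝ) (t : ℝ) (k : ℤ) : ℂ :=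
  mom β n G t k - (2 * Complex.I * (|(k : ℝ)| : ℝ) * t * c (-k) / β) * phi β n G t

/-- The limiting variance, in terms of complex Fourier coefficients. -/
noncomputable def vari (c : ℤ → ℂ) (β : ℝ) : ℝ := (2 / β) * ∑' k : ℤ, |(k : ℝ)| * ‖c k‖ ^ 2

lemma defect_tendsto_nat (hβ : 0 < β) (h : FS c G) (t : ℝ) {k : ℕ} (hk : 1 ≤ k) :
    Tendsto (fun n => defect c β n G t k) atTop (𝓝 0) := by
  obtain ⟨D, hD⟩ := mom_bound hβ h t hk
  have h1 : Tendsto (fun n : ℕ => D / n) atTop (𝓝 0) := tendsto_const_div_atTop_nhds_zero_nat D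
  refine squeeze_zero_norm' ?_ h1
  filter_upwards [eventually_ge_atTop 1] with n hn
  have hn' : (0 : ℝ) < n := by exact_mod_cast hn
  rw [le_div_iff₀ hn', mul_comm]
  have := hD n hn
  simpa [defect] using this

lemma conj_defect (h : FS c G) (t : ℝ) (k : ℤ) :
    (starRingEnd ℂ) (defect c β n G t k) = defect c β n G (-t) (-k) := by
  simp only [defect, map_sub, map_mul, map_div₀, conj_mom, conj_phi, Complex.conj_ofReal,
    Complex.conj_I, h.conj, map_ofNat]
  push_cast
  simp

lemma defect_tendsto (hβ : 0 < β) (h : FS c G) (t : ℝ) {k : ℤ} (hk : k ≠ 0) :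
    Tendsto (fun n => defect c β n G t k) atTop (𝓝 0) := by
  obtain ⟨m, rfl | rfl⟩ := Int.eq_nat_or_neg k
  · exact defect_tendsto_nat hβ h t (by omega)
  · have h1 := defect_tendsto_nat hβ h (-t) (k := m) (by omega)
    have h2 := (Complex.continuous_conj.tendsto 0).comp h1
    simpa [Function.comp_def, conj_defect h] using h2

lemma norm_defect_le (hβ : 0 < β) (h : FS c G) (hn : 1 ≤ n) (t : ℝ) {k : ℤ} (hk : k ≠ 0) :
    ‖defect c β n G t k‖ ≤ |(k : ℝ)| * (Cβ β + 2 / β * |t| * ∑' k, ‖c k‖) := by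
  refine (norm_sub_le _ _).trans ?_
  have h1 := norm_mom_le (n := n) (G := G) hβ hn t hk
  have h2 := norm_phi_le (n := n) (G := G) hβ t
  have h3 : ‖c k‖ ≤ ∑' k, ‖c k‖ := h.summ0.le_tsum k fun _ _ => norm_nonneg _
  have h4 : ‖2 * Complex.I * (|(k : ℝ)| : ℝ) * t * c (-k) / β‖ = 2 * |(k : ℝ)| * |t| * ‖c k‖ / β := by
    simp [h.norm_neg, abs_of_pos hβ]
  rw [norm_mul, h4]
  calc _ ≤ Cβ β * |(k : ℝ)| + 2 * |(k : ℝ)| * |t| * (∑' k, ‖c k‖) / β * 1 := by gcongr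
    _ = _ := by ring

lemma summ_sq (h : FS c G) : Summable fun k : ℤ => |(k : ℝ)| * ‖c k‖ ^ 2 := by
  refine Summable.of_nonneg_of_le (fun k => by positivity) (fun k => ?_)
    (h.summ1.mul_right (∑' k, ‖c k‖))
  have h3 : ‖c k‖ ≤ ∑' k, ‖c k‖ := h.summ0.le_tsum k fun _ _ => norm_nonneg _
  rw [pow_two, ← mul_assoc]
  gcongr

/-- The derivative `E[iS e^{itS}]` of the characteristic function. -/
noncomputable def dphi (β : ℝ) (n : ℕ) (G : ℝ → ℝ) (t : ℝ) : ℂ :=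
  ∫ θ : Fin n → ℝ, Complex.I * lin G θ * ex G t θ ∂(P β n)

lemma hasDerivAt_ex (t : ℝ) (θ : Fin n → ℝ) :
    HasDerivAt (fun t => ex G t θ) (Complex.I * lin G θ * ex G t θ) t := by
  have h1 : HasDerivAt (fun t : ℝ => ((t * lin G θ : ℝ) : ℂ) * Complex.I)
      (lin G θ * Complex.I) t := by
    have := (((hasDerivAt_id t).mul_const (lin G θ)).ofReal_comp).mul_const Complex.I
    simpa using this
  exact h1.cexp.congr_deriv (by rw [ex]; ring)

lemma norm_dex_le (h : FS c G) (t : ℝ) (θ : Fin n → ℝ) :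
    ‖Complex.I * lin G θ * ex G t θ‖ ≤ (∑' k, ‖c k‖) * n := by
  simpa using h.abs_lin_le θ

lemma continuous_dex (h : FS c G) (t : ℝ) :
    Continuous fun θ : Fin n → ℝ => Complex.I * lin G θ * ex G t θ :=
  (continuous_const.mul h.test_lin.cont).mul (h.test_ex t).cont

lemma hasDerivAt_phi (hβ : 0 < β) (h : FS c G) (t : ℝ) :
    HasDerivAt (phi β n G) (dphi β n G t) t := by
  have := isProb_P hβ n
  exact (hasDerivAt_integral_of_dominated_loc_of_deriv_le (μ := P β n)
    (F := fun t θ => ex G t θ) (F' := fun t θ => Complex.I * lin G θ * ex G t θ) (x₀ := t)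
    (s := Set.univ) (bound := fun _ => (∑' k, ‖c k‖) * n) Filter.univ_mem
    (Eventually.of_forall fun s => (h.test_ex s).cont.aestronglyMeasurable)
    (Pint hβ (h.test_ex t).cont) (continuous_dex h t).aestronglyMeasurable
    (Eventually.of_forall fun θ s _ => norm_dex_le h s θ) (integrable_const _)
    (Eventually.of_forall fun θ s _ => hasDerivAt_ex s θ)).2

lemma continuous_dphi (hβ : 0 < β) (h : FS c G) : Continuous (dphi β n G) := by
  have := isProb_P hβ n
  refine continuous_of_dominated (bound := fun _ => (∑' k, ‖c k‖) * n)
    (fun s => (continuous_dex h s).aestronglyMeasurable)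
    (fun s => Eventually.of_forall fun θ => norm_dex_le h s θ) (integrable_const _)
    (Eventually.of_forall fun θ => ?_)
  have : Continuous fun t => ex G t θ :=
    continuous_iff_continuousAt.2 fun t => (hasDerivAt_ex t θ).continuousAt
  exact continuous_const.mul this

/-- The defect in the differential equation `φ' = -σ² t φ` is a series of loop-equation defects. -/
lemma ode_defect (hβ : 0 < β) (h : FS c G) (t : ℝ) :
    HasSum (fun k => Complex.I * (c k * defect c β n G t k))
      (dphi β n G t + vari c β * t * phi β n G t) := by
  have h1 : HasSum (fun k => c k * mom β n G t (k + 0))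
      (∫ θ : Fin n → ℝ, (lin G θ : ℂ) * ex G t θ ∂(P β n)) :=
    hasSum_mom hβ h t h.summ0 0 fun θ => by simpa using h.hasSum_lin θ
  have h2 : dphi β n G t
      = Complex.I * ∫ θ : Fin n → ℝ, (lin G θ : ℂ) * ex G t θ ∂(P β n) := by
    rw [dphi, ← integral_const_mul]
    simp only [mul_assoc]
  have h3 : HasSum (fun k : ℤ => ((|(k : ℝ)| * ‖c k‖ ^ 2 : ℝ) : ℂ))
      ((∑' k : ℤ, |(k : ℝ)| * ‖c k‖ ^ 2 : ℝ) : ℂ) :=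
    Complex.hasSum_ofReal.2 (summ_sq h).hasSum
  have h4 := (h1.mul_left Complex.I).add (h3.mul_left ((2 / β : ℝ) * t * phi β n G t : ℂ))
  have e1 : (fun k => Complex.I * (c k * defect c β n G t k))
      = fun k : ℤ => Complex.I * (c k * mom β n G t (k + 0))
        + ((2 / β : ℝ) * t * phi β n G t : ℂ) * ((|(k : ℝ)| * ‖c k‖ ^ 2 : ℝ) : ℂ) := by
    funext k
    have : c k * c (-k) = ((‖c k‖ ^ 2 : ℝ) : ℂ) := by
      rw [← h.conj, Complex.mul_conj, Complex.normSq_eq_norm_sq]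
    rw [add_zero, Complex.ofReal_mul, ← this, defect]
    push_cast
    linear_combination (-(2 * ((|(k : ℝ)| : ℝ) : ℂ) * t * c k * c (-k) / β * phi β n G t)) * Complex.I_sq
  have e2 : dphi β n G t + vari c β * t * phi β n G t
      = Complex.I * (∫ θ : Fin n → ℝ, (lin G θ : ℂ) * ex G t θ ∂(P β n))
        + ((2 / β : ℝ) * t * phi β n G t : ℂ) * ((∑' k : ℤ, |(k : ℝ)| * ‖c k‖ ^ 2 : ℝ) : ℂ) := by
    rw [h2, vari, Complex.ofReal_mul]; ring
  rw [e1, e2]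
  exact h4

lemma norm_term_le (hβ : 0 < β) (h : FS c G) (hn : 1 ≤ n) (t : ℝ) (k : ℤ) :
    ‖Complex.I * (c k * defect c β n G t k)‖
      ≤ |(k : ℝ)| * ‖c k‖ * (Cβ β + 2 / β * |t| * ∑' k, ‖c k‖) := by
  by_cases hk : k = 0
  · simp [hk, h.zero]
  · rw [norm_mul, norm_mul, Complex.norm_I, one_mul]
    calc _ ≤ ‖c k‖ * (|(k : ℝ)| * (Cβ β + 2 / β * |t| * ∑' k, ‖c k‖)) := by
          gcongr; exact norm_defect_le hβ h hn t hk
      _ = _ := by ring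

lemma ode_bound (hβ : 0 < β) (h : FS c G) (hn : 1 ≤ n) (t : ℝ) :
    ‖dphi β n G t + vari c β * t * phi β n G t‖
      ≤ (∑' k : ℤ, |(k : ℝ)| * ‖c k‖) * (Cβ β + 2 / β * |t| * ∑' k, ‖c k‖) := by
  rw [← (ode_defect hβ h t).tsum_eq]
  exact tsum_of_norm_bounded (h.summ1.hasSum.mul_right _) fun k => norm_term_le hβ h hn t k

lemma ode_tendsto (hβ : 0 < β) (h : FS c G) (t : ℝ) :
    Tendsto (fun n => dphi β n G t + vari c β * t * phi β n G t) atTop (𝓝 0) := by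
  have h1 : Tendsto (fun n => ∑' k, Complex.I * (c k * defect c β n G t k)) atTop
      (𝓝 (∑' _ : ℤ, (0 : ℂ))) := by
    refine tendsto_tsum_of_dominated_convergence
      (h.summ1.mul_right (Cβ β + 2 / β * |t| * ∑' k, ‖c k‖)) (fun k => ?_) ?_
    · by_cases hk : k = 0
      · simp [hk, h.zero]
      · simpa using ((defect_tendsto hβ h t hk).const_mul (c k)).const_mul Complex.I
    · filter_upwards [eventually_ge_atTop 1] with n hn k
      exact norm_term_le hβ h hn t k
  rw [tsum_zero] at h1
  exact h1.congr fun n => (ode_defect hβ h t).tsum_eq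

/-- Convergence of the characteristic functions: integrate the asymptotic equation
`φ' + σ² t φ → 0` after multiplication by `e^{σ² t² / 2}`. -/
lemma phi_tendsto (hβ : 0 < β) (h : FS c G) (t : ℝ) :
    Tendsto (fun n => phi β n G t) atTop (𝓝 (Complex.exp (-(vari c β * t ^ 2 / 2)))) := by
  set v := vari c β with hv
  set E : ℝ → ℂ := fun s => Complex.exp (v * s ^ 2 / 2) with hE
  have hEd : ∀ s, HasDerivAt E (v * s * E s) s := by
    intro s
    have h1 : HasDerivAt (fun s : ℝ => ((v * s ^ 2 / 2 : ℝ) : ℂ)) ((v * s : ℝ) : ℂ) s := by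
      refine HasDerivAt.ofReal_comp (f := fun s : ℝ => v * s ^ 2 / 2) ?_
      exact (((hasDerivAt_pow 2 s).const_mul v).div_const 2).congr_deriv (by simp; ring)
    have h2 := h1.cexp
    have e : E = fun s : ℝ => Complex.exp ((v * s ^ 2 / 2 : ℝ) : ℂ) := by
      funext s; rw [hE]; push_cast; rfl
    rw [e]
    exact h2.congr_deriv (by push_cast; ring)
  have hEc : Continuous E := continuous_iff_continuousAt.2 fun s => (hEd s).continuousAt
  have hE0 : E 0 = 1 := by simp [hE]
  have hphi0 : ∀ n, phi β n G 0 = 1 := fun n => by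
    have := isProb_P hβ n
    simp [phi, ex]
  have hftc : ∀ n, ∫ s in (0 : ℝ)..t, E s * (dphi β n G s + v * s * phi β n G s)
      = phi β n G t * E t - 1 := by
    intro n
    have hc : Continuous fun s : ℝ => E s * (dphi β n G s + v * s * phi β n G s) := by
      have c1 := continuous_dphi (n := n) hβ h
      have c2 : Continuous (phi β n G) :=
        continuous_iff_continuousAt.2 fun s => (hasDerivAt_phi hβ h s).continuousAt
      have c3 : Continuous fun s : ℝ => (s : ℂ) := Complex.continuous_ofReal
      fun_prop
    have := intervalIntegral.integral_eq_sub_of_hasDerivAt (a := 0) (b := t)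
      (f := fun s => phi β n G s * E s)
      (f' := fun s => E s * (dphi β n G s + v * s * phi β n G s))
      (fun s _ => ((hasDerivAt_phi hβ h s).mul (hEd s)).congr_deriv (by ring))
      (hc.intervalIntegrable _ _)
    rw [this, hphi0, hE0, one_mul]
  have hlim : Tendsto (fun n => ∫ s in (0 : ℝ)..t, E s * (dphi β n G s + v * s * phi β n G s))
      atTop (𝓝 (∫ _ in (0 : ℝ)..t, (0 : ℂ))) := by
    refine intervalIntegral.tendsto_integral_filter_of_dominated_convergence
      (fun s => ‖E s‖ * ((∑' k : ℤ, |(k : ℝ)| * ‖c k‖) * (Cβ β + 2 / β * |s| * ∑' k, ‖c k‖)))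
      (Eventually.of_forall fun n => ?_) ?_ ?_ ?_
    · have c1 := continuous_dphi (n := n) hβ h
      have c2 : Continuous (phi β n G) :=
        continuous_iff_continuousAt.2 fun s => (hasDerivAt_phi hβ h s).continuousAt
      have c3 : Continuous fun s : ℝ => (s : ℂ) := Complex.continuous_ofReal
      exact Continuous.aestronglyMeasurable (by fun_prop)
    · filter_upwards [eventually_ge_atTop 1] with n hn
      refine Eventually.of_forall fun s _ => ?_
      rw [norm_mul]
      gcongr
      exact ode_bound hβ h hn s
    · exact Continuous.intervalIntegrable (by fun_prop) _ _
    · refine Eventually.of_forall fun s _ => ?_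
      simpa using (ode_tendsto hβ h s).const_mul (E s)
  simp only [hftc, intervalIntegral.integral_zero] at hlim
  have h1 := (hlim.add_const 1).mul_const (Complex.exp (-(v * t ^ 2 / 2)))
  simp only [sub_add_cancel, zero_add, one_mul] at h1
  refine h1.congr fun n => ?_
  rw [mul_assoc, hE, ← Complex.exp_add, add_neg_cancel, Complex.exp_zero, mul_one]

end limit
end CBE

/-! ### Fourier series and conclusion -/

namespace CBE

/-- The complex Fourier coefficient `(1/2π) ∫₀^{2π} e^{-ikx} g(x) dx`. -/
noncomputable def cf (g : ℝ → ℂ) (k : ℤ) : ℂ :=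
  (1 / (2 * Real.pi) : ℝ) * ∫ x in (0 : ℝ)..(2 * Real.pi), chr (-k) x * g x

lemma two_pi_nonneg : (0 : ℝ) ≤ 2 * Real.pi := by positivity

/-- Fourier coefficients of a derivative. -/
lemma cf_deriv {g g' : ℝ → ℂ} (hg : ∀ x, HasDerivAt g (g' x) x) (hg' : Continuous g')
    (hper : Function.Periodic g (2 * Real.pi)) (k : ℤ) :
    cf g' k = k * Complex.I * cf g k := by
  have hgc : Continuous g := continuous_iff_continuousAt.2 fun x => (hg x).continuousAt
  have hc := continuous_chr (-k)
  have h1 := intervalIntegral.integral_eq_sub_of_hasDerivAt (a := 0) (b := 2 * Real.pi)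
    (f := fun x => chr (-k) x * g x)
    (f' := fun x => -(k * Complex.I) * (chr (-k) x * g x) + chr (-k) x * g' x)
    (fun x _ => ((hasDerivAt_chr (-k) x).mul (hg x)).congr_deriv (by push_cast; ring))
    (Continuous.intervalIntegrable (by fun_prop) _ _)
  have e1 := chr_periodic (-k) 0
  have e2 := hper 0
  rw [zero_add] at e1 e2
  rw [e1, e2, sub_self, intervalIntegral.integral_add
    (Continuous.intervalIntegrable (by fun_prop) _ _)
    (Continuous.intervalIntegrable (by fun_prop) _ _),
    intervalIntegral.integral_const_mul] at h1
  rw [cf, cf]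
  linear_combination ((1 / (2 * Real.pi) : ℝ) : ℂ) * h1

/-- Decay of the Fourier coefficients of a `C^m` periodic function. -/
lemma cf_decay (m : ℕ) : ∀ g : ℝ → ℂ, ContDiff ℝ m g → Function.Periodic g (2 * Real.pi) →
    ∃ C : ℝ, ∀ k : ℤ, |(k : ℝ)| ^ m * ‖cf g k‖ ≤ C := by
  induction m with
  | zero =>
    intro g hg _
    obtain ⟨C, hC⟩ := (isCompact_Icc (a := (0 : ℝ)) (b := 2 * Real.pi)).exists_bound_of_continuousOn
      hg.continuous.continuousOn
    refine ⟨‖((1 / (2 * Real.pi) : ℝ) : ℂ)‖ * (C * |2 * Real.pi - 0|), fun k => ?_⟩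
    rw [pow_zero, one_mul, cf, norm_mul]
    gcongr
    refine intervalIntegral.norm_integral_le_of_norm_le_const fun x hx => ?_
    rw [Set.uIoc_of_le two_pi_nonneg] at hx
    simpa using hC x ⟨hx.1.le, hx.2⟩
  | succ m ih =>
    intro g hg hper
    have hg' : ContDiff ℝ m (deriv g) := by
      have := hg
      rw [Nat.cast_succ, contDiff_succ_iff_deriv] at this
      exact this.2.2
    have hd : ∀ x, HasDerivAt g (deriv g x) x := fun x =>
      ((hg.differentiable (by simp)) x).hasDerivAt
    have hper' : Function.Periodic (deriv g) (2 * Real.pi) := fun x => by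
      rw [← deriv_comp_add_const]
      congr 1
      funext y
      exact hper y
    obtain ⟨C, hC⟩ := ih _ hg' hper'
    refine ⟨C, fun k => ?_⟩
    have := hC k
    rw [cf_deriv hd hg'.continuous hper, norm_mul, norm_mul, Complex.norm_I, mul_one] at this
    have e : ‖(k : ℂ)‖ = |(k : ℝ)| := by simp
    rw [e] at this
    calc _ = |(k : ℝ)| ^ m * (|(k : ℝ)| * ‖cf g k‖) := by ring
      _ ≤ C := this

lemma summable_sq_cf {g : ℝ → ℂ} (hg : ContDiff ℝ 4 g) (hper : Function.Periodic g (2 * Real.pi)) :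
    Summable fun k : ℤ => (k : ℝ) ^ 2 * ‖cf g k‖ := by
  obtain ⟨C, hC⟩ := cf_decay 4 g (by exact_mod_cast hg) hper
  have h2 : Summable fun k : ℤ => C * (1 / (k : ℝ) ^ 2) :=
    (Real.summable_one_div_int_pow.2 one_lt_two).mul_left C
  refine Summable.of_nonneg_of_le (fun k => by positivity) (fun k => ?_) h2
  by_cases hk : k = 0
  · simp [hk]
  · have hk' : (0 : ℝ) < (k : ℝ) ^ 2 := by positivity
    rw [mul_one_div, le_div_iff₀ hk']
    calc _ = |(k : ℝ)| ^ 4 * ‖cf g k‖ := by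
          have : |(k : ℝ)| ^ 4 = ((k : ℝ) ^ 2) ^ 2 := by rw [← sq_abs (k : ℝ)]; ring
          rw [this]; ring
      _ ≤ C := hC k

lemma summable_cf {g : ℝ → ℂ} (hg : ContDiff ℝ 4 g) (hper : Function.Periodic g (2 * Real.pi)) :
    Summable (cf g) := by
  refine Summable.of_norm_bounded_eventually (g := fun k : ℤ => (k : ℝ) ^ 2 * ‖cf g k‖)
    (summable_sq_cf hg hper) ?_
  have : ({0}ᶜ : Set ℤ) ∈ (cofinite : Filter ℤ) := (Set.finite_singleton 0).compl_mem_cofinite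
  filter_upwards [this] with k hk
  have h1 := one_le_abs_int hk
  have : 1 ≤ (k : ℝ) ^ 2 := by rw [← sq_abs]; nlinarith
  exact le_mul_of_one_le_left (norm_nonneg _) this

lemma hasSum_cf {g : ℝ → ℂ} (hg : ContDiff ℝ 4 g) (hper : Function.Periodic g (2 * Real.pi))
    (x : ℝ) : HasSum (fun k => cf g k * chr k x) (g x) := by
  have : Fact (0 < 2 * Real.pi) := ⟨by positivity⟩
  let F : C(AddCircle (2 * Real.pi), ℂ) :=
    ⟨hper.lift, continuous_coinduced_dom.mpr hg.continuous⟩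
  have hchr : ∀ (k : ℤ) (y : ℝ), (fourier k (y : AddCircle (2 * Real.pi)) : ℂ) = chr k y := by
    intro k y
    rw [fourier_coe_apply, chr]
    congr 1
    have : (Real.pi : ℂ) ≠ 0 := by exact_mod_cast Real.pi_ne_zero
    push_cast
    field_simp
  have hco : fourierCoeff F = cf g := by
    funext k
    rw [fourierCoeff_eq_intervalIntegral _ _ 0, zero_add, cf, Complex.real_smul]
    simp only [hchr, smul_eq_mul]
    rfl
  have := has_pointwise_sum_fourier_series_of_summable (f := F) (by
    rw [hco]; exact summable_cf hg hper) (x : AddCircle (2 * Real.pi))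
  rw [hco] at this
  simp only [hchr, smul_eq_mul] at this
  exact this

section real
variable {G : ℝ → ℝ}

lemma conj_cf (k : ℤ) : (starRingEnd ℂ) (cf (fun x => (G x : ℂ)) k) = cf (fun x => (G x : ℂ)) (-k) := by
  simp only [cf, map_mul, Complex.conj_ofReal, intervalIntegral.integral_of_le two_pi_nonneg]
  rw [← integral_conj]
  simp only [map_mul, conj_chr, Complex.conj_ofReal]

/-- The Fourier coefficients of `G` with the zero mode removed. -/
noncomputable def cf₀ (G : ℝ → ℝ) (k : ℤ) : ℂ := if k = 0 then 0 else cf (fun x => (G x : ℂ)) k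

/-- The mean of `G` over a period. -/
noncomputable def mean (G : ℝ → ℝ) : ℝ := (1 / (2 * Real.pi)) * ∫ t in (0 : ℝ)..(2 * Real.pi), G t

lemma cf_zero : cf (fun x => (G x : ℂ)) 0 = mean G := by
  simp [cf, mean, intervalIntegral.integral_ofReal]

lemma fs_center (hreg : ContDiff ℝ 4 G) (hper : Function.Periodic G (2 * Real.pi)) :
    FS (cf₀ G) (fun x => G x - mean G) := by
  have hg : ContDiff ℝ 4 (fun x => (G x : ℂ)) := Complex.ofRealCLM.contDiff.comp hreg
  have hp : Function.Periodic (fun x => (G x : ℂ)) (2 * Real.pi) := fun x => by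
    simp only [hper x]
  refine ⟨?_, fun k => ?_, by simp [cf₀], fun x => ?_⟩
  · refine (summable_sq_cf hg hp).congr fun k => ?_
    by_cases hk : k = 0 <;> simp [cf₀, hk]
  · by_cases hk : k = 0 <;> simp [cf₀, hk, conj_cf]
  · have h1 := (hasSum_cf hg hp x).update 0 0
    have e : Function.update (fun k => cf (fun x => (G x : ℂ)) k * chr k x) 0 0
        = fun k => cf₀ G k * chr k x := by
      funext k
      by_cases hk : k = 0
      · subst hk; simp [cf₀]
      · simp [cf₀, hk]
    rw [e] at h1
    have e2 : (0 : ℂ) - cf (fun x => (G x : ℂ)) 0 * chr 0 x + G x = ((G x - mean G : ℝ) : ℂ) := by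
      rw [cf_zero, chr_zero]; push_cast; ring
    rw [e2] at h1
    exact h1

lemma norm_cf_sq (hG : Continuous G) (k : ℕ) {a b : ℝ}
    (ha : a = (1 / Real.pi) * ∫ θ in (0:ℝ)..(2 * Real.pi), G θ * Real.cos (k * θ))
    (hb : b = (1 / Real.pi) * ∫ θ in (0:ℝ)..(2 * Real.pi), G θ * Real.sin (k * θ)) :
    ‖cf (fun x => (G x : ℂ)) k‖ ^ 2 = (a ^ 2 + b ^ 2) / 4 := by
  have e : ∀ x : ℝ, chr (-(k : ℤ)) x * (G x : ℂ)
      = ((G x * Real.cos (k * x) : ℝ) : ℂ) - Complex.I * ((G x * Real.sin (k * x) : ℝ) : ℂ) := by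
    intro x
    rw [chr, Complex.exp_mul_I]
    push_cast
    rw [neg_mul, Complex.cos_neg, Complex.sin_neg]
    ring
  have h1 : cf (fun x => (G x : ℂ)) k = ((a / 2 : ℝ) : ℂ) + ((-b / 2 : ℝ) : ℂ) * Complex.I := by
    rw [cf]
    simp only [e]
    rw [intervalIntegral.integral_sub, intervalIntegral.integral_const_mul,
      intervalIntegral.integral_ofReal, intervalIntegral.integral_ofReal, ha, hb]
    · have : (Real.pi : ℂ) ≠ 0 := by exact_mod_cast Real.pi_ne_zero
      push_cast
      field_simp
      ring
    · exact Continuous.intervalIntegrable (by fun_prop) _ _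
    · exact Continuous.intervalIntegrable (by fun_prop) _ _
  rw [h1, ← Complex.normSq_eq_norm_sq, Complex.normSq_add_mul_I]
  ring

lemma vari_eq {β : ℝ} (hreg : ContDiff ℝ 4 G) (hper : Function.Periodic G (2 * Real.pi))
    {a b : ℕ → ℝ}
    (ha : ∀ k, a k = (1 / Real.pi) * ∫ θ in (0:ℝ)..(2 * Real.pi), G θ * Real.cos (k * θ))
    (hb : ∀ k, b k = (1 / Real.pi) * ∫ θ in (0:ℝ)..(2 * Real.pi), G θ * Real.sin (k * θ)) :
    vari (cf₀ G) β = (1 / β) * ∑' k : ℕ, (k : ℝ) * (a k ^ 2 + b k ^ 2) := by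
  have h := fs_center hreg hper
  set f : ℤ → ℝ := fun k => |(k : ℝ)| * ‖cf₀ G k‖ ^ 2 with hf
  have hs : Summable f := summ_sq h
  have hfn : ∀ k : ℕ, f k = (1 / 4) * ((k : ℝ) * (a k ^ 2 + b k ^ 2)) := by
    intro k
    by_cases hk : k = 0
    · simp [hf, hk]
    · have h1 := norm_cf_sq hreg.continuous k (ha k) (hb k)
      have hk' : (k : ℤ) ≠ 0 := by exact_mod_cast hk
      simp only [hf, cf₀, hk', if_false, h1]
      simp; ring
  have heven : ∀ k : ℤ, f (-k) = f k := fun k => by simp [hf, h.norm_neg]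
  have hs1 : Summable fun n : ℕ => f n := hs.comp_injective Nat.cast_injective
  have hs2 : Summable fun n : ℕ => f (-(n + 1 : ℤ)) :=
    hs.comp_injective (i := fun n : ℕ => (-(n + 1 : ℤ))) fun x y hxy => by simpa using hxy
  have h1 : ∑' k : ℤ, f k = 2 * ∑' k : ℕ, f k := by
    rw [tsum_of_nat_of_neg_add_one hs1 hs2]
    have h2 : ∑' n : ℕ, f (-(n + 1 : ℤ)) = ∑' n : ℕ, f n := by
      rw [hs1.tsum_eq_zero_add]
      simp only [heven]
      simp [hf]
    rw [h2]; ring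
  rw [vari, h1]
  simp only [hfn, tsum_mul_left]
  ring

lemma vari_nonneg {β : ℝ} (hβ : 0 < β) (c : ℤ → ℂ) : 0 ≤ vari c β :=
  mul_nonneg (by positivity) (tsum_nonneg fun k => by positivity)

end real

/-- The central limit theorem for a centred statistic with a good Fourier expansion. -/
lemma clt_center {c : ℤ → ℂ} {G : ℝ → ℝ} {β : ℝ} (hβ : 0 < β) (h : FS c G)
    (f : BoundedContinuousFunction ℝ ℝ) :
    Tendsto (fun n => ∫ θ : Fin n → ℝ, f (lin G θ) ∂(P β n)) atTop
      (𝓝 (∫ x, f x ∂(ProbabilityTheory.gaussianReal 0 (Real.toNNReal (vari c β))))) := by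
  have hprob := fun n => isProb_P hβ n
  have hm : ∀ n, AEMeasurable (fun θ : Fin n → ℝ => lin G θ) (P β n) := fun n =>
    h.continuous_lin.aemeasurable
  let μ : ℕ → ProbabilityMeasure ℝ := fun n =>
    ⟨(P β n).map fun θ => lin G θ, Measure.isProbabilityMeasure_map (hm n)⟩
  let ν : ProbabilityMeasure ℝ :=
    ⟨ProbabilityTheory.gaussianReal 0 (Real.toNNReal (vari c β)), inferInstance⟩
  have hlim : Tendsto μ atTop (𝓝 ν) := by
    rw [ProbabilityMeasure.tendsto_iff_tendsto_charFun]
    intro t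
    have e1 : ∀ n, charFun (μ n : Measure ℝ) t = phi β n G t := by
      intro n
      change charFun ((P β n).map fun θ => lin G θ) t = _
      rw [charFun_apply_real, integral_map (hm n) (by fun_prop)]
      simp [phi, ex]
    have e2 : charFun (ν : Measure ℝ) t = Complex.exp (-(vari c β * t ^ 2 / 2)) := by
      change charFun (ProbabilityTheory.gaussianReal 0 (Real.toNNReal (vari c β))) t = _
      rw [ProbabilityTheory.charFun_gaussianReal, Real.coe_toNNReal _ (vari_nonneg hβ c)]
      simp
    simp only [e1, e2]
    exact phi_tendsto hβ h t
  rw [ProbabilityMeasure.tendsto_iff_forall_integral_tendsto] at hlim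
  refine (hlim f).congr fun n => ?_
  exact integral_map (hm n) f.continuous.aestronglyMeasurable

end CBE

/-- Central limit theorem for linear statistics of the circular β-ensemble:
`∑ G(θ_μ) - (n/2π)∫G` converges in distribution to a centered Gaussian with variance
`(1/β) ∑_{k≥1} k (a_k² + b_k²)` (convergence tested against bounded continuous functions). -/
theorem clt_circle (β α : ℝ) (hβ : 0 < β) (hα : 0 < α) (hα1 : α < 1)
    (G : ℝ → ℝ) (hper : Function.Periodic G (2 * Real.pi))
    (hreg : ContDiff ℝ 4 G)
    (hHolder : ∃ C : NNReal, HolderWith C α.toNNReal (iteratedDeriv 4 G))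
    (a b : ℕ → ℝ)
    (ha : ∀ k, a k = (1 / Real.pi) * ∫ θ in (0:ℝ)..(2 * Real.pi), G θ * Real.cos (k * θ))
    (hb : ∀ k, b k = (1 / Real.pi) * ∫ θ in (0:ℝ)..(2 * Real.pi), G θ * Real.sin (k * θ)) :
    ∀ f : BoundedContinuousFunction ℝ ℝ,
      Tendsto (fun n => cbeExp β n (fun θ =>
          f (∑ μ, G (θ μ) - n * ((1 / (2 * Real.pi)) * ∫ t in (0:ℝ)..(2 * Real.pi), G t))))
        atTop
        (𝓝 (∫ x, f x ∂(ProbabilityTheory.gaussianReal 0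
          (Real.toNNReal ((1 / β) * ∑' k : ℕ, (k : ℝ) * (a k ^ 2 + b k ^ 2)))))) := by
  intro f
  have h := CBE.clt_center hβ (CBE.fs_center hreg hper) f
  rw [CBE.vari_eq hreg hper ha hb] at h
  refine h.congr fun n => ?_
  rw [CBE.cbeExp_eq hβ]
  congr 1
  funext θ
  congr 1
  simp [CBE.lin, CBE.mean, Finset.sum_sub_distrib]
end

section
/- Let β > 0 and α ∈ (0,1). Let G : ℝ → ℝ be 2π-periodic, four times continuously differentiable with α-Hölder continuous fourth derivative, and with ∫₀^{2π} G(θ) dθ = 0. Then there exists a constant C (depending on β, α and G) such that for all n ≥ 1, E_n^β[exp(∑_{μ=1}^n G(θ_μ))] ≤ C. (This is the uniform exponential moment bound (3.1) of the paper in the case of the unit circle.) -/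
/-!
Write `F(θ) = ∑ G(θ_μ)`. The bound holds for every Lipschitz mean-zero `G`; let `L` be a Lipschitz
constant. The proof shows `E[e^F] · E[e^{-F}] ≤ exp(2πL + π²L²/β)` and `E[e^{-F}] ≥ 1`.

The second inequality is `e^{-F} ≥ 1 - F` together with `E[F] = 0`, which holds because the
ensemble is rotation invariant (`integral_linear_statistic`).

For the first one, lift the `n` points of the circle to `ℝ`. The cube `[0, 2π)^n` is a fundamental
domain for the translations by `(2πℤ)^n`, and so is the set `balancedDomain n` of lifts lying in a
window of length less than `2π` whose sum is in `[0, 2π)`. Sorting the coordinates cuts the latter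
into `n!` copies of the convex set `orderedDomain n`, so that cube integrals of symmetric periodic
functions become integrals over this convex set (`lintegral_cube`). There, `sin a sin b ≤
sin²((a+b)/2) e^{-(a-b)²/π²}` makes the weight `w` uniformly strongly log-concave: with `v = x - y`
and `c = β/(4π²)`, the product `w(x) w(y)` is at most
`w((x+y)/2)² exp(-c ∑_{i<j} (v_i - v_j)²)` (`cbeWeight_mul_le`). Since
`∑_{i<j} (v_i - v_j)² = n ∑ (v_i - v̄)²`, where `v̄` is the mean of the `v_i`, and `|∑ v_i| ≤ 2π`
on the domain, this Gaussian factor absorbs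
`F(x) - F(y) ≤ L ∑ |v_i|` at the cost of the additive constant `2πL + L²/(4c)`, which does not
depend on `n` (`sum_abs_le`). The midpoint Prékopa–Leindler inequality (`prekopa_pi`), applied to
`e^F w`, `e^{-F} w` and `w`, then concludes.
-/

open MeasureTheory Finset Filter Topology

open scoped ENNReal Pointwise

/-! ### The midpoint Prékopa–Leindler inequality -/

/-- Brunn–Minkowski inequality on the line, for compact sets: the translates of `K` by `min L` and
of `L` by `max K` lie in `K + L` and meet in one point only. -/
lemma volume_add_compact {K L : Set ℝ} (hK : IsCompact K) (hL : IsCompact L)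
    (hK0 : K.Nonempty) (hL0 : L.Nonempty) : volume K + volume L ≤ volume (K + L) := by
  obtain ⟨k, hk, hkm⟩ := hK.exists_isGreatest hK0
  obtain ⟨l, hl, hlm⟩ := hL.exists_isLeast hL0
  have h1 : volume (Set.image (l + ·) K) = volume K := by
    simp
  have h2 : volume (Set.image (k + ·) L) = volume L := by
    simp
  have hd : AEDisjoint volume (Set.image (l + ·) K) (Set.image (k + ·) L) := by
    refine measure_mono_null (t := {k + l}) ?_ (by simp)
    rintro z ⟨⟨x, hx, rfl⟩, ⟨y, hy, hxy⟩⟩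
    have := hkm hx
    have := hlm hy
    simp only [Set.mem_singleton_iff] at *
    linarith
  rw [← h1, ← h2, ← measure_union₀ ?_ hd]
  · refine measure_mono ?_
    rintro z (⟨x, hx, rfl⟩ | ⟨x, hx, rfl⟩)
    · exact ⟨x, hx, l, hl, add_comm _ _⟩
    · exact ⟨k, hk, x, hx, rfl⟩
  · exact (hL.image (by fun_prop)).measurableSet.nullMeasurableSet

/-- Brunn–Minkowski inequality on the line for midpoints, by inner regularity; only the points
`(a + b) / 2` are required to lie in `C`, and `C` need not be measurable. -/
lemma volume_midpoint_le {A B C : Set ℝ} (hA : MeasurableSet A) (hB : MeasurableSet B)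
    (hA0 : A.Nonempty) (hB0 : B.Nonempty)
    (hC : ∀ a ∈ A, ∀ b ∈ B, (a + b) / 2 ∈ C) : volume A + volume B ≤ 2 * volume C := by
  have key : ∀ K ⊆ A, IsCompact K → ∀ L ⊆ B, IsCompact L →
      volume K + volume L ≤ 2 * volume C := by
    intro K hKA hK L hLB hL
    obtain ⟨a, ha⟩ := hA0
    obtain ⟨b, hb⟩ := hB0
    have h := volume_add_compact (hK.insert a) (hL.insert b) (Set.insert_nonempty _ _)
      (Set.insert_nonempty _ _)
    have hsub : insert a K + insert b L ⊆ (2 : ℝ) • C := by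
      rintro _ ⟨x, hx, y, hy, rfl⟩
      refine ⟨(x + y) / 2, hC x ?_ y ?_, by simp; ring⟩
      · exact Set.insert_subset ha hKA hx
      · exact Set.insert_subset hb hLB hy
    calc volume K + volume L ≤ volume (insert a K) + volume (insert b L) := by
          gcongr <;> exact Set.subset_insert _ _
      _ ≤ _ := h
      _ ≤ volume ((2 : ℝ) • C) := measure_mono hsub
      _ = 2 * volume C := by
          rw [Measure.addHaar_smul]; simp
  rw [hA.measure_eq_iSup_isCompact, hB.measure_eq_iSup_isCompact]
  simp only [iSup_and']
  exact ENNReal.biSup_add_biSup_le' ⟨∅, by simp⟩ ⟨∅, by simp⟩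
    fun K hK L hL => key K hK.1 hK.2 L hL.1 hL.2

lemma four_mul_le_sq (a b : ℝ≥0∞) : 4 * (a * b) ≤ (a + b) ^ 2 := by
  by_cases ha : a = ∞
  · subst ha; simp
  by_cases hb : b = ∞
  · subst hb; simp
  lift a to NNReal using ha
  lift b to NNReal using hb
  norm_cast
  rw [← NNReal.coe_le_coe]
  push_cast
  nlinarith [sq_nonneg ((a:ℝ) - b)]

/-- Prékopa–Leindler inequality on the line in additive form, for functions of supremum `1`: the
Brunn–Minkowski inequality applies to the superlevel sets at each height below `1`, and the result
is integrated over the height. -/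
lemma prekopa_normalized {f g h : ℝ → ℝ≥0∞} (hf : Measurable f) (hg : Measurable g)
    (hh : Measurable h) (hf1 : ⨆ x, f x = 1) (hg1 : ⨆ x, g x = 1)
    (H : ∀ x y, f x * g y ≤ h ((x + y) / 2) ^ 2) :
    (∫⁻ x, f x) + ∫⁻ x, g x ≤ 2 * ∫⁻ x, h x := by
  have hfl : ∀ x, f x ≤ 1 := fun x => hf1 ▸ le_iSup f x
  have hgl : ∀ x, g x ≤ 1 := fun x => hg1 ▸ le_iSup g x
  have layer : ∀ u : ℝ → ℝ≥0∞, Measurable u → (∀ x, u x ≤ 1) →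
      ∫⁻ x, u x = ∫⁻ s in Set.Ioi (0:ℝ), volume {x | ENNReal.ofReal s < u x} := by
    intro u hu hu1
    have hfin : ∀ x, u x ≠ ∞ := fun x => ((hu1 x).trans_lt ENNReal.one_lt_top).ne
    have := lintegral_eq_lintegral_meas_lt volume (f := fun x => (u x).toReal)
      (Eventually.of_forall fun x => ENNReal.toReal_nonneg) hu.ennreal_toReal.aemeasurable
    simp only [ENNReal.ofReal_toReal (hfin _)] at this
    rw [this]
    refine setLIntegral_congr_fun measurableSet_Ioi fun s hs => ?_
    simp only [ENNReal.ofReal_lt_iff_lt_toReal (le_of_lt hs) (hfin _)]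
  calc (∫⁻ x, f x) + ∫⁻ x, g x
      = ∫⁻ s in Set.Ioi (0:ℝ), (volume {x | ENNReal.ofReal s < f x}
          + volume {x | ENNReal.ofReal s < g x}) := by
        rw [layer f hf hfl, layer g hg hgl, lintegral_add_left]
        exact Antitone.measurable fun s t hst => measure_mono fun x hx =>
          (ENNReal.ofReal_le_ofReal hst).trans_lt hx
    _ ≤ ∫⁻ s in Set.Ioi (0:ℝ), 2 * volume {x | ENNReal.ofReal s < min (h x) 1} := by
        refine lintegral_mono fun s => ?_
        by_cases hs : ENNReal.ofReal s < 1
        · refine volume_midpoint_le (hf measurableSet_Ioi) (hg measurableSet_Ioi) ?_ ?_ ?_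
          · exact lt_iSup_iff.1 (hf1 ▸ hs)
          · exact lt_iSup_iff.1 (hg1 ▸ hs)
          · intro a ha b hb
            refine lt_min ?_ hs
            by_contra! hcon
            have := H a b
            have h2 : ENNReal.ofReal s * ENNReal.ofReal s < f a * g b :=
              ENNReal.mul_lt_mul ha hb
            have h3 := pow_le_pow_left' hcon 2
            rw [← sq] at h2
            exact absurd (h2.trans_le (this.trans h3)) (lt_irrefl _)
        · have e1 : {x | ENNReal.ofReal s < f x} = ∅ := by
            ext x; simpa using (hfl x).trans (not_lt.1 hs)
          have e2 : {x | ENNReal.ofReal s < g x} = ∅ := by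
            ext x; simpa using (hgl x).trans (not_lt.1 hs)
          simp [e1, e2]
    _ = 2 * ∫⁻ x, min (h x) 1 := by
        rw [layer _ (hh.min measurable_const) (fun x => min_le_right _ _),
          lintegral_const_mul' _ _ (by simp)]
    _ ≤ _ := by gcongr; exact min_le_left _ _

/-- Prékopa–Leindler inequality on the line for bounded functions: divide `f`, `g` by their suprema
and `h` by the geometric mean of these, then use `4ab ≤ (a + b)²`. -/
lemma prekopa_bounded {f g h : ℝ → ℝ≥0∞} (hf : Measurable f) (hg : Measurable g)
    (hh : Measurable h) (hf1 : ⨆ x, f x ≠ ∞) (hg1 : ⨆ x, g x ≠ ∞)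
    (H : ∀ x y, f x * g y ≤ h ((x + y) / 2) ^ 2) :
    (∫⁻ x, f x) * ∫⁻ x, g x ≤ (∫⁻ x, h x) ^ 2 := by
  set a := ⨆ x, f x with ha
  set b := ⨆ x, g x with hb
  by_cases ha0 : a = 0
  · have : ∀ x, f x = 0 := by simpa [ha] using ha0
    simp [this]
  by_cases hb0 : b = 0
  · have : ∀ x, g x = 0 := by simpa [hb] using hb0
    simp [this]
  set c := (a * b) ^ (1 / 2 : ℝ) with hc
  have hcc : c ^ 2 = a * b := by
    rw [hc, ← ENNReal.rpow_natCast, ← ENNReal.rpow_mul]; norm_num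
  have hab0 : a * b ≠ 0 := mul_ne_zero ha0 hb0
  have habt : a * b ≠ ∞ := ENNReal.mul_ne_top hf1 hg1
  have h1 := prekopa_normalized (f := fun x => a⁻¹ * f x) (g := fun x => b⁻¹ * g x)
    (h := fun x => c⁻¹ * h x) (hf.const_mul _) (hg.const_mul _) (hh.const_mul _)
    (by rw [← ENNReal.mul_iSup]; exact ENNReal.inv_mul_cancel ha0 hf1)
    (by rw [← ENNReal.mul_iSup]; exact ENNReal.inv_mul_cancel hb0 hg1)
    (by
      intro x y
      rw [mul_pow, ← ENNReal.inv_pow, hcc, ENNReal.mul_inv (Or.inl ha0) (Or.inl hf1)]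
      calc _ = a⁻¹ * b⁻¹ * (f x * g y) := by ring
        _ ≤ _ := by gcongr; exact H x y)
  rw [lintegral_const_mul _ hf, lintegral_const_mul _ hg, lintegral_const_mul _ hh] at h1
  have h2 := (four_mul_le_sq _ _).trans (pow_le_pow_left' h1 2)
  have h3 : 4 * ((a * b)⁻¹ * ((∫⁻ x, f x) * ∫⁻ x, g x)) ≤ 4 * ((a * b)⁻¹ * (∫⁻ x, h x) ^ 2) := by
    calc _ = 4 * (a⁻¹ * (∫⁻ x, f x) * (b⁻¹ * ∫⁻ x, g x)) := by
          rw [ENNReal.mul_inv (Or.inl ha0) (Or.inl hf1)]; ring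
      _ ≤ _ := h2
      _ = _ := by rw [← hcc, ENNReal.inv_pow]; ring
  rw [ENNReal.mul_le_mul_iff_right (by simp) (by simp),
    ENNReal.mul_le_mul_iff_right (ENNReal.inv_ne_zero.2 habt) (ENNReal.inv_ne_top.2 hab0)] at h3
  exact h3

lemma lintegral_eq_iSup_min {f : ℝ → ℝ≥0∞} (hf : Measurable f) :
    ∫⁻ x, f x = ⨆ N : ℕ, ∫⁻ x, min (f x) N := by
  rw [← lintegral_iSup]
  · congr 1; ext x
    rw [← inf_iSup_eq, ENNReal.iSup_natCast]; simp
  · fun_prop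
  · intro M N hMN x
    dsimp
    gcongr

/-- Prékopa–Leindler inequality on the line, by truncation of `f` and `g`. -/
lemma prekopa_one {f g h : ℝ → ℝ≥0∞} (hf : Measurable f) (hg : Measurable g)
    (hh : Measurable h) (H : ∀ x y, f x * g y ≤ h ((x + y) / 2) ^ 2) :
    (∫⁻ x, f x) * ∫⁻ x, g x ≤ (∫⁻ x, h x) ^ 2 := by
  rw [lintegral_eq_iSup_min hf, lintegral_eq_iSup_min hg]
  simp only [ENNReal.iSup_mul, ENNReal.mul_iSup, iSup_le_iff]
  intro M N
  refine prekopa_bounded (by fun_prop) (by fun_prop) hh ?_ ?_ fun x y => ?_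
  · exact ((iSup_le fun x => min_le_right _ _).trans_lt (ENNReal.natCast_lt_top _)).ne
  · exact ((iSup_le fun x => min_le_right _ _).trans_lt (ENNReal.natCast_lt_top _)).ne
  · exact le_trans (by gcongr <;> exact min_le_left _ _) (H x y)

/-- Prékopa–Leindler inequality on `ℝ^n` at midpoints, by induction on the dimension. -/
theorem prekopa_pi (n : ℕ) {f g h : (Fin n → ℝ) → ℝ≥0∞} (hf : Measurable f) (hg : Measurable g)
    (hh : Measurable h) (H : ∀ x y, f x * g y ≤ h ((2⁻¹ : ℝ) • (x + y)) ^ 2) :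
    (∫⁻ x, f x) * ∫⁻ x, g x ≤ (∫⁻ x, h x) ^ 2 := by
  induction n with
  | zero =>
    have : ∀ u : (Fin 0 → ℝ) → ℝ≥0∞, ∫⁻ x, u x = u 0 := by
      intro u
      rw [volume_pi, Measure.pi_of_empty (x := 0), lintegral_dirac]
    simp only [this]
    simpa using H 0 0
  | succ n ih =>
    have fub : ∀ u : (Fin (n+1) → ℝ) → ℝ≥0∞, Measurable u →
        ∫⁻ x, u x = ∫⁻ t : ℝ, ∫⁻ y : Fin n → ℝ, u (Fin.cons t y) := by
      intro u hu
      have e := (volume_preserving_piFinSuccAbove (fun _ : Fin (n+1) => ℝ) 0).symm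
      rw [← e.lintegral_comp hu, Measure.volume_eq_prod, lintegral_prod]
      · simp [MeasurableEquiv.piFinSuccAbove, Fin.insertNthEquiv, Fin.insertNth_zero']
      · exact (hu.comp e.measurable).aemeasurable
    have mc : Measurable fun p : ℝ × (Fin n → ℝ) => (Fin.cons p.1 p.2 : Fin (n+1) → ℝ) := by
      refine measurable_pi_lambda _ fun i => ?_
      refine Fin.cases ?_ (fun j => ?_) i
      · simpa using measurable_fst
      · simp only [Fin.cons_succ]; fun_prop
    have ms : ∀ t : ℝ, Measurable fun y : Fin n → ℝ => (Fin.cons t y : Fin (n+1) → ℝ) :=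
      fun t => mc.comp measurable_prodMk_left
    rw [fub f hf, fub g hg, fub h hh]
    refine prekopa_one ?_ ?_ ?_ fun s t => ?_
    · exact (hf.comp mc).lintegral_prod_right'
    · exact (hg.comp mc).lintegral_prod_right'
    · exact (hh.comp mc).lintegral_prod_right'
    · refine ih (hf.comp (ms s)) (hg.comp (ms t)) (hh.comp (ms _)) fun x y => ?_
      convert H (Fin.cons s x) (Fin.cons t y) using 3
      ext i
      refine Fin.cases ?_ (fun j => ?_) i
      · simp; ring
      · simp; ring

/-! ### Fundamental domains of the period lattice -/

/-- The inclusion of `ℤ^n` into `ℝ^n` with image the lattice `(2πℤ)^n`. -/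
noncomputable def latticeHom (n : ℕ) : (Fin n → ℤ) →+ (Fin n → ℝ) where
  toFun k := fun i => (k i : ℝ) * (2 * Real.pi)
  map_zero' := by ext i; simp
  map_add' k l := by ext i; simp; ring

/-- The period lattice `(2πℤ)^n`, acting on `ℝ^n` by translations. -/
noncomputable abbrev periodLattice (n : ℕ) : AddSubgroup (Fin n → ℝ) := (latticeHom n).range

instance periodLattice_countable (n : ℕ) : Countable (periodLattice n) :=
  (Set.countable_range (latticeHom n)).to_subtype

/-- The half-open cube `[0, 2π)^n`. -/
def halfCube (n : ℕ) : Set (Fin n → ℝ) := Set.univ.pi fun _ => Set.Ico 0 (2 * Real.pi)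

lemma halfCube_ae_eq (n : ℕ) : halfCube n =ᵐ[volume] cbeCube n :=
  Measure.pi_Ico_ae_eq_pi_Icc

/-- Lifts of `n` points of the circle lying in a window of length less than `2π`, with sum of
the coordinates in `[0, 2π)`. -/
def balancedDomain (n : ℕ) : Set (Fin n → ℝ) :=
  {x | (∀ i j, x i - x j < 2 * Real.pi) ∧ 0 ≤ ∑ i, x i ∧ ∑ i, x i < 2 * Real.pi}

/-- The part of `balancedDomain n` with increasing coordinates; unlike the whole, it is convex. -/
def orderedDomain (n : ℕ) : Set (Fin n → ℝ) :=
  balancedDomain n ∩ {x | StrictMono x}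

lemma vadd_lattice_apply {n : ℕ} (k : Fin n → ℤ) (x : Fin n → ℝ) (i : Fin n) :
    ((⟨latticeHom n k, k, rfl⟩ : periodLattice n) +ᵥ x) i = x i + k i * (2 * Real.pi) := by
  change (k i : ℝ) * (2 * Real.pi) + x i = _
  ring

lemma existsUnique_vadd_mem_halfCube {n : ℕ} (x : Fin n → ℝ) :
    ∃! g : periodLattice n, g +ᵥ x ∈ halfCube n := by
  have h : ∀ i, ∃! m : ℤ, x i + m • (2 * Real.pi) ∈ Set.Ico 0 (0 + 2 * Real.pi) := fun i =>
    existsUnique_add_zsmul_mem_Ico Real.two_pi_pos (x i) 0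
  choose k hk hku using h
  refine ⟨⟨latticeHom n k, k, rfl⟩, fun i _ => ?_, ?_⟩
  · rw [vadd_lattice_apply]
    simpa using hk i
  · rintro ⟨_, l, rfl⟩ hl
    have : l = k := by
      ext i
      refine hku i (l i) ?_
      have := hl i trivial
      rw [vadd_lattice_apply] at this
      simpa using this
    subst this; rfl

lemma isAddFundamentalDomain_halfCube (n : ℕ) :
    IsAddFundamentalDomain (periodLattice n) (halfCube n) :=
  IsAddFundamentalDomain.mk' (MeasurableSet.univ_pi fun _ => measurableSet_Ico).nullMeasurableSet
    existsUnique_vadd_mem_halfCube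

lemma ae_sub_ne {n : ℕ} {i j : Fin n} (hij : i ≠ j) (c : ℝ) :
    ∀ᵐ x : Fin n → ℝ, x i - x j ≠ c := by
  let L : (Fin n → ℝ) →ₗ[ℝ] ℝ := LinearMap.proj (R := ℝ) (φ := fun _ => ℝ) i - LinearMap.proj j
  have hL : LinearMap.ker L ≠ ⊤ := by
    intro h
    have : Pi.single i (1:ℝ) ∈ LinearMap.ker L := h ▸ Submodule.mem_top
    simp [L, hij.symm, LinearMap.mem_ker] at this
  have h0 := Measure.addHaar_submodule (volume : Measure (Fin n → ℝ)) _ hL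
  rw [ae_iff, ← nonpos_iff_eq_zero, ← h0,
    ← measure_preimage_add_right volume (-Pi.single i c) (LinearMap.ker L : Set (Fin n → ℝ))]
  refine measure_mono fun x hx => ?_
  have hx : x i - x j = c := by simpa using hx
  simp [L, LinearMap.mem_ker, hij.symm]
  linarith

/-- Almost every point of `ℝ^n` has coordinates pairwise distinct modulo `2π`. -/
lemma ae_distinct (n : ℕ) :
    ∀ᵐ x : Fin n → ℝ, ∀ i j, i ≠ j → ∀ m : ℤ, x i - x j ≠ m * (2 * Real.pi) := by
  rw [ae_all_iff]; intro i
  rw [ae_all_iff]; intro j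
  rw [ae_all_iff]; intro hij
  rw [ae_all_iff]; intro m
  exact ae_sub_ne hij _

/-- Moving the largest coordinate down by one period keeps all lifts in a window of length less
than `2π` and lowers the sum by `2π`; the lemma iterates this move `m` times. -/
lemma exists_shift {n : ℕ} (hn : 0 < n) (x : Fin n → ℝ)
    (hx : ∀ i j, i ≠ j → ∀ m : ℤ, x i - x j ≠ m * (2 * Real.pi))
    (h0 : ∀ i j, x i - x j < 2 * Real.pi) (m : ℕ) :
    ∃ k : Fin n → ℤ, ∑ i, k i = -(m : ℤ) ∧
      ∀ i j, (x i + k i * (2 * Real.pi)) - (x j + k j * (2 * Real.pi)) < 2 * Real.pi := by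
  induction m with
  | zero => exact ⟨0, by simp, by simpa using h0⟩
  | succ m ih =>
    obtain ⟨k, hk, hs⟩ := ih
    have : Nonempty (Fin n) := ⟨⟨0, hn⟩⟩
    obtain ⟨a, ha⟩ := Finite.exists_max fun i => x i + k i * (2 * Real.pi)
    have hpi := Real.two_pi_pos
    refine ⟨k - Pi.single a 1, by simp [hk]; ring, fun i j => ?_⟩
    have hlt : ∀ b, b ≠ a → x b + k b * (2 * Real.pi) < x a + k a * (2 * Real.pi) := by
      intro b hb
      refine lt_of_le_of_ne (ha b) fun h => hx b a hb (k a - k b) ?_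
      push_cast
      linarith
    by_cases hi : i = a <;> by_cases hj : j = a
    · subst hi; subst hj; simpa using hpi
    · subst hi
      have := hs i j
      simp [hj]
      linarith
    · subst hj
      have := hlt i hi
      simp [hi]
      linarith
    · simpa [hi, hj] using hs i j

lemma measurableSet_balancedDomain (n : ℕ) : MeasurableSet (balancedDomain n) := by
  have h1 : MeasurableSet {x : Fin n → ℝ | ∀ i j, x i - x j < 2 * Real.pi} := by
    simp only [Set.ofPred_forall]
    exact MeasurableSet.iInter fun i => MeasurableSet.iInter fun j =>
      measurableSet_lt (by fun_prop) measurable_const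
  have h2 : MeasurableSet {x : Fin n → ℝ | 0 ≤ ∑ i, x i} :=
    measurableSet_le measurable_const (by fun_prop)
  have h3 : MeasurableSet {x : Fin n → ℝ | ∑ i, x i < 2 * Real.pi} :=
    measurableSet_lt (by fun_prop) measurable_const
  exact h1.inter (h2.inter h3)

/-- Existence of a representative follows from `exists_shift`, starting in the cube. Two
representatives differ by `2πk` with `∑ k_i = 0`; if `k ≠ 0`, some `k_i ≥ 1` and some `k_j ≤ -1`,
which is incompatible with both lying in a window of length less than `2π`. -/
lemma isAddFundamentalDomain_balancedDomain {n : ℕ} (hn : 0 < n) :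
    IsAddFundamentalDomain (periodLattice n) (balancedDomain n) := by
  have hpi := Real.two_pi_pos
  refine IsAddFundamentalDomain.mk'' (measurableSet_balancedDomain n).nullMeasurableSet ?_ ?_ ?_
  · filter_upwards [ae_distinct n] with x hx
    obtain ⟨⟨_, l, rfl⟩, hl, -⟩ := existsUnique_vadd_mem_halfCube x
    have hl' : ∀ i, x i + l i * (2 * Real.pi) ∈ Set.Ico 0 (2 * Real.pi) := fun i => by
      have := hl i trivial
      rwa [vadd_lattice_apply] at this
    have hS0 : 0 ≤ ∑ i, (x i + l i * (2 * Real.pi)) := sum_nonneg fun i _ => (hl' i).1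
    set S := ∑ i, (x i + l i * (2 * Real.pi)) with hS
    obtain ⟨k, hk, hs⟩ := exists_shift hn (fun i => x i + l i * (2 * Real.pi))
      (fun i j hij m h => hx i j hij (m - l i + l j) (by push_cast; linarith))
      (fun i j => by linarith [(hl' i).2, (hl' j).1]) ⌊S / (2 * Real.pi)⌋₊
    refine ⟨⟨latticeHom n (l + k), l + k, rfl⟩, fun i j => ?_, ?_⟩
    · simp only [vadd_lattice_apply, Pi.add_apply, Int.cast_add]
      linarith [hs i j]
    · have hsum : ∑ i, ((⟨latticeHom n (l + k), l + k, rfl⟩ : periodLattice n) +ᵥ x) i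
          = S - ⌊S / (2 * Real.pi)⌋₊ * (2 * Real.pi) := by
        simp only [vadd_lattice_apply, Pi.add_apply, Int.cast_add, add_mul, ← add_assoc]
        rw [sum_add_distrib, ← hS, ← sum_mul, ← Int.cast_sum, hk]
        push_cast
        ring
      rw [hsum]
      have h1 := Nat.floor_le (div_nonneg hS0 hpi.le)
      have h2 := Nat.lt_floor_add_one (S / (2 * Real.pi))
      rw [le_div_iff₀ hpi] at h1
      rw [div_lt_iff₀ hpi] at h2
      constructor <;> linarith
  · rintro ⟨_, k, rfl⟩ hk
    refine Disjoint.aedisjoint (Set.disjoint_left.2 ?_)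
    rintro _ ⟨x, hx, rfl⟩ hy
    dsimp only at hy
    obtain ⟨hx1, hx2, hx3⟩ := hx
    obtain ⟨hy1, hy2, hy3⟩ := hy
    simp only [vadd_lattice_apply, sum_add_distrib, ← sum_mul, ← Int.cast_sum] at hy1 hy2 hy3
    have hk0 : ∑ i, k i = 0 := by
      have h1 : (-1 : ℝ) < (∑ i, k i : ℤ) := by
        by_contra! h; nlinarith
      have h2 : ((∑ i, k i : ℤ) : ℝ) < 1 := by
        by_contra! h; nlinarith
      have h1' : (-1 : ℤ) < ∑ i, k i := by exact_mod_cast h1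
      have h2' : ∑ i, k i < (1 : ℤ) := by exact_mod_cast h2
      omega
    have hkne : ∃ i, k i ≠ 0 := by
      by_contra! h
      exact hk (by ext i; simp [latticeHom, h])
    obtain ⟨i, hi⟩ : ∃ i, 0 < k i := by
      obtain ⟨i, hi⟩ := hkne
      obtain ⟨j, -, hj⟩ := exists_pos_of_sum_zero_of_exists_nonzero k hk0 ⟨i, mem_univ _, hi⟩
      exact ⟨j, hj⟩
    obtain ⟨j, hj⟩ : ∃ j, k j < 0 := by
      by_contra! h
      have := (sum_eq_zero_iff_of_nonneg fun i _ => h i).1 hk0 i (mem_univ _)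
      omega
    have hi' : (1 : ℝ) ≤ k i := by exact_mod_cast hi
    have hj' : (k j : ℝ) ≤ -1 := by exact_mod_cast (by omega : k j ≤ -1)
    have := hy1 i j
    have := hx1 j i
    nlinarith
  · exact fun g => (measurePreserving_vadd g volume).quasiMeasurePreserving

lemma measurableSet_orderedDomain (n : ℕ) : MeasurableSet (orderedDomain n) := by
  refine (measurableSet_balancedDomain n).inter ?_
  simp only [StrictMono, Set.ofPred_forall]
  exact MeasurableSet.iInter fun i => MeasurableSet.iInter fun j => MeasurableSet.iInter fun _ =>
    measurableSet_lt (by fun_prop) (by fun_prop)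

/-- Up to a null set, `balancedDomain n` is the disjoint union of the `n!` images of
`orderedDomain n` under permutations of the coordinates. -/
lemma lintegral_balancedDomain {n : ℕ} (φ : (Fin n → ℝ) → ℝ≥0∞)
    (hφ : ∀ (σ : Equiv.Perm (Fin n)) x, φ (x ∘ σ) = φ x) :
    ∫⁻ x in balancedDomain n, φ x = Fintype.card (Equiv.Perm (Fin n)) *
      ∫⁻ x in orderedDomain n, φ x := by
  have hbal : ∀ (σ : Equiv.Perm (Fin n)) x, x ∈ balancedDomain n → x ∘ σ ∈ balancedDomain n := by
    rintro σ x ⟨h1, h2⟩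
    refine ⟨fun i j => h1 _ _, ?_⟩
    simpa only [Function.comp_apply, Equiv.sum_comp σ x] using h2
  have hmeas := measurableSet_orderedDomain n
  let T : Equiv.Perm (Fin n) → (Fin n → ℝ) ≃ᵐ (Fin n → ℝ) := fun σ =>
    MeasurableEquiv.piCongrLeft (fun _ => ℝ) σ.symm
  have hT : ∀ σ x, T σ x = x ∘ σ := by
    intro σ x
    ext i
    simpa using MeasurableEquiv.piCongrLeft_apply_apply σ.symm (β := fun _ => ℝ) x (σ i)
  have hTp : ∀ σ, MeasurePreserving (T σ) volume volume := fun σ =>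
    volume_measurePreserving_piCongrLeft (fun _ => ℝ) σ.symm
  have hcover : (⋃ σ, T σ ⁻¹' orderedDomain n) =ᵐ[volume] balancedDomain n := by
    rw [eventuallyEq_set]
    filter_upwards [ae_distinct n] with x hx
    have hinj : Function.Injective x := fun i j hij => by
      by_contra hne
      exact hx i j hne 0 (by simp [hij])
    simp only [Set.mem_iUnion, Set.mem_preimage, hT]
    constructor
    · rintro ⟨σ, hσ, -⟩
      simpa [Function.comp_assoc] using hbal σ⁻¹ _ hσ
    · intro h
      exact ⟨Tuple.sort x, hbal _ _ h, (Tuple.monotone_sort x).strictMono_of_injective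
        (hinj.comp (Equiv.injective _))⟩
  rw [← setLIntegral_congr hcover, lintegral_iUnion]
  · simp only [tsum_fintype]
    have : ∀ σ, ∫⁻ x in T σ ⁻¹' orderedDomain n, φ x = ∫⁻ x in orderedDomain n, φ x := by
      intro σ
      rw [← (hTp σ).setLIntegral_comp_preimage_emb (T σ).measurableEmbedding φ (orderedDomain n)]
      simp only [hT, hφ]
    simp [this]
  · exact fun σ => (T σ).measurable hmeas
  · intro σ τ hst
    refine Set.disjoint_left.2 fun x hx hy => hst ?_
    simp only [Set.mem_preimage, hT] at hx hy
    have h := Tuple.unique_monotone hx.2.monotone hy.2.monotone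
    have hi : Function.Injective x := by
      have := hx.2.injective.comp (Equiv.injective σ⁻¹)
      simpa [Function.comp_assoc] using this
    ext i
    exact congrArg _ (hi (congrFun h i))

/-- The integral over the cube of a symmetric function with period `2π` in each variable is `n!`
times its integral over the convex set `orderedDomain n`. -/
theorem lintegral_cube {n : ℕ} (hn : 0 < n) (φ : (Fin n → ℝ) → ℝ≥0∞)
    (hφ : ∀ (σ : Equiv.Perm (Fin n)) x, φ (x ∘ σ) = φ x)
    (hper : ∀ (g : periodLattice n) x, φ (g +ᵥ x) = φ x) :
    ∫⁻ x in cbeCube n, φ x = Fintype.card (Equiv.Perm (Fin n)) *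
      ∫⁻ x in orderedDomain n, φ x := by
  rw [← lintegral_balancedDomain φ hφ, ← setLIntegral_congr (halfCube_ae_eq n)]
  exact (isAddFundamentalDomain_halfCube n).setLIntegral_eq
    (isAddFundamentalDomain_balancedDomain hn) φ hper

/-- Cube integrals of functions with period `2π` in each variable are translation invariant. -/
theorem integral_cube_add {n : ℕ} (φ : (Fin n → ℝ) → ℝ)
    (hper : ∀ (g : periodLattice n) x, φ (g +ᵥ x) = φ x) (v : Fin n → ℝ) :
    ∫ x in cbeCube n, φ (v + x) = ∫ x in cbeCube n, φ x := by
  rw [← setIntegral_congr_set (halfCube_ae_eq n), ← setIntegral_congr_set (halfCube_ae_eq n)]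
  have h := (isAddFundamentalDomain_halfCube n)
  have h2 := h.vadd_of_comm v
  rw [h.setIntegral_eq h2 hper]
  exact ((measurePreserving_vadd v volume).setIntegral_image_emb
    (measurableEmbedding_const_vadd v) φ (halfCube n)).symm

/-! ### Log-concavity of the weight -/

@[to_additive]
lemma prod_pairs_sq {n : ℕ} {M : Type*} [CommMonoid M] (K : Fin n → Fin n → M)
    (hsymm : ∀ i j, K i j = K j i) (hdiag : ∀ i, K i i = 1) :
    ∏ i, ∏ j, K i j = (∏ p : Fin n × Fin n with p.1 < p.2, K p.1 p.2) ^ 2 := by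
  have hsw : ∏ p : Fin n × Fin n with p.2 < p.1, K p.1 p.2
      = ∏ p : Fin n × Fin n with p.1 < p.2, K p.1 p.2 := by
    refine prod_equiv (Equiv.prodComm _ _) (by simp) fun p _ => ?_
    simpa using hsymm _ _
  have hz : ∏ p : Fin n × Fin n with ¬ p.1 < p.2, K p.1 p.2
      = ∏ p : Fin n × Fin n with p.2 < p.1, K p.1 p.2 := by
    refine (prod_subset (fun p => by simpa using le_of_lt) fun p hp hp' => ?_).symm
    have : p.1 = p.2 := le_antisymm (by simpa using hp') (by simpa using hp)
    rw [this, hdiag]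
  rw [← Fintype.prod_prod_type', ← prod_filter_mul_prod_filter_not univ (fun p => p.1 < p.2), hz,
    hsw, sq]

lemma norm_exp_sub_exp (a b : ℝ) :
    ‖Complex.exp (Complex.I * (a : ℂ)) - Complex.exp (Complex.I * (b : ℂ))‖
      = 2 * |Real.sin ((b - a) / 2)| := by
  have h : Complex.exp (Complex.I * (b : ℂ)) - Complex.exp (Complex.I * (a : ℂ))
      = Complex.exp (Complex.I * (a : ℂ)) * (Complex.exp (Complex.I * ((b - a : ℝ) : ℂ)) - 1) := by
    rw [mul_sub, ← Complex.exp_add]; push_cast; ring_nf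
  rw [norm_sub_rev, h, norm_mul, Complex.norm_exp_I_mul_ofReal_sub_one, mul_comm Complex.I,
    Complex.norm_exp_ofReal_mul_I, one_mul, norm_mul]
  simp

lemma cbeWeight_nonneg (β : ℝ) (n : ℕ) (θ : Fin n → ℝ) : 0 ≤ cbeWeight β n θ :=
  prod_nonneg fun _ _ => Real.rpow_nonneg (norm_nonneg _) _

lemma continuous_cbeWeight {β : ℝ} (hβ : 0 < β) (n : ℕ) : Continuous (cbeWeight β n) := by
  unfold cbeWeight
  refine continuous_finsetProd _ fun p _ => Continuous.rpow_const (by fun_prop) fun x => ?_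
  exact Or.inr hβ.le

/-- The square of the weight is a product over all ordered pairs, in which the symmetry is visible. -/
lemma cbeWeight_comp_perm (β : ℝ) {n : ℕ} (σ : Equiv.Perm (Fin n)) (θ : Fin n → ℝ) :
    cbeWeight β n (θ ∘ σ) = cbeWeight β n θ := by
  let K : (Fin n → ℝ) → Fin n → Fin n → ℝ := fun x i j => if i = j then 1 else
    ‖Complex.exp (Complex.I * (x i : ℂ)) - Complex.exp (Complex.I * (x j : ℂ))‖ ^ β
  have hw : ∀ x, cbeWeight β n x ^ 2 = ∏ i, ∏ j, K x i j := by
    intro x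
    rw [prod_pairs_sq (K x) (fun i j => by simp only [K, eq_comm (a := i), norm_sub_rev])
      (fun i => by simp [K])]
    congr 1
    refine prod_congr rfl fun p hp => ?_
    simp only [mem_filter, mem_univ, true_and] at hp
    simp only [K, hp.ne, if_false]
  have hK : ∀ i j, K (θ ∘ σ) i j = K θ (σ i) (σ j) := by
    intro i j
    simp only [K, Function.comp_apply, EmbeddingLike.apply_eq_iff_eq]
  rw [← sq_eq_sq₀ (cbeWeight_nonneg _ _ _) (cbeWeight_nonneg _ _ _), hw, hw]
  simp only [hK]
  rw [Equiv.prod_comp σ fun i => ∏ j, K θ i (σ j)]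
  exact prod_congr rfl fun i _ => Equiv.prod_comp σ fun j => K θ i j

lemma cbeWeight_vadd (β : ℝ) {n : ℕ} (g : periodLattice n) (θ : Fin n → ℝ) :
    cbeWeight β n (g +ᵥ θ) = cbeWeight β n θ := by
  obtain ⟨_, k, rfl⟩ := g
  have h : ∀ i, Complex.exp (Complex.I * ((((⟨latticeHom n k, k, rfl⟩ : periodLattice n) +ᵥ θ) i
      : ℝ) : ℂ)) = Complex.exp (Complex.I * (θ i : ℂ)) := by
    intro i
    rw [vadd_lattice_apply]
    push_cast
    rw [mul_add, Complex.exp_add,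
      show Complex.I * ((k i : ℂ) * (2 * (Real.pi : ℂ))) = k i * (2 * Real.pi * Complex.I) by ring,
      Complex.exp_int_mul_two_pi_mul_I, mul_one]
  simp only [cbeWeight, h]

lemma cbeWeight_add_const (β : ℝ) {n : ℕ} (s : ℝ) (θ : Fin n → ℝ) :
    cbeWeight β n ((fun _ => s) + θ) = cbeWeight β n θ := by
  simp only [cbeWeight, norm_exp_sub_exp, Pi.add_apply, add_sub_add_left_eq_sub]

/-- Quantitative log-concavity of `sin` on `(0, π)`. With `m = (a + b) / 2` and `d = (a - b) / 2`,
the left side is `sin² m - sin² d ≤ sin² m (1 - sin² d)`, and `|sin d| ≥ 2 |d| / π`. -/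
lemma sin_mul_sin_le {a b : ℝ} (ha0 : 0 < a) (ha : a < Real.pi) (hb0 : 0 < b) (hb : b < Real.pi) :
    Real.sin a * Real.sin b ≤
      Real.sin ((a + b) / 2) ^ 2 * Real.exp (-((a - b) ^ 2 / Real.pi ^ 2)) := by
  have hpi := Real.pi_pos
  set m := (a + b) / 2 with hm
  set d := (a - b) / 2 with hd
  have e1 : Real.sin a * Real.sin b = Real.sin m ^ 2 - Real.sin d ^ 2 := by
    rw [show a = m + d by rw [hm, hd]; ring, show b = m - d by rw [hm, hd]; ring, Real.sin_add,
      Real.sin_sub]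
    nlinarith [Real.sin_sq_add_cos_sq m, Real.sin_sq_add_cos_sq d]
  have e2 : Real.sin m ^ 2 - Real.sin d ^ 2 ≤ Real.sin m ^ 2 * (1 - Real.sin d ^ 2) := by
    nlinarith [Real.sin_sq_le_one m, sq_nonneg (Real.sin d)]
  have e3 : (a - b) ^ 2 / Real.pi ^ 2 ≤ Real.sin d ^ 2 := by
    have h := Real.mul_le_sin (abs_nonneg d) (by rw [abs_le]; constructor <;> linarith)
    have h2 : Real.sin |d| ^ 2 = Real.sin d ^ 2 := by
      rcases abs_cases d with h | h <;> simp [h.1]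
    rw [← h2]
    calc (a - b) ^ 2 / Real.pi ^ 2 = (2 / Real.pi * |d|) ^ 2 := by
          rw [mul_pow, sq_abs, hd]; field_simp
      _ ≤ _ := by gcongr
  have e4 : 1 - Real.sin d ^ 2 ≤ Real.exp (-((a - b) ^ 2 / Real.pi ^ 2)) := by
    refine le_trans ?_ (Real.exp_le_exp.2 (neg_le_neg e3))
    linarith [Real.add_one_le_exp (-Real.sin d ^ 2), neg_pow_two (Real.sin d)]
  rw [e1]
  exact e2.trans (by gcongr)

/-- The weight is uniformly strongly log-concave on `orderedDomain n`, in all directions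
transversal to the rotations. -/
lemma cbeWeight_mul_le {β : ℝ} (hβ : 0 < β) {n : ℕ} {x y : Fin n → ℝ}
    (hx : x ∈ orderedDomain n) (hy : y ∈ orderedDomain n) :
    cbeWeight β n x * cbeWeight β n y ≤ cbeWeight β n ((2⁻¹ : ℝ) • (x + y)) ^ 2 *
      Real.exp (-(β / (4 * Real.pi ^ 2) * ∑ p : Fin n × Fin n with p.1 < p.2,
        ((x p.1 - y p.1) - (x p.2 - y p.2)) ^ 2)) := by
  rw [mul_sum, ← sum_neg_distrib, Real.exp_sum]
  simp only [cbeWeight]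
  rw [← prod_mul_distrib, ← prod_pow, ← prod_mul_distrib]
  refine prod_le_prod (fun p _ => by positivity) fun p hp => ?_
  simp only [mem_filter, mem_univ, true_and] at hp
  simp only [norm_exp_sub_exp]
  have hx1 := hx.2 hp
  have hy1 := hy.2 hp
  have hx2 := hx.1.1 p.2 p.1
  have hy2 := hy.1.1 p.2 p.1
  set a := (x p.2 - x p.1) / 2 with ha
  set b := (y p.2 - y p.1) / 2 with hb
  have hmid : (((2⁻¹ : ℝ) • (x + y)) p.2 - ((2⁻¹ : ℝ) • (x + y)) p.1) / 2 = (a + b) / 2 := by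
    simp only [Pi.smul_apply, Pi.add_apply, smul_eq_mul, ha, hb]; ring
  rw [hmid]
  have key := sin_mul_sin_le (a := a) (b := b) (by linarith) (by linarith) (by linarith)
    (by linarith)
  have hsa : 0 ≤ Real.sin a := Real.sin_nonneg_of_nonneg_of_le_pi (by linarith) (by linarith)
  have hsb : 0 ≤ Real.sin b := Real.sin_nonneg_of_nonneg_of_le_pi (by linarith) (by linarith)
  rw [abs_of_nonneg hsa, abs_of_nonneg hsb, ← Real.mul_rpow (by positivity) (by positivity)]
  calc (2 * Real.sin a * (2 * Real.sin b)) ^ β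
      ≤ ((2 * |Real.sin ((a + b) / 2)|) ^ 2 * Real.exp (-((a - b) ^ 2 / Real.pi ^ 2))) ^ β := by
        refine Real.rpow_le_rpow (by positivity) ?_ hβ.le
        rw [mul_pow, sq_abs]
        linarith
    _ = _ := by
        have he : -((a - b) ^ 2 / Real.pi ^ 2) * β
            = -(β / (4 * Real.pi ^ 2) * ((x p.1 - y p.1) - (x p.2 - y p.2)) ^ 2) := by
          rw [ha, hb]
          field_simp
          ring
        rw [Real.mul_rpow (by positivity) (Real.exp_nonneg _), ← Real.exp_mul, he,
          sq (2 * |Real.sin ((a + b) / 2)|), Real.mul_rpow (by positivity) (by positivity),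
          ← sq]

lemma sum_pairs_sub_sq {n : ℕ} (v : Fin n → ℝ) :
    ∑ p : Fin n × Fin n with p.1 < p.2, (v p.1 - v p.2) ^ 2
      = n * ∑ i, v i ^ 2 - (∑ i, v i) ^ 2 := by
  have h := sum_pairs_sq (fun i j => (v i - v j) ^ 2) (fun i j => by ring) (fun i => by simp)
  have h2 : ∑ i, ∑ j, (v i - v j) ^ 2 = 2 * (n * ∑ i, v i ^ 2 - (∑ i, v i) ^ 2) := by
    simp only [sub_sq, sum_add_distrib, sum_sub_distrib, sum_const, card_univ, Fintype.card_fin,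
      ← mul_sum, ← sum_mul, nsmul_eq_mul]
    ring
  rw [h2] at h
  simp only [nsmul_eq_mul] at h
  push_cast at h
  linarith

/-- An `L`-Lipschitz linear statistic is controlled by the pair energy and the sum. -/
lemma sum_abs_le {n : ℕ} (hn : 0 < n) (v : Fin n → ℝ) {c L : ℝ} (hc : 0 < c) (hL : 0 ≤ L)
    (hv : |∑ i, v i| ≤ 2 * Real.pi) :
    L * ∑ i, |v i| ≤ c * ∑ p : Fin n × Fin n with p.1 < p.2, (v p.1 - v p.2) ^ 2
      + (2 * Real.pi * L + L ^ 2 / (4 * c)) := by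
  have hn' : (0 : ℝ) < n := by exact_mod_cast hn
  rw [sum_pairs_sub_sq]
  set s := ∑ i, v i with hs
  have h1 : ∀ i, L * |v i| ≤ c * n * (v i - s / n) ^ 2 + L ^ 2 / (4 * c * n) + L * |s| / n := by
    intro i
    have t1 : |v i| ≤ |v i - s / n| + |s| / n := by
      have := abs_add_le (v i - s / n) (s / n)
      rwa [sub_add_cancel, abs_div, Nat.abs_cast] at this
    -- Young inequality, with the weights tuned so that the second term sums to `L² / (4c)`.
    have t2 : L * |v i - s / n| ≤ c * n * (v i - s / n) ^ 2 + L ^ 2 / (4 * c * n) := by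
      rw [← sq_abs (v i - s / n)]
      set u := |v i - s / n|
      have : c * n * u ^ 2 + L ^ 2 / (4 * c * n) - L * u
          = (2 * c * n * u - L) ^ 2 / (4 * c * n) := by field_simp; ring
      have : 0 ≤ (2 * c * n * u - L) ^ 2 / (4 * c * n) := by positivity
      linarith
    calc L * |v i| ≤ L * (|v i - s / n| + |s| / n) := by gcongr
      _ = L * |v i - s / n| + L * |s| / n := by ring
      _ ≤ _ := by linarith
  have h2 : ∑ i, (c * n * (v i - s / n) ^ 2 + L ^ 2 / (4 * c * n) + L * |s| / n)
      = c * (n * ∑ i, v i ^ 2 - s ^ 2) + L ^ 2 / (4 * c) + L * |s| := by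
    simp only [sub_sq, sum_add_distrib, sum_sub_distrib, sum_const, card_univ, Fintype.card_fin,
      ← mul_sum, ← sum_mul, nsmul_eq_mul, ← hs]
    field_simp
    ring
  rw [mul_sum]
  have h3 := sum_le_sum fun i (_ : i ∈ univ) => h1 i
  rw [h2] at h3
  have h4 : L * |s| ≤ L * (2 * Real.pi) := by gcongr
  linarith

/-! ### Exponential moments -/

lemma midpoint_mem_orderedDomain {n : ℕ} {x y : Fin n → ℝ}
    (hx : x ∈ orderedDomain n) (hy : y ∈ orderedDomain n) :
    (2⁻¹ : ℝ) • (x + y) ∈ orderedDomain n := by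
  obtain ⟨⟨hx1, hx2, hx3⟩, hx4⟩ := hx
  obtain ⟨⟨hy1, hy2, hy3⟩, hy4⟩ := hy
  refine ⟨⟨fun i j => ?_, ?_, ?_⟩, fun i j hij => ?_⟩
  · have := hx1 i j
    have := hy1 i j
    simp only [Pi.smul_apply, Pi.add_apply, smul_eq_mul]
    linarith
  · simp only [Pi.smul_apply, Pi.add_apply, smul_eq_mul, ← mul_sum, sum_add_distrib]
    linarith
  · simp only [Pi.smul_apply, Pi.add_apply, smul_eq_mul, ← mul_sum, sum_add_distrib]
    linarith
  · have := hx4 hij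
    have := hy4 hij
    simp only [Pi.smul_apply, Pi.add_apply, smul_eq_mul]
    linarith

/-- The hypothesis of the Prékopa–Leindler inequality for the densities `e^{±∑ G(θ_μ)}` times the
weight, up to the constant `K = 2πL + π²L²/β`, which does not depend on `n`. -/
lemma density_mul_le {β : ℝ} (hβ : 0 < β) {n : ℕ} (hn : 0 < n) {G : ℝ → ℝ} {L : ℝ} (hL : 0 ≤ L)
    (hG : ∀ a b, |G a - G b| ≤ L * |a - b|) {x y : Fin n → ℝ}
    (hx : x ∈ orderedDomain n) (hy : y ∈ orderedDomain n) :
    (Real.exp (∑ i, G (x i)) * cbeWeight β n x) * (Real.exp (-∑ i, G (y i)) * cbeWeight β n y) ≤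
      Real.exp (2 * Real.pi * L + L ^ 2 / (4 * (β / (4 * Real.pi ^ 2)))) *
        cbeWeight β n ((2⁻¹ : ℝ) • (x + y)) ^ 2 := by
  have hpi := Real.pi_pos
  have hc : 0 < β / (4 * Real.pi ^ 2) := by positivity
  have hsum : |∑ i, (x i - y i)| ≤ 2 * Real.pi := by
    rw [sum_sub_distrib, abs_le]
    constructor <;> linarith [hx.1.2.1, hx.1.2.2, hy.1.2.1, hy.1.2.2]
  have h1 := sum_abs_le hn (fun i => x i - y i) hc hL hsum
  have h2 := cbeWeight_mul_le hβ hx hy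
  set c := β / (4 * Real.pi ^ 2)
  set P := ∑ p : Fin n × Fin n with p.1 < p.2, ((x p.1 - y p.1) - (x p.2 - y p.2)) ^ 2
  have h3 : ∑ i, G (x i) - ∑ i, G (y i) ≤ L * ∑ i, |x i - y i| := by
    rw [← sum_sub_distrib, mul_sum]
    exact sum_le_sum fun i _ => (le_abs_self _).trans (hG _ _)
  calc _ = Real.exp (∑ i, G (x i) - ∑ i, G (y i)) * (cbeWeight β n x * cbeWeight β n y) := by
        rw [sub_eq_add_neg, Real.exp_add]; ring
    _ ≤ Real.exp (c * P + (2 * Real.pi * L + L ^ 2 / (4 * c))) *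
        (cbeWeight β n ((2⁻¹ : ℝ) • (x + y)) ^ 2 * Real.exp (-(c * P))) := by
        gcongr
        · exact mul_nonneg (cbeWeight_nonneg _ _ _) (cbeWeight_nonneg _ _ _)
        · exact h3.trans h1
    _ = _ := by
        rw [Real.exp_add (c * P), Real.exp_neg]
        field_simp

lemma sum_periodic_vadd {n : ℕ} {G : ℝ → ℝ} (hper : Function.Periodic G (2 * Real.pi))
    (g : periodLattice n) (θ : Fin n → ℝ) : ∑ i, G ((g +ᵥ θ) i) = ∑ i, G (θ i) := by
  obtain ⟨_, k, rfl⟩ := g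
  refine sum_congr rfl fun i _ => ?_
  rw [vadd_lattice_apply]
  exact hper.int_mul (k i) (θ i)

/-- The Prékopa–Leindler inequality on `orderedDomain n`, transferred back to the cube. -/
lemma lintegral_mul_le {β : ℝ} (hβ : 0 < β) {n : ℕ} (hn : 0 < n) {G : ℝ → ℝ}
    (hper : Function.Periodic G (2 * Real.pi)) (hcont : Continuous G) {L : ℝ} (hL : 0 ≤ L)
    (hG : ∀ a b, |G a - G b| ≤ L * |a - b|) :
    (∫⁻ x in cbeCube n, ENNReal.ofReal (Real.exp (∑ i, G (x i)) * cbeWeight β n x)) *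
      (∫⁻ x in cbeCube n, ENNReal.ofReal (Real.exp (-∑ i, G (x i)) * cbeWeight β n x)) ≤
      ENNReal.ofReal (Real.exp (2 * Real.pi * L + L ^ 2 / (4 * (β / (4 * Real.pi ^ 2))))) *
        (∫⁻ x in cbeCube n, ENNReal.ofReal (cbeWeight β n x)) ^ 2 := by
  have hperm : ∀ (σ : Equiv.Perm (Fin n)) (x : Fin n → ℝ),
      ∑ i, G ((x ∘ σ) i) = ∑ i, G (x i) := fun σ x => Equiv.sum_comp σ fun i => G (x i)
  rw [lintegral_cube hn _ (fun σ x => by rw [hperm, cbeWeight_comp_perm])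
      (fun g x => by rw [sum_periodic_vadd hper, cbeWeight_vadd]),
    lintegral_cube hn _ (fun σ x => by rw [hperm, cbeWeight_comp_perm])
      (fun g x => by rw [sum_periodic_vadd hper, cbeWeight_vadd]),
    lintegral_cube hn _ (fun σ x => by rw [cbeWeight_comp_perm])
      (fun g x => by rw [cbeWeight_vadd])]
  set K := 2 * Real.pi * L + L ^ 2 / (4 * (β / (4 * Real.pi ^ 2))) with hK
  have hD := measurableSet_orderedDomain n
  have hw := continuous_cbeWeight hβ n
  have key := prekopa_pi n
    (f := (orderedDomain n).indicator fun x =>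
      ENNReal.ofReal (Real.exp (∑ i, G (x i)) * cbeWeight β n x))
    (g := (orderedDomain n).indicator fun x =>
      ENNReal.ofReal (Real.exp (-∑ i, G (x i)) * cbeWeight β n x))
    (h := (orderedDomain n).indicator fun x =>
      ENNReal.ofReal (Real.exp (K / 2) * cbeWeight β n x))
    ((Continuous.measurable (by fun_prop)).ennreal_ofReal.indicator hD)
    ((Continuous.measurable (by fun_prop)).ennreal_ofReal.indicator hD)
    ((Continuous.measurable (by fun_prop)).ennreal_ofReal.indicator hD)
    (by
      intro x y
      by_cases hx : x ∈ orderedDomain n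
      · by_cases hy : y ∈ orderedDomain n
        · rw [Set.indicator_of_mem hx, Set.indicator_of_mem hy,
            Set.indicator_of_mem (midpoint_mem_orderedDomain hx hy),
            ← ENNReal.ofReal_mul (mul_nonneg (Real.exp_nonneg _) (cbeWeight_nonneg _ _ _)),
            ← ENNReal.ofReal_pow (mul_nonneg (Real.exp_nonneg _) (cbeWeight_nonneg _ _ _))]
          refine ENNReal.ofReal_le_ofReal ((density_mul_le hβ hn hL hG hx hy).trans_eq ?_)
          rw [mul_pow, ← Real.exp_nat_mul, ← hK]
          congr 2
          push_cast
          ring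
        · simp [Set.indicator_of_notMem hy]
      · simp [Set.indicator_of_notMem hx])
  rw [lintegral_indicator hD, lintegral_indicator hD, lintegral_indicator hD] at key
  simp only [ENNReal.ofReal_mul (Real.exp_nonneg (K / 2))] at key
  rw [lintegral_const_mul _ hw.measurable.ennreal_ofReal, mul_pow,
    ← ENNReal.ofReal_pow (Real.exp_nonneg _), ← Real.exp_nat_mul,
    show ((2 : ℕ) : ℝ) * (K / 2) = K by push_cast; ring] at key
  set N : ℝ≥0∞ := (Fintype.card (Equiv.Perm (Fin n)) : ℝ≥0∞)
  calc _ = N ^ 2 * _ := by rw [mul_mul_mul_comm, ← sq]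
    _ ≤ N ^ 2 * _ := mul_le_mul' le_rfl key
    _ = _ := by ring

lemma isCompact_cbeCube (n : ℕ) : IsCompact (cbeCube n) :=
  isCompact_univ_pi fun _ => isCompact_Icc

/-- By rotation invariance every point of the ensemble is uniformly distributed, so a linear
statistic of a mean-zero function is centered. -/
lemma integral_linear_statistic {β : ℝ} (hβ : 0 < β) (n : ℕ) {G : ℝ → ℝ}
    (hper : Function.Periodic G (2 * Real.pi)) (hcont : Continuous G)
    (hmean : ∫ θ in (0:ℝ)..(2 * Real.pi), G θ = 0) :
    ∫ x in cbeCube n, (∑ i, G (x i)) * cbeWeight β n x = 0 := by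
  have hpi := Real.two_pi_pos
  have hw := continuous_cbeWeight hβ n
  set M := ∫ x in cbeCube n, (∑ i, G (x i)) * cbeWeight β n x with hM
  have hrot : ∀ s : ℝ, ∫ x in cbeCube n, (∑ i, G (s + x i)) * cbeWeight β n x = M := by
    intro s
    rw [hM, ← integral_cube_add (fun x => (∑ i, G (x i)) * cbeWeight β n x)
      (fun g x => by rw [sum_periodic_vadd hper, cbeWeight_vadd]) (fun _ => s)]
    simp only [cbeWeight_add_const, Pi.add_apply]
  have hswap : ∫ s in Set.Icc 0 (2 * Real.pi), ∫ x in cbeCube n,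
      (∑ i, G (s + x i)) * cbeWeight β n x = ∫ x in cbeCube n, ∫ s in Set.Icc 0 (2 * Real.pi),
        (∑ i, G (s + x i)) * cbeWeight β n x := by
    refine integral_integral_swap ?_
    rw [Measure.prod_restrict]
    refine ContinuousOn.integrableOn_compact (isCompact_Icc.prod (isCompact_cbeCube n)) ?_
    refine Continuous.continuousOn ?_
    unfold Function.uncurry
    fun_prop
  have hzero : ∀ x : Fin n → ℝ, ∫ s in Set.Icc 0 (2 * Real.pi),
      (∑ i, G (s + x i)) * cbeWeight β n x = 0 := by
    intro x
    rw [integral_mul_const, integral_finsetSum]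
    · refine mul_eq_zero_of_left (sum_eq_zero fun i _ => ?_) _
      rw [integral_Icc_eq_integral_Ioc, ← intervalIntegral.integral_of_le hpi.le,
        intervalIntegral.integral_comp_add_right (fun t => G t) (x i)]
      refine Eq.trans ?_ hmean
      have := hper.intervalIntegral_add_eq (x i) 0
      simpa [add_comm] using this
    · exact fun i _ => Continuous.integrableOn_Icc (by fun_prop)
  simp only [hrot, hzero] at hswap
  simpa [Real.pi_pos.ne', hpi.le] using hswap

/-- Exponential moment bound for Lipschitz mean-zero functions. -/
theorem cbeExp_le {β : ℝ} (hβ : 0 < β) {n : ℕ} (hn : 0 < n) {G : ℝ → ℝ}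
    (hper : Function.Periodic G (2 * Real.pi)) (hcont : Continuous G)
    (hmean : ∫ θ in (0:ℝ)..(2 * Real.pi), G θ = 0) {L : ℝ} (hL : 0 ≤ L)
    (hG : ∀ a b, |G a - G b| ≤ L * |a - b|) :
    cbeExp β n (fun θ => Real.exp (∑ μ, G (θ μ))) ≤
      Real.exp (2 * Real.pi * L + L ^ 2 / (4 * (β / (4 * Real.pi ^ 2)))) := by
  have hw := continuous_cbeWeight hβ n
  have hw0 := cbeWeight_nonneg β n
  have hint : ∀ u : (Fin n → ℝ) → ℝ, Continuous u → IntegrableOn u (cbeCube n) := fun u hu =>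
    hu.continuousOn.integrableOn_compact (isCompact_cbeCube n)
  have hof : ∀ u : (Fin n → ℝ) → ℝ, Continuous u → (∀ x, 0 ≤ u x) →
      ∫⁻ x in cbeCube n, ENNReal.ofReal (u x) = ENNReal.ofReal (∫ x in cbeCube n, u x) :=
    fun u hu hu0 => (ofReal_integral_eq_lintegral_ofReal (hint u hu)
      (Eventually.of_forall hu0)).symm
  have hi0 : ∀ u : (Fin n → ℝ) → ℝ, (∀ x, 0 ≤ u x) → 0 ≤ ∫ x in cbeCube n, u x :=
    fun u hu => integral_nonneg hu
  have hp1 : ∀ x, 0 ≤ Real.exp (∑ i, G (x i)) * cbeWeight β n x := fun x =>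
    mul_nonneg (Real.exp_nonneg _) (hw0 x)
  have hp2 : ∀ x, 0 ≤ Real.exp (-∑ i, G (x i)) * cbeWeight β n x := fun x =>
    mul_nonneg (Real.exp_nonneg _) (hw0 x)
  have key := lintegral_mul_le hβ hn hper hcont hL hG
  rw [hof _ (by fun_prop) hp1, hof _ (by fun_prop) hp2, hof _ hw hw0,
    ← ENNReal.ofReal_mul (hi0 _ hp1), ← ENNReal.ofReal_pow (hi0 _ hw0),
    ← ENNReal.ofReal_mul (Real.exp_nonneg _), ENNReal.ofReal_le_ofReal_iff
      (mul_nonneg (Real.exp_nonneg _) (sq_nonneg _))] at key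
  -- `1 + t ≤ e^t` and centering bound the negative exponential moment from below.
  have hB : ∫ x in cbeCube n, cbeWeight β n x ≤
      ∫ x in cbeCube n, Real.exp (-∑ i, G (x i)) * cbeWeight β n x := by
    have h1 : ∫ x in cbeCube n, (cbeWeight β n x - (∑ i, G (x i)) * cbeWeight β n x)
        = ∫ x in cbeCube n, cbeWeight β n x := by
      rw [integral_sub (hint _ hw) (hint _ (by fun_prop)),
        integral_linear_statistic hβ n hper hcont hmean, sub_zero]
    rw [← h1]
    refine integral_mono (hint _ (by fun_prop)) (hint _ (by fun_prop)) fun x => ?_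
    have := mul_le_mul_of_nonneg_right (Real.add_one_le_exp (-∑ i, G (x i))) (hw0 x)
    dsimp only
    linarith
  rw [cbeExp]
  have hA := hi0 _ hp1
  have hZ := hi0 _ hw0
  -- If the normalization vanished, the quotient would be `0` by convention.
  rcases hZ.eq_or_lt with hZ0 | hZ0
  · rw [← hZ0, div_zero]
    exact Real.exp_nonneg _
  · rw [div_le_iff₀ hZ0]
    refine le_of_mul_le_mul_right ?_ hZ0
    calc _ ≤ _ := mul_le_mul_of_nonneg_left hB hA
      _ ≤ _ := key
      _ = _ := by ring

lemma exists_lipschitz {G : ℝ → ℝ} (hper : Function.Periodic G (2 * Real.pi))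
    (hreg : ContDiff ℝ 1 G) : ∃ L : ℝ, 0 ≤ L ∧ ∀ a b, |G a - G b| ≤ L * |a - b| := by
  have hd : Continuous (deriv G) := hreg.continuous_deriv le_rfl
  have hdper : Function.Periodic (deriv G) (2 * Real.pi) := fun x => by
    rw [← deriv_comp_add_const]
    congr 1
    ext y
    exact hper y
  obtain ⟨L, hL⟩ := (hdper.isBounded_of_continuous Real.two_pi_pos.ne' hd).exists_norm_le
  have hL' : ∀ x, ‖deriv G x‖ ≤ L := fun x => hL _ ⟨x, rfl⟩
  refine ⟨L, (norm_nonneg _).trans (hL' 0), fun a b => ?_⟩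
  exact Convex.norm_image_sub_le_of_norm_deriv_le
    (fun x _ => (hreg.differentiable one_ne_zero).differentiableAt) (fun x _ => hL' x)
    convex_univ (Set.mem_univ b) (Set.mem_univ a)

/-- Uniform exponential moment bound for the circular β-ensemble: for a 2π-periodic `C^{4+α}`
function `G` with zero mean, there is a constant `C` with
`E_n^β[exp(∑ G(θ_μ))] ≤ C` for all `n ≥ 1`. -/
theorem uniform_exponential_moment_bound_circle (β α : ℝ) (hβ : 0 < β)
    (hα : 0 < α) (hα1 : α < 1)
    (G : ℝ → ℝ) (hper : Function.Periodic G (2 * Real.pi))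
    (hreg : ContDiff ℝ 4 G)
    (hHolder : ∃ C : NNReal, HolderWith C α.toNNReal (iteratedDeriv 4 G))
    (hmean : ∫ θ in (0:ℝ)..(2 * Real.pi), G θ = 0) :
    ∃ C : ℝ, ∀ n : ℕ, 1 ≤ n →
      cbeExp β n (fun θ => Real.exp (∑ μ, G (θ μ))) ≤ C := by
  obtain ⟨L, hL, hG⟩ := exists_lipschitz hper (hreg.of_le (by norm_num))
  exact ⟨_, fun n hn => cbeExp_le hβ hn hper hreg.continuous hmean hL hG⟩
end
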